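/- arXiv:1609.07017 — 2 statements merged into one kernel-verified Lean document; each statement's English description precedes it below -/
import Mathlib

section
/- Let R = ℂ[[x,y,z,u,v]]/(x³ + y³ + z³, z² − ux − vy), a quotient of the formal power series ring in five variables over ℂ, and let I = (x,y,z)R. Then: (1) for every prime ideal P of R of height 1, the ideal I + P is not primary to the maximal ideal of R (i.e., the radical of I + P is not the maximal ideal); and (2) H²_I(R) ≠ 0. In particular, this gives a negative answer to Lyubeznik's question asking whether, for a prime ideal I of a complete local domain with separably closed residue field, H^j_I(M) = 0 for all j ≥ dim(R) − 1 and all R-modules M if and only if P + I is not primary to the maximal ideal for any prime ideal P of height 1. -/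
open MvPowerSeries

/-!
Height-one primes: suppose `√(I + P) = 𝔪` with `P` of height one. As `R` is Cohen-Macaulay of
dimension three, no `P + (h)` is `𝔪`-primary, so `P ∩ k⟦x, y⟧ = 0` and `D = R / P` is finite over
`B = k⟦x, y⟧`. Since `z³ = -(x³ + y³)` is squarefree in `B`, the trace of `t / z²` to `Frac B` lies
in `B` for every `t ∈ D`. But `z² = ux + vy ∈ (x, y)D`, so `t = z²` would put the degree of
`Frac D` over `Frac B` into `(x, y)`, which is impossible in characteristic zero.

Local cohomology: `√I = √(x, y)`, and `H²_I(R) = 0` would give `(xy)ⁿ ∈ (xⁿ⁺¹, yⁿ⁺¹)` for some `n`.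
The relations define a projective surface which, away from a line, is an affine line bundle over
the Fermat cubic `x³ + y³ + z³ = 0`. Evaluating homogeneous components there exhibits `1 / (xy)` as
a sum of sections over two charts, and comparing leading coefficients in the fibre parameter makes
the class of `1 / (xy)` in `H¹` of the cubic with coefficients in `𝒪(-2)` trivial, which it is not.
-/

namespace Lyubeznik

section KoszulDepth

open RingTheory.Sequence

variable {R ι M : Type*} [CommRing R] [AddCommGroup M] [Module R M]

/-- Vanishing of the Koszul cohomology `H⁰(s; M)`, elementwise. -/
def KoszulExact₀ (s : ι → R) (M : Type*) [AddCommGroup M] [Module R M] : Prop :=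
  ∀ m : M, (∀ i, s i • m = 0) → m = 0

/-- Vanishing of the Koszul cohomology `H¹(s; M)`, elementwise. -/
def KoszulExact₁ (s : ι → R) (M : Type*) [AddCommGroup M] [Module R M] : Prop :=
  ∀ c : ι → M, (∀ i j, s j • c i = s i • c j) → ∃ m, ∀ i, c i = s i • m

/-- Vanishing of the Koszul cohomology `H²(s; M)`, elementwise. A cocycle `t` is not required to be
alternating: as soon as some `s i` is `M`-regular, the cocycle condition with repeated indices
forces `t` to be so. -/
def KoszulExact₂ (s : ι → R) (M : Type*) [AddCommGroup M] [Module R M] : Prop :=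
  ∀ t : ι → ι → M, (∀ i j k, s k • t i j - s j • t i k + s i • t j k = 0) →
    ∃ d : ι → M, ∀ i j, t i j = s j • d i - s i • d j

lemma quotSMulTop_mk_eq_mk {w : R} {a b : M} :
    (Submodule.Quotient.mk a : QuotSMulTop w M) = Submodule.Quotient.mk b ↔
      ∃ t, a - b = w • t := by
  rw [Submodule.Quotient.eq, Submodule.mem_smul_pointwise_iff_exists]
  exact ⟨fun ⟨t, _, ht⟩ ↦ ⟨t, ht.symm⟩, fun ⟨t, ht⟩ ↦ ⟨t, trivial, ht.symm⟩⟩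

variable {s : ι → R} {i : ι} {w : R}

lemma koszulExact₀_of_isSMulRegular (hi : IsSMulRegular M (s i)) : KoszulExact₀ s M :=
  fun m hm ↦ hi (by simp only [hm, smul_zero])

lemma koszulExact₁_of_isSMulRegular (hi : IsSMulRegular M (s i))
    (h₀ : KoszulExact₀ s (QuotSMulTop (s i) M)) : KoszulExact₁ s M := by
  intro c hc
  obtain ⟨m, hm⟩ : ∃ m, c i - 0 = s i • m := quotSMulTop_mk_eq_mk.1 <| h₀ _ fun j ↦
    quotSMulTop_mk_eq_mk.2 ⟨c j, by rw [sub_zero, hc]⟩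
  refine ⟨m, fun j ↦ hi ?_⟩
  simp only
  rw [← hc, smul_comm, ← hm, sub_zero]

lemma koszulExact₂_of_isSMulRegular (hi : IsSMulRegular M (s i))
    (h₁ : KoszulExact₁ s (QuotSMulTop (s i) M)) : KoszulExact₂ s M := by
  intro t ht
  obtain ⟨m, hm⟩ := h₁ (fun j ↦ Submodule.Quotient.mk (t i j)) fun j k ↦
    quotSMulTop_mk_eq_mk.2 ⟨-t j k, by linear_combination (norm := module) ht i j k⟩
  obtain ⟨m, rfl⟩ := Submodule.Quotient.mk_surjective _ m
  choose d hd using fun j ↦ quotSMulTop_mk_eq_mk.1 (hm j)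
  refine ⟨fun j ↦ -d j, fun j k ↦ hi ?_⟩
  simp only
  linear_combination (norm := module) ht i j k + s j • hd k - s k • hd j

lemma koszulExact_of_isWeaklyRegular {j l : ι} (h : IsWeaklyRegular M [s i, s j, s l]) :
    KoszulExact₀ s M ∧ KoszulExact₁ s M ∧ KoszulExact₂ s M := by
  simp only [isWeaklyRegular_cons_iff] at h
  obtain ⟨hi, hj, hl, -⟩ := h
  have h₀_i := koszulExact₀_of_isSMulRegular hj
  have h₁_i := koszulExact₁_of_isSMulRegular hj (koszulExact₀_of_isSMulRegular hl)
  exact ⟨koszulExact₀_of_isSMulRegular hi, koszulExact₁_of_isSMulRegular hi h₀_i,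
    koszulExact₂_of_isSMulRegular hi h₁_i⟩

lemma KoszulExact₁.koszulExact₀_quotSMulTop (h₁ : KoszulExact₁ s M) (h₀ : KoszulExact₀ s M)
    (hw : IsSMulRegular M w) : KoszulExact₀ s (QuotSMulTop w M) := by
  intro m hm
  obtain ⟨m, rfl⟩ := Submodule.Quotient.mk_surjective _ m
  choose t ht using fun i ↦ quotSMulTop_mk_eq_mk.1 (hm i)
  obtain ⟨m', hm'⟩ := h₁ t fun i j ↦ hw (by
    simp only
    linear_combination (norm := module) s i • ht j - s j • ht i)
  refine quotSMulTop_mk_eq_mk.2 ⟨m', sub_eq_zero.1 (h₀ _ fun i ↦ ?_)⟩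
  linear_combination (norm := module) ht i + w • hm' i

lemma KoszulExact₂.koszulExact₁_quotSMulTop (h₂ : KoszulExact₂ s M) (h₁ : KoszulExact₁ s M)
    (hw : IsSMulRegular M w) : KoszulExact₁ s (QuotSMulTop w M) := by
  intro c hc
  choose c' hc' using fun i ↦ Submodule.Quotient.mk_surjective _ (c i)
  obtain rfl : (fun i ↦ Submodule.Quotient.mk (c' i)) = c := funext hc'
  choose t ht using fun i j ↦ quotSMulTop_mk_eq_mk.1 (hc i j)
  obtain ⟨d, hd⟩ := h₂ t fun i j k ↦ hw (by
    simp only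
    linear_combination (norm := module) s j • ht i k - s k • ht i j - s i • ht j k)
  obtain ⟨m, hm⟩ := h₁ (fun i ↦ c' i - w • d i) fun i j ↦ by
    linear_combination (norm := module) ht i j + w • hd i j
  refine ⟨Submodule.Quotient.mk m, fun i ↦ quotSMulTop_mk_eq_mk.2 ⟨d i, ?_⟩⟩
  linear_combination (norm := module) hm i

/-- The elements of `M` killed by `P` form a submodule `T`, and the two vanishing conditions
give `T = h T`, so Nakayama's lemma applies. -/
lemma eq_zero_of_forall_mem_smul_eq_zero [IsNoetherianRing R] [Module.Finite R M]
    (h₀ : KoszulExact₀ s M) (h₁ : KoszulExact₁ s M) {P : Ideal R} {h : R}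
    (hh : h ∈ Ideal.jacobson ⊥) (hs : ∀ i, s i ∈ P ⊔ Ideal.span {h}) {e : M}
    (he : ∀ p ∈ P, p • e = 0) : e = 0 := by
  let T : Submodule R M := Submodule.torsionBySet R M P
  have mem_T {e : M} : e ∈ T ↔ ∀ p ∈ P, p • e = 0 := by simp [T, Submodule.mem_torsionBySet_iff]
  have hT : T ≤ Ideal.span {h} • T := by
    intro e he
    rw [mem_T] at he
    choose p hp q hq hpq using fun i ↦ Submodule.mem_sup.1 (hs i)
    choose a ha using fun i ↦ Ideal.mem_span_singleton'.1 (hq i)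
    have hse (i) : s i • e = h • a i • e := by
      rw [← hpq, ← ha, add_smul, he _ (hp i), zero_add, mul_comm, mul_smul]
    obtain ⟨m, hm⟩ := h₁ (fun i ↦ a i • e) fun i j ↦ by
      linear_combination (norm := module) a i • hse j - a j • hse i
    have hem : e = h • m := sub_eq_zero.1 <| h₀ _ fun i ↦ by
      linear_combination (norm := module) hse i + h • hm i
    have hmT : m ∈ T := mem_T.2 fun p hp ↦ h₀ _ fun i ↦ by
      rw [smul_comm, ← hm, smul_comm, he p hp, smul_zero]
    rw [hem]
    exact Submodule.smul_mem_smul (Ideal.mem_span_singleton_self h) hmT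
  have hT_bot : T = ⊥ := Submodule.eq_bot_of_le_smul_of_le_jacobson_bot (Ideal.span {h}) T
    (IsNoetherian.noetherian T) hT (by rwa [Ideal.span_singleton_le_iff_mem])
  exact (Submodule.mem_bot R).1 (hT_bot ▸ mem_T.2 he)

lemma exists_notMem_sup_span_singleton_of_height_eq_one [IsNoetherianRing R]
    {s : ι → R} (h₀ : KoszulExact₀ s R) (h₁ : KoszulExact₁ s R) (h₂ : KoszulExact₂ s R)
    {P : Ideal R} [P.IsPrime] (hP : P.height = 1) {h : R} (hh : h ∈ Ideal.jacobson ⊥) :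
    ∃ i, s i ∉ P ⊔ Ideal.span {h} := by
  by_contra! hs
  by_cases hdisj : Disjoint (P : Set R) (nonZeroDivisors R)
  · obtain ⟨-, e, he, he0⟩ := SetLike.lt_iff_le_and_exists.1
      (Ideal.bot_lt_annihilator_of_disjoint_nonZeroDivisors hdisj)
    refine he0 (eq_zero_of_forall_mem_smul_eq_zero h₀ h₁ hh hs fun p hp ↦ ?_)
    rw [smul_eq_mul, mul_comm]
    exact Submodule.mem_annihilator.1 he p hp
  · obtain ⟨w, hwP, hw⟩ := Set.not_disjoint_iff.1 hdisj
    have hreg : IsSMulRegular R w := fun a b hab ↦ (mul_cancel_left_mem_nonZeroDivisors hw).1 hab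
    have : P.FiniteHeight := ⟨.inr (by simp [hP])⟩
    have hmin : P ∈ (Module.annihilator R (QuotSMulTop w R)).minimalPrimes := by
      rw [Ideal.annihilator_quotient, ← Submodule.ideal_span_singleton_smul, smul_eq_mul,
        Ideal.mul_top]
      refine Ideal.mem_minimalPrimes_of_height_le ?_ (hP.trans_le ?_)
      · rwa [Ideal.span_singleton_le_iff_mem]
      · exact Ideal.one_le_height_span_singleton_of_mem_nonZeroDivisors hw
    have hass := Module.associatedPrimes.minimalPrimes_annihilator_subset_associatedPrimes R _ hmin
    obtain ⟨hprime, e, he⟩ := isAssociatedPrime_iff.1 (AssociatedPrimes.mem_iff.1 hass)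
    have he0 : e = 0 := eq_zero_of_forall_mem_smul_eq_zero (h₁.koszulExact₀_quotSMulTop h₀ hreg)
      (h₂.koszulExact₁_quotSMulTop h₁ hreg) hh hs fun p hp ↦ by
        rw [he] at hp
        simpa using hp
    exact hprime.ne_top (by simp [he, he0])

end KoszulDepth

section RegularSequence

open RingTheory.Sequence

lemma isRegular_concat_of_sub_pow_mem {R M : Type*} [CommRing R] [IsLocalRing R] [AddCommGroup M]
    [Module R M] [IsNoetherian R M] {r r' : R} {rs : List R} {n : ℕ} (h : IsRegular M (r :: rs))
    (hn : n ≠ 0) (hr : r' - r ^ n ∈ Ideal.ofList rs) : IsRegular M (rs ++ [r']) := by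
  have hweak := (IsLocalRing.isRegular_of_perm h
    (List.perm_append_singleton r rs).symm).toIsWeaklyRegular
  rw [isWeaklyRegular_append_iff, isWeaklyRegular_singleton_iff] at hweak
  refine ⟨(isWeaklyRegular_append_iff M _ _).2 ⟨hweak.1, ?_⟩, ?_⟩
  · have hsmul (m : M ⧸ (Ideal.ofList rs • ⊤ : Submodule R M)) : r' • m = r ^ n • m := by
      obtain ⟨m, rfl⟩ := Submodule.Quotient.mk_surjective _ m
      rw [← sub_eq_zero, ← sub_smul, ← Submodule.Quotient.mk_smul,
        Submodule.Quotient.mk_eq_zero]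
      exact Submodule.smul_mem_smul hr trivial
    rw [isWeaklyRegular_singleton_iff]
    exact fun a b hab ↦ hweak.2.pow n (by simpa only [hsmul] using hab)
  · refine fun htop ↦ h.top_ne_smul (top_unique (htop.le.trans (Submodule.smul_mono_left ?_))).symm
    rw [Ideal.ofList_append, Ideal.ofList_singleton, Ideal.ofList_cons, sup_comm (Ideal.span {r})]
    refine sup_le le_sup_left ((Ideal.span_singleton_le_iff_mem _).2 ?_)
    rw [← sub_add_cancel r' (r ^ n)]
    exact add_mem (Ideal.mem_sup_left hr) (Ideal.mem_sup_right
      (Ideal.pow_mem_of_mem _ (Ideal.mem_span_singleton_self r) n (Nat.pos_of_ne_zero hn)))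

variable {σ k : Type*}

lemma mem_ofList_map_X_iff [CommRing k] {l : List σ} {F : MvPowerSeries σ k} :
    F ∈ Ideal.ofList (l.map (X : σ → MvPowerSeries σ k)) ↔
      ∀ m : σ →₀ ℕ, (∀ i ∈ l, m i = 0) → coeff m F = 0 := by
  induction l generalizing F with
  | nil => simp [MvPowerSeries.ext_iff]
  | cons i l ih =>
    simp only [List.map_cons, Ideal.ofList_cons, Submodule.mem_sup, List.forall_mem_cons]
    constructor
    · rintro ⟨P, hP, G, hG, rfl⟩ m ⟨hi, hl⟩
      rw [map_add, X_dvd_iff.1 (Ideal.mem_span_singleton.1 hP) m hi, ih.1 hG m hl, add_zero]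
    · intro h
      let G : MvPowerSeries σ k := fun m ↦ if m i = 0 then coeff m F else 0
      have coeff_G (m) : coeff m G = if m i = 0 then coeff m F else 0 := rfl
      refine ⟨F - G, Ideal.mem_span_singleton.2 (X_dvd_iff.2 fun m hm ↦ ?_), G,
        ih.2 fun m hm ↦ ?_, sub_add_cancel F G⟩
      · rw [map_sub, coeff_G, if_pos hm, sub_self]
      · rw [coeff_G, ite_eq_right_iff]
        exact fun hi ↦ h m ⟨hi, hm⟩

lemma isWeaklyRegular_map_X [CommRing k] {l : List σ} (hl : l.Nodup) :
    IsWeaklyRegular (MvPowerSeries σ k) (l.map (X : σ → MvPowerSeries σ k)) := by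
  induction l using List.reverseRecOn with
  | nil => exact .nil _ _
  | append_singleton l i ih =>
    obtain ⟨hi, hl⟩ := (List.nodup_concat l i).1 (by rwa [List.concat_eq_append])
    rw [List.map_append, List.map_singleton, isWeaklyRegular_append_iff,
      isWeaklyRegular_singleton_iff, isSMulRegular_quotient_iff_mem_of_smul_mem]
    refine ⟨ih hl, fun F hF ↦ ?_⟩
    rw [smul_eq_mul, Ideal.mul_top, mem_ofList_map_X_iff] at hF ⊢
    intro m hm
    have hcoeff := hF (Finsupp.single i 1 + m) fun j hj ↦ by
      rw [Finsupp.add_apply, Finsupp.single_eq_of_ne (ne_of_mem_of_not_mem hj hi), hm j hj]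
    rwa [smul_eq_mul, X, coeff_add_monomial_mul, one_mul] at hcoeff

lemma X_mem_maximalIdeal [CommRing k] [IsLocalRing k] (i : σ) :
    X i ∈ IsLocalRing.maximalIdeal (MvPowerSeries σ k) := by
  simp [isUnit_iff_constantCoeff]

lemma maximalIdeal_eq_span_range_X [Field k] [Finite σ] :
    IsLocalRing.maximalIdeal (MvPowerSeries σ k) = Ideal.span (Set.range X) := by
  have := Fintype.ofFinite σ
  refine le_antisymm (fun F hF ↦ ?_) (Ideal.span_le.2 (Set.range_subset_iff.2 X_mem_maximalIdeal))
  have hF0 : constantCoeff F = 0 := by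
    simpa [isUnit_iff_constantCoeff] using hF
  have hmem : F ∈ Ideal.ofList (Finset.univ.toList.map (X : σ → MvPowerSeries σ k)) :=
    mem_ofList_map_X_iff.2 fun m hm ↦ by
      obtain rfl : m = 0 := Finsupp.ext fun i ↦ hm i (by simp)
      exact hF0
  exact Ideal.span_mono (by simp [Set.subset_def]) hmem

lemma isRegular_map_X [CommRing k] [IsLocalRing k] {l : List σ} (hl : l.Nodup) :
    IsRegular (MvPowerSeries σ k) (l.map (X : σ → MvPowerSeries σ k)) := by
  refine .of_isWeaklyRegular_of_mem_maximalIdeal _ (fun r hr ↦ ?_) (isWeaklyRegular_map_X hl)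
  obtain ⟨i, -, rfl⟩ := List.mem_map.1 hr
  exact X_mem_maximalIdeal i

end RegularSequence

section CohenMacaulay

open RingTheory.Sequence IsLocalRing

variable {R : Type*} [CommRing R] [IsLocalRing R] [IsNoetherianRing R] {a b c : R}

lemma isRegular_pow_of_isRegular (h : IsRegular R [a, b, c]) {n : ℕ} (hn : n ≠ 0) :
    IsRegular R [a ^ n, b ^ n, c ^ n] := by
  have concat_pow {r : R} {rs} (h : IsRegular R (r :: rs)) : IsRegular R (rs ++ [r ^ n]) :=
    isRegular_concat_of_sub_pow_mem h hn (by rw [sub_self]; exact zero_mem _)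
  exact concat_pow (concat_pow (concat_pow h))

lemma exists_notMem_radical_of_height_eq_one (hreg : IsRegular R [a, b, c]) {P : Ideal R}
    [P.IsPrime] (hP : P.height = 1) {h : R} (hh : h ∈ maximalIdeal R) :
    ∃ r ∈ [a, b, c], r ∉ (P ⊔ Ideal.span {h}).radical := by
  by_contra! hmem
  have hle : Ideal.ofList [a, b, c] ≤ (P ⊔ Ideal.span {h}).radical := Ideal.span_le.2 hmem
  obtain ⟨n, hn⟩ := Ideal.exists_pow_le_of_le_radical_of_fg hle (IsNoetherian.noetherian _)
  have hpow {r : R} (hr : r ∈ [a, b, c]) : r ^ (n + 1) ∈ P ⊔ Ideal.span {h} :=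
    hn (Ideal.pow_le_pow_right n.le_succ
      (Ideal.pow_mem_pow (Ideal.subset_span (s := {r | r ∈ [a, b, c]}) hr) _))
  let s : Fin 3 → R := ![a ^ (n + 1), b ^ (n + 1), c ^ (n + 1)]
  obtain ⟨h₀, h₁, h₂⟩ := koszulExact_of_isWeaklyRegular (s := s) (i := 0) (j := 1) (l := 2)
    (isRegular_pow_of_isRegular hreg n.succ_ne_zero).toIsWeaklyRegular
  obtain ⟨i, hi⟩ := exists_notMem_sup_span_singleton_of_height_eq_one h₀ h₁ h₂ hP
    (maximalIdeal_le_jacobson _ hh)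
  fin_cases i
  · exact hi (hpow (by simp))
  · exact hi (hpow (by simp))
  · exact hi (hpow (by simp))

end CohenMacaulay

section Ring

variable (k : Type*) [CommRing k]

/-- The relation `x³ + y³ + z³`, the variables `x, y, z, u, v` being `X 0, …, X 4`. -/
noncomputable abbrev cubicRelation : MvPowerSeries (Fin 5) k := X 0 ^ 3 + X 1 ^ 3 + X 2 ^ 3

/-- The relation `z² - ux - vy`, the variables `x, y, z, u, v` being `X 0, …, X 4`. -/
noncomputable abbrev quadricRelation : MvPowerSeries (Fin 5) k := X 2 ^ 2 - X 3 * X 0 - X 4 * X 1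

/-- The ideal `(x³ + y³ + z³, z² - ux - vy)` of `k⟦x, y, z, u, v⟧`. -/
noncomputable abbrev lyubeznikIdeal : Ideal (MvPowerSeries (Fin 5) k) :=
  Ideal.span {cubicRelation k, quadricRelation k}

/-- The ring `k⟦x, y, z, u, v⟧ / (x³ + y³ + z³, z² - ux - vy)`. -/
abbrev LyubeznikRing : Type _ := MvPowerSeries (Fin 5) k ⧸ lyubeznikIdeal k

/-- The classes `coord k 0, …, coord k 4` of the variables `x, y, z, u, v`. -/
noncomputable def coord (i : Fin 5) : LyubeznikRing k := Ideal.Quotient.mk _ (X i)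

end Ring

section RegularCoordinates

open RingTheory.Sequence

variable (k : Type*) [Field k]

lemma isRegular_relations_X : IsRegular (MvPowerSeries (Fin 5) k)
    [quadricRelation k, cubicRelation k, X 1, X 3, X 4] := by
  have h_vars : IsRegular (MvPowerSeries (Fin 5) k)
      [(X 2 : MvPowerSeries (Fin 5) k), X 0, X 1, X 3, X 4] :=
    isRegular_map_X (l := [2, 0, 1, 3, 4]) (by decide)
  have h_quadric := isRegular_concat_of_sub_pow_mem (r' := quadricRelation k) h_vars
    two_ne_zero (by
      rw [show quadricRelation k - X 2 ^ 2 = -(X 3 * X 0 + X 4 * X 1) by ring]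
      exact neg_mem (add_mem (Ideal.mul_mem_left _ _ (Ideal.subset_span (by simp)))
        (Ideal.mul_mem_left _ _ (Ideal.subset_span (by simp)))))
  have h_cubic := isRegular_concat_of_sub_pow_mem (r' := cubicRelation k) h_quadric
    three_ne_zero (by
      rw [show cubicRelation k - X 0 ^ 3 =
        (X 1 ^ 2 + X 2 * X 4) * X 1 + (X 2 * X 0) * X 3 + X 2 * quadricRelation k by ring]
      exact add_mem (add_mem (Ideal.mul_mem_left _ _ (Ideal.subset_span (by simp)))
        (Ideal.mul_mem_left _ _ (Ideal.subset_span (by simp))))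
        (Ideal.mul_mem_left _ _ (Ideal.subset_span (by simp))))
  exact IsLocalRing.isRegular_of_perm h_cubic (List.perm_append_comm (l₁ := [_, _, _]))

instance : IsLocalRing (LyubeznikRing k) :=
  have : Nontrivial (LyubeznikRing k) := Ideal.Quotient.nontrivial_iff.2 <|
    ne_top_of_le_ne_top (IsLocalRing.maximalIdeal.isMaximal _).ne_top <| Ideal.span_le.2 <|
      Set.pair_subset (by simp [isUnit_iff_constantCoeff]) (by simp [isUnit_iff_constantCoeff])
  .of_surjective' (Ideal.Quotient.mk _) Ideal.Quotient.mk_surjective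

lemma maximalIdeal_eq_span_range_coord :
    IsLocalRing.maximalIdeal (LyubeznikRing k) = Ideal.span (Set.range (coord k)) := by
  rw [← IsLocalRing.map_maximalIdeal_of_surjective (Ideal.Quotient.mk (lyubeznikIdeal k))
    Ideal.Quotient.mk_surjective, maximalIdeal_eq_span_range_X, Ideal.map_span, ← Set.range_comp]
  rfl

lemma coord_mem_maximalIdeal (i : Fin 5) :
    coord k i ∈ IsLocalRing.maximalIdeal (LyubeznikRing k) := by
  rw [maximalIdeal_eq_span_range_coord]
  exact Ideal.subset_span ⟨i, rfl⟩

lemma isRegular_coord : IsRegular (LyubeznikRing k) [coord k 1, coord k 3, coord k 4] := by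
  have h := ((isWeaklyRegular_append_iff _ [_, _] [_, _, _]).1
    (isRegular_relations_X k).toIsWeaklyRegular).2
  have h_span : Ideal.ofList [quadricRelation k, cubicRelation k] = lyubeznikIdeal k := by
    rw [Ideal.ofList_cons, Ideal.ofList_singleton, sup_comm, ← Ideal.span_insert]
  rw [smul_eq_mul, Ideal.mul_top, h_span, ← isWeaklyRegular_map_algebraMap_iff (LyubeznikRing k)]
    at h
  exact .of_isWeaklyRegular_of_mem_maximalIdeal _ (by
    simp [-IsLocalRing.mem_maximalIdeal, coord_mem_maximalIdeal]) h

end RegularCoordinates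

section Trace

variable {B K L : Type*} [CommRing B] [IsDomain B] [IsIntegrallyClosed B] [Field K] [Field L]
  [Algebra B K] [IsFractionRing B K] [Algebra B L] [Algebra K L] [IsScalarTower B K L]
  [FiniteDimensional K L] [Algebra.IsSeparable K L] {w : B} {z t : L} {n : ℕ}

/-- The conjugates of `z` are the products of a fixed `n`-th root `z₀` of `w` by roots of unity. -/
lemma dvd_pow_of_algebraMap_eq_trace_mul (hw₀ : w ≠ 0) (hn : n ≠ 0) (hz : z ^ n = algebraMap B L w)
    (ht : IsIntegral B t) {b : B} (hb : algebraMap B K b = Algebra.trace K L (t * z)) :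
    w ∣ b ^ n := by
  let A := AlgebraicClosure K
  obtain ⟨z₀, hz₀⟩ := IsAlgClosed.exists_pow_nat_eq (algebraMap B A w) (Nat.pos_of_ne_zero hn)
  have hwK : algebraMap B K w ≠ 0 := by simpa using hw₀
  have hwA : algebraMap B A w ≠ 0 := by
    rw [IsScalarTower.algebraMap_apply B K A]
    simpa using hw₀
  have hz₀_ne : z₀ ≠ 0 := by
    rintro rfl
    exact hwA (by rw [← hz₀, zero_pow hn])
  have h_root (σ : L →ₐ[K] A) : (σ z / z₀) ^ n = 1 := by
    rw [div_pow, ← map_pow, hz, hz₀, IsScalarTower.algebraMap_apply B K L, AlgHom.commutes,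
      ← IsScalarTower.algebraMap_apply B K A, div_self hwA]
  let θ : A := ∑ σ : L →ₐ[K] A, σ t * (σ z / z₀)
  have hθ : IsIntegral B θ := IsIntegral.sum _ fun σ _ ↦ (ht.map (σ.restrictScalars B)).mul <|
    .of_pow (Nat.pos_of_ne_zero hn) (by rw [h_root]; exact isIntegral_one)
  have hbθ : algebraMap B A b = z₀ * θ := by
    rw [IsScalarTower.algebraMap_apply B K A, hb, trace_eq_sum_embeddings A, Finset.mul_sum]
    refine Finset.sum_congr rfl fun σ _ ↦ ?_
    rw [map_mul, mul_left_comm, mul_div_cancel₀ _ hz₀_ne]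
  have h_quot : algebraMap K A (algebraMap B K b ^ n / algebraMap B K w) = θ ^ n := by
    rw [map_div₀, map_pow, ← IsScalarTower.algebraMap_apply B K A,
      ← IsScalarTower.algebraMap_apply B K A, hbθ, mul_pow, hz₀, mul_div_cancel_left₀ _ hwA]
  obtain ⟨c, hc⟩ := IsIntegrallyClosed.isIntegral_iff.1
    ((isIntegral_algebraMap_iff (algebraMap K A).injective).1 (h_quot ▸ hθ.pow n))
  refine ⟨c, IsFractionRing.injective B K ?_⟩
  rw [map_mul, map_pow, hc, mul_div_cancel₀ _ hwK]

lemma exists_algebraMap_eq_trace_div_pow (hw₀ : w ≠ 0) (hw : IsRadical w)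
    (hz : z ^ (n + 1) = algebraMap B L w) (ht : IsIntegral B t) :
    ∃ b, algebraMap B K b = Algebra.trace K L (t / z ^ n) := by
  have hzi : IsIntegral B z := .of_pow n.succ_pos (hz ▸ isIntegral_algebraMap)
  obtain ⟨b, hb⟩ := IsIntegrallyClosed.isIntegral_iff.1
    (Algebra.isIntegral_trace (L := K) (ht.mul hzi))
  obtain ⟨c, rfl⟩ := hw _ _ (dvd_pow_of_algebraMap_eq_trace_mul hw₀ n.succ_ne_zero hz ht hb)
  have hwK : algebraMap B K w ≠ 0 := by simpa using hw₀
  have hwL : algebraMap B L w ≠ 0 := by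
    rw [IsScalarTower.algebraMap_apply B K L]
    simpa using hw₀
  have hz₀ : z ≠ 0 := by
    rintro rfl
    exact hwL (by rw [← hz, zero_pow n.succ_ne_zero])
  have h_div : t / z ^ n = (algebraMap B K w)⁻¹ • (t * z) := by
    rw [Algebra.smul_def, map_inv₀, ← IsScalarTower.algebraMap_apply B K L, ← hz]
    field_simp
    ring
  refine ⟨c, ?_⟩
  rw [h_div, map_smul, ← hb, map_mul, smul_eq_mul, inv_mul_cancel_left₀ hwK]

variable {D : Type*} [CommRing D] [Algebra B D] [Algebra.IsIntegral B D] [Algebra D L]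
  [IsScalarTower B D L] {𝔞 : Ideal B} {z : D}

lemma exists_mem_algebraMap_eq_trace_div_pow (hw₀ : w ≠ 0) (hw : IsRadical w)
    (hz : z ^ (n + 1) = algebraMap B D w) {t : D} (ht : t ∈ 𝔞.map (algebraMap B D)) :
    ∃ b ∈ 𝔞, algebraMap B K b = Algebra.trace K L (algebraMap D L t / algebraMap D L z ^ n) := by
  have hzL : algebraMap D L z ^ (n + 1) = algebraMap B L w := by
    rw [← map_pow, hz, ← IsScalarTower.algebraMap_apply]
  replace ht : t ∈ 𝔞 • (⊤ : Submodule B D) := by rwa [Ideal.smul_top_eq_map]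
  induction ht using Submodule.smul_induction_on' with
  | smul a ha d _ =>
    obtain ⟨b, hb⟩ := exists_algebraMap_eq_trace_div_pow (K := K) hw₀ hw hzL
      ((Algebra.IsIntegral.isIntegral (R := B) d).map (IsScalarTower.toAlgHom B D L))
    refine ⟨a * b, 𝔞.mul_mem_right b ha, ?_⟩
    rw [map_mul, hb, ← smul_eq_mul, ← map_smul, Algebra.smul_def a d, map_mul, mul_div_assoc,
      Algebra.smul_def (algebraMap B K a), ← IsScalarTower.algebraMap_apply,
      ← IsScalarTower.algebraMap_apply]
    rfl
  | add t₁ _ t₂ _ ih₁ ih₂ =>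
    obtain ⟨b₁, hb₁, hb₁'⟩ := ih₁
    obtain ⟨b₂, hb₂, hb₂'⟩ := ih₂
    exact ⟨b₁ + b₂, add_mem hb₁ hb₂, by rw [map_add, map_add, add_div, map_add, hb₁', hb₂']⟩

lemma finrank_mem_of_pow_mem_map (hw₀ : w ≠ 0) (hw : IsRadical w)
    (hz : z ^ (n + 1) = algebraMap B D w) (hmem : z ^ n ∈ 𝔞.map (algebraMap B D)) :
    (Module.finrank K L : B) ∈ 𝔞 := by
  obtain ⟨b, hb, hbL⟩ := exists_mem_algebraMap_eq_trace_div_pow (K := K) (L := L) hw₀ hw hz hmem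
  have hzL : algebraMap D L z ^ n ≠ 0 := by
    intro h₀
    have hwL : algebraMap K L (algebraMap B K w) = 0 := by
      rw [← IsScalarTower.algebraMap_apply, IsScalarTower.algebraMap_apply B D L, ← hz, map_pow,
        pow_succ, h₀, zero_mul]
    exact hw₀ (by simpa using hwL)
  have h_trace : algebraMap B K b = Module.finrank K L := by
    rw [hbL, map_pow, div_self hzL, ← map_one (algebraMap K L), Algebra.trace_algebraMap, nsmul_one]
  have hb_eq : b = Module.finrank K L := IsFractionRing.injective B K (by rw [h_trace, map_natCast])
  exact hb_eq ▸ hb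

end Trace

lemma exists_natCast_mem_of_pow_mem_map {B D : Type*} [CommRing B] [IsDomain B]
    [IsIntegrallyClosed B] [CharZero B] [CommRing D] [IsDomain D] [Algebra B D] [Module.Finite B D]
    [FaithfulSMul B D] {w : B} (hw₀ : w ≠ 0) (hw : IsRadical w) {z : D} {n : ℕ}
    (hz : z ^ (n + 1) = algebraMap B D w) {𝔞 : Ideal B} (hmem : z ^ n ∈ 𝔞.map (algebraMap B D)) :
    ∃ m : ℕ, m ≠ 0 ∧ (m : B) ∈ 𝔞 := by
  let _ : Algebra (FractionRing B) (FractionRing D) := FractionRing.liftAlgebra B (FractionRing D)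
  have : CharZero (FractionRing B) :=
    charZero_of_injective_algebraMap (IsFractionRing.injective B (FractionRing B))
  exact ⟨_, Module.finrank_pos.ne', finrank_mem_of_pow_mem_map (K := FractionRing B)
    (L := FractionRing D) hw₀ hw hz hmem⟩

section Squarefree

variable {σ k : Type*} [CommRing k] {i j : σ} {n : ℕ}

lemma X_pow_dvd_of_X_pow_dvd_X_pow_mul (hij : i ≠ j) {m : ℕ} {F : MvPowerSeries σ k}
    (h : X i ^ n ∣ X j ^ m * F) : X i ^ n ∣ F := by
  rw [X_pow_dvd_iff] at h ⊢
  intro d hd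
  rw [← h (Finsupp.single j m + d) (by simpa [hij] using hd), X_pow_eq, coeff_add_monomial_mul,
    one_mul]

lemma isRelPrime_X_pow_X_pow (hij : i ≠ j) {m : ℕ} :
    IsRelPrime (X i ^ n : MvPowerSeries σ k) (X j ^ m) := by
  rintro p ⟨q, hq⟩ ⟨r, hr⟩
  obtain ⟨s, hs⟩ : X i ^ n ∣ q := X_pow_dvd_of_X_pow_dvd_X_pow_mul hij (m := m)
    ⟨r, by rw [hr, hq, mul_right_comm]⟩
  have h_cancel : X i ^ n * (p * s) = X i ^ n * 1 := by rw [mul_left_comm, ← hs, ← hq, mul_one]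
  have hX : X i ^ n ∈ nonZeroDivisors (MvPowerSeries σ k) := pow_mem X_mem_nonzeroDivisors n
  exact .of_mul_eq_one s ((mul_cancel_left_mem_nonZeroDivisors hX).1 h_cancel)

lemma squarefree_X_pow_add_X_pow (hij : i ≠ j) (hn : IsUnit (n : k)) :
    Squarefree (X i ^ n + X j ^ n : MvPowerSeries σ k) := by
  rintro p ⟨q, hq⟩
  have h_dvd (l : σ) : p ∣ pderiv k l (X i ^ n + X j ^ n) := by
    rw [hq, Derivation.leibniz, Derivation.leibniz]
    exact dvd_add ((dvd_mul_right p p).mul_right _)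
      (((dvd_mul_right p _).add (dvd_mul_right p _)).mul_left _)
  have hn' : IsUnit (n : MvPowerSeries σ k) := by simpa using hn.map (C (σ := σ))
  refine isRelPrime_X_pow_X_pow hij (n := n - 1) (m := n - 1) ?_ ?_
  · simpa [pderiv_pow, pderiv_X_of_ne hij.symm, hn'.dvd_mul_left] using h_dvd i
  · simpa [pderiv_pow, pderiv_X_of_ne hij, hn'.dvd_mul_left] using h_dvd j

end Squarefree

section TwoVariables

variable {k : Type*} [Field k]

instance : IsPrincipalIdealRing (MvPowerSeries (Fin 1) k) :=
  let e : PowerSeries k ≃ₐ[k] MvPowerSeries (Fin 1) k := renameEquiv k (Equiv.ofUnique Unit (Fin 1))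
  .of_surjective e e.surjective

instance : UniqueFactorizationMonoid (MvPowerSeries (Fin 2) k) :=
  have : IsDomain (MvPowerSeries (Fin 1) k) := NoZeroDivisors.to_isDomain _
  (finSuccEquiv k 1).symm.toMulEquiv.uniqueFactorizationMonoid inferInstance

lemma exists_X_one_pow_mem_span {q : MvPowerSeries (Fin 2) k} (hq : ¬ X 0 ∣ q) :
    ∃ n, X 1 ^ n ∈ Ideal.span {X 0, q} := by
  let e : PowerSeries k ≃ₐ[k] MvPowerSeries (Fin 1) k := renameEquiv k (Equiv.ofUnique Unit (Fin 1))
  let φ := finSuccEquiv k 1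
  have h_X : e PowerSeries.X = X 0 := rename_X ..
  obtain ⟨f, hf⟩ := e.surjective (PowerSeries.constantCoeff (φ q))
  have hf₀ : f ≠ 0 := by
    rintro rfl
    obtain ⟨r, hr⟩ := PowerSeries.X_dvd_iff.2 (hf.symm.trans (map_zero e))
    exact hq ⟨φ.symm r, φ.injective (by rw [map_mul, finSuccEquiv_X_zero, φ.apply_symm_apply, hr])⟩
  obtain ⟨n, hn⟩ :=
    IsDiscreteValuationRing.associated_pow_irreducible hf₀ PowerSeries.X_irreducible
  obtain ⟨g, hg⟩ := hn.dvd
  obtain ⟨r, hr⟩ := (PowerSeries.X_dvd_iff (φ := φ q - .C (e f))).2 (by simp [hf])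
  refine ⟨n, Ideal.mem_span_pair.2 ⟨-φ.symm (r * .C (e g)), φ.symm (.C (e g)), ?_⟩⟩
  refine φ.injective ?_
  simp only [map_add, map_mul, map_neg, map_pow, φ.apply_symm_apply]
  rw [finSuccEquiv_X_zero, show (1 : Fin 2) = Fin.succ 0 from rfl, finSuccEquiv_X_succ, ← h_X,
    ← map_pow, ← map_pow, hg, map_mul, map_mul]
  linear_combination PowerSeries.C (e g) * hr

lemma exists_maximalIdeal_le_radical_sup_span_X {𝔮 : Ideal (MvPowerSeries (Fin 2) k)} [𝔮.IsPrime]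
    (h𝔮 : 𝔮 ≠ ⊥) : ∃ i, IsLocalRing.maximalIdeal (MvPowerSeries (Fin 2) k) ≤
      (𝔮 ⊔ Ideal.span {X i}).radical := by
  suffices ∃ i, ∀ j, (X j : MvPowerSeries (Fin 2) k) ∈ (𝔮 ⊔ Ideal.span {X i}).radical by
    obtain ⟨i, hi⟩ := this
    rw [maximalIdeal_eq_span_range_X]
    exact ⟨i, Ideal.span_le.2 (Set.range_subset_iff.2 hi)⟩
  by_cases h₀ : X 0 ∈ 𝔮
  · exact ⟨1, Fin.forall_fin_two.2 ⟨Ideal.le_radical (Ideal.mem_sup_left h₀),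
      Ideal.le_radical (Ideal.mem_sup_right (Ideal.mem_span_singleton_self _))⟩⟩
  · obtain ⟨q, hq, hq₀⟩ := Submodule.exists_mem_ne_zero_of_ne_bot h𝔮
    obtain ⟨n, q, hXq, rfl⟩ := WfDvdMonoid.max_power_factor' hq₀ (X_mem_maximalIdeal (k := k) 0)
    have hq' := (Ideal.IsPrime.mem_or_mem ‹_› hq).resolve_left fun h ↦
      h₀ (Ideal.IsPrime.mem_of_pow_mem ‹_› n h)
    obtain ⟨m, hm⟩ := exists_X_one_pow_mem_span hXq
    refine ⟨0, Fin.forall_fin_two.2 ⟨Ideal.le_radical (Ideal.mem_sup_right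
      (Ideal.mem_span_singleton_self _)), m, Ideal.span_le.2 (Set.pair_subset ?_ ?_) hm⟩⟩
    · exact Ideal.mem_sup_right (Ideal.mem_span_singleton_self _)
    · exact Ideal.mem_sup_left hq'

end TwoVariables

section Finiteness

open IsLocalRing

lemma isPrecomplete_of_finite {B M : Type*} [CommRing B] [AddCommGroup M] [Module B M]
    [Module.Finite B M] (𝔟 : Ideal B) [IsPrecomplete 𝔟 B] : IsPrecomplete 𝔟 M := by
  rw [← AdicCompletion.of_surjective_iff]
  intro c
  obtain ⟨t, rfl⟩ := AdicCompletion.ofTensorProduct_surjective_of_finite 𝔟 M c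
  induction t with
  | zero => exact ⟨0, by simp⟩
  | tmul a m =>
    obtain ⟨r, rfl⟩ := AdicCompletion.of_surjective 𝔟 B a
    refine ⟨r • m, ?_⟩
    ext n
    rw [map_smul, AdicCompletion.ofTensorProduct_tmul]
    rfl
  | add s t hs ht =>
    obtain ⟨m, hm⟩ := hs
    obtain ⟨m', hm'⟩ := ht
    exact ⟨m + m', by rw [map_add, map_add, hm, hm']⟩

lemma finite_of_finite_quotient_map {B D : Type*} [CommRing B] [CommRing D] [Algebra B D]
    (𝔟 : Ideal B) [IsPrecomplete 𝔟 B] [IsHausdorff (𝔟.map (algebraMap B D)) D]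
    [Module.Finite B (D ⧸ 𝔟.map (algebraMap B D))] : Module.Finite B D := by
  have : IsHausdorff 𝔟 D := (IsHausdorff.map_algebraMap_iff (S := D)).1 ‹_›
  obtain ⟨n, s, hs⟩ := Module.Finite.exists_fin (R := B) (M := D ⧸ 𝔟.map (algebraMap B D))
  choose t ht using fun i ↦ Ideal.Quotient.mk_surjective (s i)
  have := isPrecomplete_of_finite (M := Fin n → B) 𝔟
  refine .of_surjective (Fintype.linearCombination B t)
    (surjective_of_mkQ_comp_surjective (I := 𝔟) fun q ↦ ?_)
  obtain ⟨d, rfl⟩ := Submodule.mkQ_surjective _ q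
  obtain ⟨c, hc⟩ := (Submodule.mem_span_range_iff_exists_fun B).1
    (hs ▸ trivial : Ideal.Quotient.mk _ d ∈ Submodule.span B (Set.range s))
  refine ⟨c, (Submodule.Quotient.eq _).2 ?_⟩
  rw [Ideal.smul_top_eq_map, Submodule.restrictScalars_mem, ← Ideal.Quotient.eq, ← hc,
    Fintype.linearCombination_apply, map_sum]
  refine Finset.sum_congr rfl fun i _ ↦ ?_
  rw [← ht, Algebra.smul_def, Algebra.smul_def, map_mul]
  rfl

lemma finite_of_maximalIdeal_le_radical_map {B D : Type*} [CommRing B] [CommRing D] [Algebra B D]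
    [IsNoetherianRing D] [IsLocalRing D] {𝔟 : Ideal B} [IsPrecomplete 𝔟 B]
    [Module.Finite B (D ⧸ maximalIdeal D)] (h𝔟 : 𝔟.map (algebraMap B D) ≤ maximalIdeal D)
    (hrad : maximalIdeal D ≤ (𝔟.map (algebraMap B D)).radical) : Module.Finite B D := by
  have : IsHausdorff (𝔟.map (algebraMap B D)) D :=
    .of_isLocalRing _ _ (ne_top_of_le_ne_top Ideal.IsPrime.ne_top' h𝔟)
  have h_nil : RingHom.ker (Ideal.Quotient.factorₐ B h𝔟) ≤
      nilradical (D ⧸ 𝔟.map (algebraMap B D)) := by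
    intro q hq
    obtain ⟨d, rfl⟩ := Ideal.Quotient.mk_surjective q
    obtain ⟨n, hn⟩ := hrad (Ideal.Quotient.eq_zero_iff_mem.1 hq)
    exact ⟨n, Ideal.Quotient.eq_zero_iff_mem.2 hn⟩
  have : Module.Finite B (D ⧸ 𝔟.map (algebraMap B D)) :=
    Module.finite_of_surjective_of_ker_le_nilradical (Ideal.Quotient.factorₐ B h𝔟)
      (Ideal.Quotient.factor_surjective h𝔟) h_nil (IsNoetherian.noetherian _)
  exact finite_of_finite_quotient_map 𝔟

end Finiteness

section PrimesOfHeightOne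

open IsLocalRing

lemma pow_notMem_map_maximalIdeal {k D : Type*} [Field k] [CharZero k] [CommRing D] [IsDomain D]
    [Algebra (MvPowerSeries (Fin 2) k) D] [Module.Finite (MvPowerSeries (Fin 2) k) D]
    [FaithfulSMul (MvPowerSeries (Fin 2) k) D] {z : D} {n : ℕ}
    (hz : z ^ (n + 1) = algebraMap (MvPowerSeries (Fin 2) k) D (X 0 ^ (n + 1) + X 1 ^ (n + 1))) :
    z ^ n ∉ (maximalIdeal (MvPowerSeries (Fin 2) k)).map (algebraMap _ D) := by
  intro hmem
  have : IsDomain (MvPowerSeries (Fin 2) k) := NoZeroDivisors.to_isDomain _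
  have : CharZero (MvPowerSeries (Fin 2) k) :=
    charZero_of_injective_algebraMap (FaithfulSMul.algebraMap_injective k _)
  have h_squarefree : Squarefree (X 0 ^ (n + 1) + X 1 ^ (n + 1) : MvPowerSeries (Fin 2) k) :=
    squarefree_X_pow_add_X_pow zero_ne_one (Nat.cast_ne_zero.2 n.succ_ne_zero).isUnit
  obtain ⟨m, hm, hmem⟩ :=
    exists_natCast_mem_of_pow_mem_map h_squarefree.ne_zero h_squarefree.isRadical hz hmem
  refine (mem_maximalIdeal _).1 hmem ?_
  rw [isUnit_iff_constantCoeff, map_natCast]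
  exact (Nat.cast_ne_zero.2 hm).isUnit

section Quotient

variable {B R : Type*} [CommRing B] [CommRing R] [Algebra B R] {P : Ideal R}

lemma faithfulSMul_quotient (hP : P.comap (algebraMap B R) = ⊥) : FaithfulSMul B (R ⧸ P) := by
  rw [faithfulSMul_iff_algebraMap_injective, RingHom.injective_iff_ker_eq_bot, ← hP]
  ext b
  exact Ideal.Quotient.eq_zero_iff_mem

lemma finite_quotient [IsNoetherianRing R] [IsLocalRing R] {𝔟 : Ideal B} [IsPrecomplete 𝔟 B]
    (h_residue : Function.Surjective ((residue R).comp (algebraMap B R)))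
    (h𝔟 : 𝔟.map (algebraMap B R) ≤ maximalIdeal R) (hP : P ≠ ⊤)
    (hrad : maximalIdeal R ≤ (𝔟.map (algebraMap B R) ⊔ P).radical) : Module.Finite B (R ⧸ P) := by
  have : Nontrivial (R ⧸ P) := Ideal.Quotient.nontrivial_iff.2 hP
  have : IsLocalRing (R ⧸ P) := .of_surjective' (Ideal.Quotient.mk P) Ideal.Quotient.mk_surjective
  have h_max : (maximalIdeal R).map (Ideal.Quotient.mk P) = maximalIdeal (R ⧸ P) :=
    map_maximalIdeal_of_surjective (Ideal.Quotient.mk P) Ideal.Quotient.mk_surjective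
  have h_map : 𝔟.map (algebraMap B (R ⧸ P)) =
      (𝔟.map (algebraMap B R)).map (Ideal.Quotient.mk P) := by
    rw [Ideal.map_map]
    rfl
  have : Module.Finite B ((R ⧸ P) ⧸ maximalIdeal (R ⧸ P)) := by
    refine .of_surjective (Algebra.linearMap B _) fun q ↦ ?_
    obtain ⟨q, rfl⟩ := Ideal.Quotient.mk_surjective q
    obtain ⟨r, rfl⟩ := Ideal.Quotient.mk_surjective q
    obtain ⟨b, hb⟩ := h_residue (residue R r)
    exact ⟨b, Ideal.Quotient.eq.2
      (h_max ▸ Ideal.mem_map_of_mem (Ideal.Quotient.mk P) (Ideal.Quotient.eq.1 hb))⟩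
  refine finite_of_maximalIdeal_le_radical_map (𝔟 := 𝔟) ?_ ?_
  · exact h_map ▸ h_max ▸ Ideal.map_mono h𝔟
  · rw [h_map, ← h_max]
    refine (Ideal.map_mono hrad).trans ((Ideal.map_radical_le _).trans (Ideal.radical_mono ?_))
    rw [Ideal.map_sup, Ideal.map_quotient_self, sup_bot_eq]

end Quotient

lemma pow_notMem_map_maximalIdeal_of_comap_eq_bot {k R : Type*} [Field k] [CharZero k] [CommRing R]
    [IsNoetherianRing R] [IsLocalRing R] [Algebra (MvPowerSeries (Fin 2) k) R] {P : Ideal R}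
    [P.IsPrime]
    (h_residue : Function.Surjective ((residue R).comp (algebraMap (MvPowerSeries (Fin 2) k) R)))
    (h_le : (maximalIdeal (MvPowerSeries (Fin 2) k)).map (algebraMap _ R) ≤ maximalIdeal R)
    (h_comap : P.comap (algebraMap (MvPowerSeries (Fin 2) k) R) = ⊥)
    (h_rad : maximalIdeal R ≤
      ((maximalIdeal (MvPowerSeries (Fin 2) k)).map (algebraMap _ R) ⊔ P).radical) {z : R} {n : ℕ}
    (hz : z ^ (n + 1) = algebraMap (MvPowerSeries (Fin 2) k) R (X 0 ^ (n + 1) + X 1 ^ (n + 1))) :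
    z ^ n ∉ (maximalIdeal (MvPowerSeries (Fin 2) k)).map (algebraMap _ R) := by
  intro hmem
  have : IsPrecomplete (maximalIdeal (MvPowerSeries (Fin 2) k)) (MvPowerSeries (Fin 2) k) := by
    rw [maximalIdeal_eq_span_range_X]
    infer_instance
  have := faithfulSMul_quotient h_comap
  have := finite_quotient h_residue h_le (Ideal.IsPrime.ne_top ‹_›) h_rad
  refine pow_notMem_map_maximalIdeal (k := k) (z := Ideal.Quotient.mk P z) (n := n) ?_ ?_
  · rw [← map_pow, hz, Ideal.Quotient.mk_algebraMap]
  · rw [← map_pow, ← Ideal.Quotient.mk_comp_algebraMap (R₁ := MvPowerSeries (Fin 2) k) P,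
      ← Ideal.map_map]
    exact Ideal.mem_map_of_mem _ hmem

section Coordinates

variable (k : Type*) [CommRing k]

/-- The ideal `(x, y, z)` of `LyubeznikRing k`. -/
noncomputable abbrev xyzIdeal : Ideal (LyubeznikRing k) :=
  Ideal.span {coord k 0, coord k 1, coord k 2}

/-- `LyubeznikRing k` as an algebra over `k⟦x, y⟧`. -/
noncomputable instance : Algebra (MvPowerSeries (Fin 2) k) (LyubeznikRing k) :=
  ((Ideal.Quotient.mk (lyubeznikIdeal k)).comp
    (rename (R := k) (Fin.castLEEmb (show 2 ≤ 5 by decide))).toRingHom).toAlgebra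

variable {k}

lemma algebraMap_X (i : Fin 2) :
    algebraMap (MvPowerSeries (Fin 2) k) (LyubeznikRing k) (X i) = coord k (i.castLE (by decide)) :=
  congrArg (Ideal.Quotient.mk _) (rename_X ..)

lemma coord_cube_add : coord k 0 ^ 3 + coord k 1 ^ 3 + coord k 2 ^ 3 = 0 :=
  Ideal.Quotient.eq_zero_iff_mem.2 (Ideal.subset_span (by simp))

lemma coord_two_sq : coord k 2 ^ 2 = coord k 3 * coord k 0 + coord k 4 * coord k 1 := by
  rw [← sub_eq_zero, ← sub_sub]
  exact Ideal.Quotient.eq_zero_iff_mem.2 (Ideal.subset_span (by simp))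

lemma xyzIdeal_le_radical {K : Ideal (LyubeznikRing k)} (h₀ : coord k 0 ∈ K.radical)
    (h₁ : coord k 1 ∈ K.radical) : xyzIdeal k ≤ K.radical := by
  have h₂ : coord k 2 ∈ K.radical := K.radical_isRadical ⟨3, by
    rw [eq_neg_of_add_eq_zero_right (coord_cube_add (k := k))]
    exact neg_mem (add_mem (Ideal.pow_mem_of_mem _ h₀ 3 three_pos)
      (Ideal.pow_mem_of_mem _ h₁ 3 three_pos))⟩
  exact Ideal.span_le.2 (Set.insert_subset h₀ (Set.pair_subset h₁ h₂))

end Coordinates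

variable {k : Type*} [Field k] {P : Ideal (LyubeznikRing k)}

lemma maximalIdeal_le_radical {K : Ideal (LyubeznikRing k)}
    (hm : maximalIdeal (LyubeznikRing k) ≤ (xyzIdeal k ⊔ P).radical) (hP : P ≤ K.radical)
    (h₀ : coord k 0 ∈ K.radical) (h₁ : coord k 1 ∈ K.radical) :
    maximalIdeal (LyubeznikRing k) ≤ K.radical :=
  hm.trans (K.radical_isRadical.radical_le_iff.2 (sup_le (xyzIdeal_le_radical h₀ h₁) hP))

lemma comap_algebraMap_eq_bot [P.IsPrime] (hP : P.height = 1)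
    (hm : maximalIdeal (LyubeznikRing k) ≤ (xyzIdeal k ⊔ P).radical) :
    P.comap (algebraMap (MvPowerSeries (Fin 2) k) (LyubeznikRing k)) = ⊥ := by
  by_contra h
  obtain ⟨i, hi⟩ := exists_maximalIdeal_le_radical_sup_span_X h
  obtain ⟨r, hr, hrP⟩ := exists_notMem_radical_of_height_eq_one (isRegular_coord k) hP
    (coord_mem_maximalIdeal k (i.castLE (by decide)))
  have h_coord (j : Fin 2) : coord k (j.castLE (by decide)) ∈
      (P ⊔ Ideal.span {coord k (i.castLE (by decide))}).radical := by
    obtain ⟨n, hn⟩ := hi (X_mem_maximalIdeal j)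
    refine ⟨n, ?_⟩
    have := Ideal.mem_map_of_mem (algebraMap (MvPowerSeries (Fin 2) k) (LyubeznikRing k)) hn
    rw [Ideal.map_sup, Ideal.map_span, Set.image_singleton, map_pow, algebraMap_X,
      algebraMap_X] at this
    exact (sup_le_sup_right Ideal.map_comap_le _ : _ ≤ P ⊔ _) this
  have h_max :=
    maximalIdeal_le_radical hm (le_sup_left.trans Ideal.le_radical) (h_coord 0) (h_coord 1)
  simp only [List.mem_cons, List.not_mem_nil, or_false] at hr
  rcases hr with rfl | rfl | rfl <;> exact hrP (h_max (coord_mem_maximalIdeal k _))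

lemma surjective_residue_comp_algebraMap : Function.Surjective
    ((residue (LyubeznikRing k)).comp (algebraMap (MvPowerSeries (Fin 2) k) _)) := by
  intro q
  obtain ⟨r, rfl⟩ := residue_surjective q
  obtain ⟨p, rfl⟩ := Ideal.Quotient.mk_surjective r
  have h_mem : C (constantCoeff p) - p ∈ maximalIdeal (MvPowerSeries (Fin 5) k) := by
    simp [isUnit_iff_constantCoeff]
  refine ⟨C (constantCoeff p), Ideal.Quotient.eq.2 ?_⟩
  rw [← map_maximalIdeal_of_surjective (Ideal.Quotient.mk (lyubeznikIdeal k))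
    Ideal.Quotient.mk_surjective]
  convert! Ideal.mem_map_of_mem (Ideal.Quotient.mk (lyubeznikIdeal k)) h_mem using 1
  rw [map_sub]
  exact congrArg (· - _) (congrArg (Ideal.Quotient.mk _) (rename_C ..))

lemma map_maximalIdeal_eq_span : (maximalIdeal (MvPowerSeries (Fin 2) k)).map
    (algebraMap _ (LyubeznikRing k)) = Ideal.span {coord k 0, coord k 1} := by
  rw [maximalIdeal_eq_span_range_X, Ideal.map_span]
  congr 1
  ext r
  simp [Fin.exists_fin_two, algebraMap_X, eq_comm]

theorem not_maximalIdeal_le_radical_xyzIdeal_sup [CharZero k] [P.IsPrime] (hP : P.height = 1) :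
    ¬ maximalIdeal (LyubeznikRing k) ≤ (xyzIdeal k ⊔ P).radical := by
  intro hm
  have h_map := map_maximalIdeal_eq_span (k := k)
  have h₀ : coord k 0 ∈ Ideal.span {coord k 0, coord k 1} := Ideal.subset_span (by simp)
  have h₁ : coord k 1 ∈ Ideal.span {coord k 0, coord k 1} := Ideal.subset_span (by simp)
  refine pow_notMem_map_maximalIdeal_of_comap_eq_bot (z := -coord k 2) (n := 2)
    surjective_residue_comp_algebraMap ?_ (comap_algebraMap_eq_bot hP hm) ?_ ?_ ?_
  · rw [h_map, Ideal.span_le]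
    exact Set.pair_subset (coord_mem_maximalIdeal k 0) (coord_mem_maximalIdeal k 1)
  · rw [h_map]
    exact maximalIdeal_le_radical hm (le_sup_right.trans Ideal.le_radical)
      (Ideal.le_radical (Ideal.mem_sup_left h₀)) (Ideal.le_radical (Ideal.mem_sup_left h₁))
  · rw [map_add, map_pow, map_pow, algebraMap_X, algebraMap_X]
    change _ = coord k 0 ^ 3 + coord k 1 ^ 3
    linear_combination -coord_cube_add (k := k)
  · rw [h_map]
    convert! add_mem (Ideal.mul_mem_left _ (coord k 3) h₀) (Ideal.mul_mem_left _ (coord k 4) h₁)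
      using 1
    exact (neg_sq (coord k 2)).trans coord_two_sq

end PrimesOfHeightOne

section DerivedFunctor

open CategoryTheory Limits HomologicalComplex

universe v u v' u'

variable {C : Type u} [Category.{v} C] [Abelian C] [EnoughProjectives C]
  {D : Type u'} [Category.{v'} D] [Abelian D] (F : C ⥤ D) [F.Additive] {X X' : C} {W : D} {n : ℕ}

lemma homologyMap_homologyι_descOpcycles {ι : Type*} {c : ComplexShape ι}
    {K K' : HomologicalComplex D c} (ψ : K' ⟶ K) {i j : ι} (hj : c.prev i = j) {h : K.X i ⟶ W}
    (hh : K.d j i ≫ h = 0) (hh' : K'.d j i ≫ ψ.f i ≫ h = 0) :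
    homologyMap ψ i ≫ K.homologyι i ≫ K.descOpcycles h j hj hh =
      K'.homologyι i ≫ K'.descOpcycles (ψ.f i ≫ h) j hj hh' := by
  rw [homologyι_naturality_assoc]
  congr 1
  rw [← cancel_epi (pOpcycles _ _), p_opcyclesMap_assoc, p_descOpcycles, p_descOpcycles]

/-- The morphism `Lₙ F X ⟶ W` induced by a morphism `h` on the `n`-th term of `F P`, for a
projective resolution `P` of `X`, which vanishes on boundaries. For a contravariant Hom functor this
is the class in `Ext` of a cocycle. -/
noncomputable def leftDerivedDesc (P : ProjectiveResolution X) (h : F.obj (P.complex.X n) ⟶ W)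
    (hh : F.map (P.complex.d (n + 1) n) ≫ h = 0) : (F.leftDerived n).obj X ⟶ W :=
  (P.isoLeftDerivedObj F n).hom ≫
    homologyι ((F.mapHomologicalComplex _).obj P.complex) n ≫
      descOpcycles ((F.mapHomologicalComplex _).obj P.complex) h (n + 1) (by simp) hh

lemma leftDerived_map_comp_leftDerivedDesc (f : X' ⟶ X) {P' : ProjectiveResolution X'}
    {P : ProjectiveResolution X} {φ : P'.complex ⟶ P.complex}
    (comm : φ.f 0 ≫ P.π.f 0 = P'.π.f 0 ≫ f) {h : F.obj (P.complex.X n) ⟶ W}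
    (hh : F.map (P.complex.d (n + 1) n) ≫ h = 0)
    (hh' : F.map (P'.complex.d (n + 1) n) ≫ F.map (φ.f n) ≫ h = 0) :
    (F.leftDerived n).map f ≫ leftDerivedDesc F P h hh =
      leftDerivedDesc F P' (F.map (φ.f n) ≫ h) hh' := by
  unfold leftDerivedDesc
  rw [ProjectiveResolution.isoLeftDerivedObj_hom_naturality_assoc f P' P φ comm F n]
  congr 1
  exact homologyMap_homologyι_descOpcycles ((F.mapHomologicalComplex _).map φ) (by simp) hh hh'

lemma exists_eq_map_d_comp_of_leftDerivedDesc_eq_zero {P : ProjectiveResolution X} [Injective W]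
    {h : F.obj (P.complex.X (n + 1)) ⟶ W} (hh : F.map (P.complex.d (n + 2) (n + 1)) ≫ h = 0)
    (h₀ : leftDerivedDesc F P h hh = 0) :
    ∃ β : F.obj (P.complex.X n) ⟶ W, h = F.map (P.complex.d (n + 1) n) ≫ β := by
  unfold leftDerivedDesc at h₀
  rw [← cancel_epi (P.isoLeftDerivedObj F (n + 1)).inv, Iso.inv_hom_id_assoc, comp_zero] at h₀
  set K := (F.mapHomologicalComplex _).obj P.complex
  have h_exact :
      (ShortComplex.mk (K.homologyι (n + 1)) (K.fromOpcycles (n + 1) n) (by simp)).Exact :=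
    ShortComplex.exact_of_f_is_kernel _ (K.homologyIsKernel (n + 1) n (by simp))
  refine ⟨h_exact.descToInjective _ h₀, ?_⟩
  change h = K.d (n + 1) n ≫ _
  rw [← p_fromOpcycles_assoc, h_exact.comp_descToInjective _ h₀]
  exact (p_descOpcycles K h (n + 2) (by simp) hh).symm

end DerivedFunctor

section LocalCohomology

open CategoryTheory Limits Opposite

universe u

variable {R : Type u} [CommRing R] {Y : ModuleCat.{u} R}

variable (Y) in
/-- `Hom(-, Y)` as a covariant functor to the opposite category, the form in which Mathlib's `Ext`
is a left derived functor. -/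
noncomputable abbrev homOp : ModuleCat.{u} R ⥤ (ModuleCat.{u} R)ᵒᵖ :=
  ((linearYoneda R (ModuleCat.{u} R)).obj Y).rightOp

/-- A morphism `M ⟶ Y`, regarded as an element `R ⟶ Hom(M, Y)` of the module of such morphisms. -/
noncomputable def homOpEquiv {M : ModuleCat.{u} R} :
    (M ⟶ Y) ≃ ((homOp Y).obj M ⟶ op (ModuleCat.of R R)) where
  toFun e := Quiver.Hom.op (ModuleCat.ofHom (LinearMap.toSpanSingleton R (M ⟶ Y) e))
  invFun h := (h.unop.hom : R →ₗ[R] (M ⟶ Y)) 1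
  left_inv e := one_smul R e
  right_inv h := Quiver.Hom.unop_inj (by ext; exact one_smul R _)

lemma homOp_map_comp_homOpEquiv {M M' : ModuleCat.{u} R} (g : M' ⟶ M) (e : M ⟶ Y) :
    (homOp Y).map g ≫ homOpEquiv e = homOpEquiv (g ≫ e) :=
  Quiver.Hom.unop_inj (by ext; rfl)

lemma homOp_map_comp_homOpEquiv_eq_zero {M M' : ModuleCat.{u} R} {g : M' ⟶ M} {e : M ⟶ Y}
    (h : g ≫ e = 0) : (homOp Y).map g ≫ homOpEquiv e = 0 := by
  rw [homOp_map_comp_homOpEquiv, h]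
  exact Quiver.Hom.unop_inj (by ext; exact smul_zero (A := (M' ⟶ Y)) (1 : R))

variable {I : Ideal R} {i m : ℕ}

lemma exists_leftDerived_map_comp_eq_zero [hs : Subsingleton ((localCohomology I i).obj Y)]
    (c : ((homOp Y).leftDerived i).obj (ModuleCat.of R (R ⧸ I ^ m)) ⟶ op (ModuleCat.of R R)) :
    ∃ (n : ℕ) (hn : m ≤ n), ((homOp Y).leftDerived i).map
      (ModuleCat.ofHom (Submodule.factor (Ideal.pow_le_pow_right hn))) ≫ c = 0 := by
  let dg := localCohomology.diagram (localCohomology.idealPowersDiagram I) i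
  let j : (ℕᵒᵖ)ᵒᵖ := op (op m)
  have h_colimit := isColimitOfPreserves ((evaluation _ _).obj Y) (colimit.isColimit dg)
  let c' : ModuleCat.of R R ⟶ (dg ⋙ (evaluation _ _).obj Y).obj j := c.unop
  have : PreservesFilteredColimitsOfSize.{0, 0} (forget (ModuleCat.{u} R)) :=
    preservesSmallestFilteredColimits_of_preservesFilteredColimits _
  obtain ⟨⟨⟨n⟩⟩, f, g, hfg⟩ := Concrete.isColimit_exists_of_rep_eq _ h_colimit
    (i := j) (j := j) (c'.hom (1 : R)) 0 (@Subsingleton.elim _ hs _ _)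
  rw [map_zero] at hfg
  exact ⟨n, f.unop.unop.down.down, Quiver.Hom.unop_inj (by ext; exact hfg)⟩

lemma exists_cocycle_eq_coboundary_of_subsingleton
    [Subsingleton ((localCohomology I (i + 1)).obj Y)]
    (P : ∀ n : ℕ, ProjectiveResolution (ModuleCat.of R (R ⧸ I ^ n)))
    {e : (P m).complex.X (i + 1) ⟶ Y} (he : (P m).complex.d (i + 2) (i + 1) ≫ e = 0) :
    ∃ (n : ℕ) (hn : m ≤ n) (φ : (P n).complex ⟶ (P m).complex) (β : (P n).complex.X i ⟶ Y),
      φ.f 0 ≫ (P m).π.f 0 = (P n).π.f 0 ≫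
        ModuleCat.ofHom (Submodule.factor (Ideal.pow_le_pow_right hn)) ∧
      φ.f (i + 1) ≫ e = (P n).complex.d (i + 1) i ≫ β := by
  have he' := homOp_map_comp_homOpEquiv_eq_zero he
  obtain ⟨n, hn, h_zero⟩ :=
    exists_leftDerived_map_comp_eq_zero (leftDerivedDesc (homOp Y) (P m) (homOpEquiv e) he')
  let q : ModuleCat.of R (R ⧸ I ^ n) ⟶ ModuleCat.of R (R ⧸ I ^ m) :=
    ModuleCat.ofHom (Submodule.factor (Ideal.pow_le_pow_right hn))
  let φ := ProjectiveResolution.lift q (P n) (P m)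
  have hφ : φ.f 0 ≫ (P m).π.f 0 = (P n).π.f 0 ≫ q := ProjectiveResolution.lift_commutes_zero ..
  have h_cocycle : (homOp Y).map ((P n).complex.d (i + 2) (i + 1)) ≫
      (homOp Y).map (φ.f (i + 1)) ≫ homOpEquiv e = 0 := by
    rw [homOp_map_comp_homOpEquiv]
    exact homOp_map_comp_homOpEquiv_eq_zero (by rw [← φ.comm_assoc, he, comp_zero])
  rw [leftDerived_map_comp_leftDerivedDesc _ q hφ he' h_cocycle] at h_zero
  obtain ⟨β, hβ⟩ := exists_eq_map_d_comp_of_leftDerivedDesc_eq_zero _ h_cocycle h_zero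
  obtain ⟨β, rfl⟩ := homOpEquiv.surjective β
  rw [homOp_map_comp_homOpEquiv, homOp_map_comp_homOpEquiv] at hβ
  exact ⟨n, hn, φ, β, hφ, homOpEquiv.injective hβ⟩

end LocalCohomology

section Syzygies

variable {R : Type*} [CommRing R] {p q : R}

variable (p q) in
/-- The module of pairs `(a, b)` with `p * a + q * b = 0`. -/
def syzygies : Submodule R (R × R) :=
  LinearMap.ker ((LinearMap.mulLeft R p).coprod (LinearMap.mulLeft R q))

lemma mem_syzygies {w : R × R} : w ∈ syzygies p q ↔ p * w.1 + q * w.2 = 0 := by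
  simp [syzygies]

lemma swap_neg_mem_syzygies : (q, -p) ∈ syzygies p q := by
  rw [mem_syzygies]
  ring

lemma exists_linearMap_mul_add_mul_eq {A : Type*} [AddCommGroup A] [Module R A]
    [Module.Projective R A] {f : A →ₗ[R] R} (hf : ∀ a, f a ∈ Ideal.span {p, q}) :
    ∃ s : A →ₗ[R] R × R, ∀ a, p * (s a).1 + q * (s a).2 = f a := by
  let t := (LinearMap.mulLeft R p).coprod (LinearMap.mulLeft R q)
  have hf' (a : A) : f a ∈ LinearMap.range t := by
    obtain ⟨b, c, h⟩ := Ideal.mem_span_pair.mp (hf a)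
    exact ⟨(b, c), by simp [t, ← h, mul_comm]⟩
  obtain ⟨s, hs⟩ := Module.projective_lifting_property t.rangeRestrict
    (f.codRestrict (LinearMap.range t) hf') t.surjective_rangeRestrict
  exact ⟨s, fun a ↦ congrArg Subtype.val (LinearMap.congr_fun hs a)⟩

lemma exists_comparison {A₀ A₁ A₂ : Type*} [AddCommGroup A₀] [AddCommGroup A₁] [AddCommGroup A₂]
    [Module R A₀] [Module R A₁] [Module R A₂] [Module.Projective R A₀] [Module.Projective R A₁]
    {L : Ideal R} (hL : L ≤ Ideal.span {p, q}) {π : A₀ →ₗ[R] R ⧸ L} {d₁ : A₁ →ₗ[R] A₀}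
    {d₂ : A₂ →ₗ[R] A₁} (hπ : ∀ a, π (d₁ a) = 0) (hd : ∀ a, d₁ (d₂ a) = 0) :
    ∃ (r : A₀ →ₗ[R] R) (s : A₁ →ₗ[R] R × R) (t : A₂ →ₗ[R] syzygies p q),
      (∀ a, (Ideal.Quotient.mk (Ideal.span {p, q}) (r a)) = Submodule.factor hL (π a)) ∧
      (∀ a, p * (s a).1 + q * (s a).2 = r (d₁ a)) ∧ ∀ a, (t a : R × R) = s (d₂ a) := by
  obtain ⟨r, hr⟩ := Module.projective_lifting_property (Ideal.span {p, q}).mkQ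
    (Submodule.factor hL ∘ₗ π) (Submodule.mkQ_surjective _)
  have hr' (a : A₀) : Ideal.Quotient.mk (Ideal.span {p, q}) (r a) = Submodule.factor hL (π a) :=
    LinearMap.congr_fun hr a
  obtain ⟨s, hs⟩ := exists_linearMap_mul_add_mul_eq (p := p) (q := q) (f := r ∘ₗ d₁) fun a ↦ by
    rw [← Ideal.Quotient.eq_zero_iff_mem, LinearMap.comp_apply, hr', hπ, map_zero]
  have hs' (a : A₂) : (s ∘ₗ d₂) a ∈ syzygies p q := by
    rw [mem_syzygies, LinearMap.comp_apply, hs, LinearMap.comp_apply, hd, map_zero]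
  exact ⟨r, s, (s ∘ₗ d₂).codRestrict _ hs', hr', hs, fun a ↦ rfl⟩

/-- Here `r`, `(s₁, s₂)` and `t` describe a chain map from the Koszul complex of the higher powers
to `syzygies → R × R → R`, and `hb` says that it pulls the cocycle `h` back to a coboundary. -/
lemma mul_pow_mem_span_pair_of_eq_coboundary {x y : R} {c k : ℕ}
    {h : syzygies (x ^ (c + 1)) (y ^ (c + 1)) →ₗ[R] R}
    (hh : h ⟨_, swap_neg_mem_syzygies⟩ = (x * y) ^ c) {r : R}
    (hr : 1 - r ∈ Ideal.span {x ^ (c + 1), y ^ (c + 1)}) {s₁ s₂ : R × R}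
    (hs₁ : x ^ (c + 1) * s₁.1 + y ^ (c + 1) * s₁.2 = x ^ (c + k + 1) * r)
    (hs₂ : x ^ (c + 1) * s₂.1 + y ^ (c + 1) * s₂.2 = y ^ (c + k + 1) * r)
    {t : syzygies (x ^ (c + 1)) (y ^ (c + 1))}
    (ht : (t : R × R) = y ^ (c + k + 1) • s₁ - x ^ (c + k + 1) • s₂) {b₁ b₂ : R}
    (hb : h t = y ^ (c + k + 1) * b₁ - x ^ (c + k + 1) * b₂) :
    (x * y) ^ (c + k) ∈ Ideal.span {x ^ (c + k + 1), y ^ (c + k + 1)} := by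
  have h₁ : s₁ - (x ^ k * r, 0) ∈ syzygies (x ^ (c + 1)) (y ^ (c + 1)) := by
    rw [mem_syzygies, Prod.fst_sub, Prod.snd_sub]
    linear_combination hs₁
  have h₂ : s₂ - (0, y ^ k * r) ∈ syzygies (x ^ (c + 1)) (y ^ (c + 1)) := by
    rw [mem_syzygies, Prod.fst_sub, Prod.snd_sub]
    linear_combination hs₂
  have ht' : t = (r * (x * y) ^ k) • ⟨_, swap_neg_mem_syzygies⟩ + y ^ (c + k + 1) • ⟨_, h₁⟩ -
      x ^ (c + k + 1) • ⟨_, h₂⟩ := by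
    apply Subtype.ext
    rw [ht]
    ext <;> simp <;> ring
  rw [ht', map_sub, map_add, map_smul, map_smul, map_smul, hh] at hb
  simp only [smul_eq_mul] at hb
  obtain ⟨a, b, hab⟩ := Ideal.mem_span_pair.mp hr
  rw [Ideal.mem_span_pair]
  refine ⟨a * y ^ (c + k) * x ^ c + h ⟨_, h₂⟩ - b₂, b * x ^ (c + k) * y ^ c + b₁ - h ⟨_, h₁⟩, ?_⟩
  linear_combination (x * y) ^ (c + k) * hab - hb

lemma exists_syzygies_functional [IsNoetherianRing R] {x y : R} (hy : IsSMulRegular R y) :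
    ∃ (c : ℕ) (h : syzygies (x ^ (c + 1)) (y ^ (c + 1)) →ₗ[R] R),
      h ⟨_, swap_neg_mem_syzygies⟩ = (x * y) ^ c := by
  let f : ℕ →o Ideal R := ⟨fun n ↦ (Ideal.span {y}).colon {x ^ n}, fun i j hij a ha ↦ by
    rw [Submodule.mem_colon_singleton, smul_eq_mul] at ha ⊢
    rw [← Nat.sub_add_cancel hij, pow_add, ← mul_assoc, mul_right_comm]
    exact Ideal.mul_mem_right _ _ ha⟩
  obtain ⟨c, hc⟩ := (monotone_stabilizes_iff_noetherian (R := R) (M := R)).mpr inferInstance f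
  have h_dvd (w : syzygies (x ^ (c + 1)) (y ^ (c + 1))) : ∃ r, y * r = w.1.1 * x ^ c := by
    have hw := mem_syzygies.mp w.2
    have h_mem : w.1.1 ∈ f (c + 1) := by
      change w.1.1 ∈ (Ideal.span {y}).colon {x ^ (c + 1)}
      rw [Submodule.mem_colon_singleton, smul_eq_mul, Ideal.mem_span_singleton]
      exact ⟨-y ^ c * w.1.2, by linear_combination hw⟩
    rw [← hc (c + 1) c.le_succ] at h_mem
    obtain ⟨r, hr⟩ := Ideal.mem_span_singleton.mp (Submodule.mem_colon_singleton.mp h_mem)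
    exact ⟨r, hr.symm⟩
  choose h hh using h_dvd
  refine ⟨c, ⟨⟨h, fun v w ↦ hy ?_⟩, fun a w ↦ hy ?_⟩, hy ?_⟩
  · simp only [smul_eq_mul, mul_add, hh, Submodule.coe_add, Prod.fst_add, add_mul]
  · simp only [smul_eq_mul, mul_left_comm y a, hh, SetLike.val_smul, Prod.smul_fst,
      RingHom.id_apply, mul_assoc]
  · change y * h _ = y * _
    rw [hh]
    ring

end Syzygies

section LocalCohomologyTwo

open CategoryTheory

universe u

variable {R : Type u} [CommRing R] {I L K : Ideal R} {a b x y : R}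

lemma hom_d_hom_f {A B : ChainComplex (ModuleCat.{u} R) ℕ} (φ : A ⟶ B) (i j : ℕ) (p : A.X i) :
    (B.d i j).hom ((φ.f i).hom p) = (φ.f j).hom ((A.d i j).hom p) :=
  congrArg (fun f ↦ f.hom p) (φ.comm i j)

/-- Elements of a projective resolution `P` of `R ⧸ L` which are the images of the standard
generators of the Koszul complex of `(a, b)` under a chain map lifting `R → R ⧸ L`. -/
structure KoszulLift (P : ProjectiveResolution (ModuleCat.of R (R ⧸ L))) (a b : R) where
  unit : P.complex.X 0
  fst : P.complex.X 1
  snd : P.complex.X 1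
  wedge : P.complex.X 2
  π_unit : ((P.π.f 0).hom unit : R ⧸ L) = Ideal.Quotient.mk L 1
  d_fst : (P.complex.d 1 0).hom fst = a • unit
  d_snd : (P.complex.d 1 0).hom snd = b • unit
  d_wedge : (P.complex.d 2 1).hom wedge = b • fst - a • snd

lemma nonempty_koszulLift (P : ProjectiveResolution (ModuleCat.of R (R ⧸ L))) (ha : a ∈ L)
    (hb : b ∈ L) : Nonempty (KoszulLift P a b) := by
  have exact₀ := (ShortComplex.moduleCat_exact_iff _).mp P.exact₀
  have exact₁ := (ShortComplex.moduleCat_exact_iff _).mp (P.exact_succ 0)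
  have surj : Function.Surjective (P.π.f 0).hom :=
    (ModuleCat.epi_iff_surjective _).mp inferInstance
  obtain ⟨u, hu⟩ := surj (Ideal.Quotient.mk L 1 : R ⧸ L)
  have h_lift (t : R) (ht : t ∈ L) : ∃ p, (P.complex.d 1 0).hom p = t • u := by
    have h_smul : t • (Ideal.Quotient.mk L 1 : R ⧸ L) = 0 := by
      rwa [Algebra.smul_def, map_one, mul_one, Ideal.Quotient.algebraMap_eq,
        Ideal.Quotient.eq_zero_iff_mem]
    refine exact₀ _ ((map_smul (P.π.f 0).hom t u).trans ?_)
    rw [hu]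
    exact h_smul
  obtain ⟨p, hp⟩ := h_lift a ha
  obtain ⟨q, hq⟩ := h_lift b hb
  obtain ⟨w, hw⟩ := exact₁ (b • p - a • q) <| by
    change (P.complex.d 1 0).hom (b • p - a • q) = 0
    rw [map_sub, map_smul, map_smul, hp, hq, smul_comm, sub_self]
  exact ⟨⟨u, p, q, w, hu, hp, hq, hw⟩⟩

/-- The image of a lift of the Koszul complex under a chain map over `R ⧸ L → R ⧸ K`. -/
def KoszulLift.map {P : ProjectiveResolution (ModuleCat.of R (R ⧸ L))}
    {Q : ProjectiveResolution (ModuleCat.of R (R ⧸ K))} (k : KoszulLift P a b) (hLK : L ≤ K)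
    (φ : P.complex ⟶ Q.complex)
    (hφ : φ.f 0 ≫ Q.π.f 0 = P.π.f 0 ≫ ModuleCat.ofHom (Submodule.factor hLK)) :
    KoszulLift Q a b where
  unit := (φ.f 0).hom k.unit
  fst := (φ.f 1).hom k.fst
  snd := (φ.f 1).hom k.snd
  wedge := (φ.f 2).hom k.wedge
  π_unit := (congrArg (fun f ↦ f.hom k.unit) hφ).trans
    (congrArg (Submodule.factor hLK) k.π_unit)
  d_fst := by rw [hom_d_hom_f, k.d_fst, map_smul]
  d_snd := by rw [hom_d_hom_f, k.d_snd, map_smul]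
  d_wedge := by rw [hom_d_hom_f, k.d_wedge, map_sub, map_smul, map_smul]

/-- A lift of `R ⧸ L → R ⧸ (a, b)` to a chain map from a projective resolution to the exact complex
`syzygies a b → R × R → R`. -/
structure KoszulComparison (P : ProjectiveResolution (ModuleCat.of R (R ⧸ L)))
    (hL : L ≤ Ideal.span {a, b}) where
  zero : P.complex.X 0 →ₗ[R] R
  one : P.complex.X 1 →ₗ[R] R × R
  two : P.complex.X 2 →ₗ[R] syzygies a b
  mk_zero : ∀ p, Ideal.Quotient.mk (Ideal.span {a, b}) (zero p) =
    Submodule.factor hL ((P.π.f 0).hom p : R ⧸ L)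
  mul_add_mul_one : ∀ p, a * (one p).1 + b * (one p).2 = zero ((P.complex.d 1 0).hom p)
  coe_two : ∀ p, (two p : R × R) = one ((P.complex.d 2 1).hom p)

lemma nonempty_koszulComparison (P : ProjectiveResolution (ModuleCat.of R (R ⧸ L)))
    (hL : L ≤ Ideal.span {a, b}) : Nonempty (KoszulComparison P hL) := by
  have projective (i : ℕ) : Module.Projective R (P.complex.X i) :=
    (IsProjective.iff_projective _).mpr (P.projective i)
  obtain ⟨r, s, t, hr, hs, ht⟩ := exists_comparison hL (π := (P.π.f 0).hom)
    (fun p ↦ congrArg (fun f ↦ f.hom p) P.complex_d_comp_π_f_zero)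
    fun p ↦ congrArg (fun f ↦ f.hom p) (P.complex.d_comp_d 2 1 0)
  exact ⟨⟨r, s, t, hr, hs, ht⟩⟩

lemma KoszulComparison.two_d {P : ProjectiveResolution (ModuleCat.of R (R ⧸ L))}
    {hL : L ≤ Ideal.span {a, b}} (ψ : KoszulComparison P hL) (p : P.complex.X 3) :
    ψ.two ((P.complex.d 3 2).hom p) = 0 := by
  have h : (P.complex.d 2 1).hom ((P.complex.d 3 2).hom p) = 0 :=
    congrArg (fun f ↦ f.hom p) (P.complex.d_comp_d 3 2 1)
  exact Subtype.ext <| by rw [ψ.coe_two, h, map_zero, Submodule.coe_zero]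

lemma KoszulComparison.mul_pow_mem_span_pair {c k : ℕ}
    {P : ProjectiveResolution (ModuleCat.of R (R ⧸ L))}
    {hL : L ≤ Ideal.span {x ^ (c + 1), y ^ (c + 1)}} (ψ : KoszulComparison P hL)
    {h : syzygies (x ^ (c + 1)) (y ^ (c + 1)) →ₗ[R] R}
    (hh : h ⟨_, swap_neg_mem_syzygies⟩ = (x * y) ^ c)
    (κ : KoszulLift P (x ^ (c + k + 1)) (y ^ (c + k + 1))) {b₁ b₂ : R}
    (hb : h (ψ.two κ.wedge) = y ^ (c + k + 1) * b₁ - x ^ (c + k + 1) * b₂) :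
    (x * y) ^ (c + k) ∈ Ideal.span {x ^ (c + k + 1), y ^ (c + k + 1)} := by
  refine mul_pow_mem_span_pair_of_eq_coboundary hh (r := ψ.zero κ.unit) (s₁ := ψ.one κ.fst)
    (s₂ := ψ.one κ.snd) ?_ ?_ ?_ ?_ hb
  · rw [← Ideal.Quotient.mk_eq_mk_iff_sub_mem, ψ.mk_zero, κ.π_unit]
    rfl
  · rw [ψ.mul_add_mul_one, κ.d_fst, map_smul, smul_eq_mul]
  · rw [ψ.mul_add_mul_one, κ.d_snd, map_smul, smul_eq_mul]
  · rw [ψ.coe_two, κ.d_wedge, map_sub, map_smul, map_smul]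

lemma exists_pow_le_span_pair_pow [IsNoetherianRing R] (hI : I ≤ (Ideal.span {x, y}).radical)
    (c : ℕ) : ∃ m, c ≤ m ∧ I ^ m ≤ Ideal.span {x ^ c, y ^ c} := by
  have h_le : I ≤ (Ideal.span {x ^ c, y ^ c}).radical := by
    refine hI.trans (Ideal.radical_le_radical_iff.mpr (Ideal.span_le.mpr ?_))
    exact Set.pair_subset ⟨c, Ideal.subset_span (by simp)⟩ ⟨c, Ideal.subset_span (by simp)⟩
  obtain ⟨m, hm⟩ := Ideal.exists_pow_le_of_le_radical_of_fg h_le (IsNoetherian.noetherian I)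
  exact ⟨c + m, le_self_add, (Ideal.pow_le_pow_right le_add_self).trans hm⟩

theorem nontrivial_localCohomology_two [IsNoetherianRing R] (hx : x ∈ I) (hy : y ∈ I)
    (hI : I ≤ (Ideal.span {x, y}).radical) (hreg : IsSMulRegular R y)
    (hxy : ∀ n, (x * y) ^ n ∉ Ideal.span {x ^ (n + 1), y ^ (n + 1)}) :
    Nontrivial ((localCohomology I 2).obj (ModuleCat.of R R)) := by
  obtain ⟨c, h, hh⟩ := exists_syzygies_functional (x := x) hreg
  obtain ⟨m, hcm, hm⟩ := exists_pow_le_span_pair_pow hI (c + 1)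
  by_contra! hs
  let P (n : ℕ) : ProjectiveResolution (ModuleCat.of R (R ⧸ I ^ n)) := ProjectiveResolution.of _
  obtain ⟨ψ⟩ := nonempty_koszulComparison (P m) hm
  let e : (P m).complex.X 2 ⟶ ModuleCat.of R R := ModuleCat.ofHom (h ∘ₗ ψ.two)
  have he : (P m).complex.d 3 2 ≫ e = 0 := by
    ext p
    exact (congrArg h (ψ.two_d p)).trans (map_zero h)
  obtain ⟨n, hn, φ, β, hφ, hβ⟩ := exists_cocycle_eq_coboundary_of_subsingleton P he
  obtain ⟨κ⟩ := nonempty_koszulLift (P n) (Ideal.pow_mem_pow hx n) (Ideal.pow_mem_pow hy n)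
  obtain ⟨k, rfl⟩ : ∃ k, n = c + k + 1 := ⟨n - (c + 1), by omega⟩
  refine hxy (c + k) (ψ.mul_pow_mem_span_pair hh (κ.map (Ideal.pow_le_pow_right hn) φ hφ)
    (b₁ := β.hom κ.fst) (b₂ := β.hom κ.snd) ?_)
  have h_wedge := congrArg (fun f ↦ f.hom κ.wedge) hβ
  exact h_wedge.trans (by simp [κ.d_wedge])

end LocalCohomologyTwo

section GradedEvaluation

variable {k S σ : Type*} [CommRing k] [CommRing S] [Algebra k S] [Finite σ] (w : σ → S)

lemma hasSubst_C_mul_X : HasSubst fun i ↦ PowerSeries.C (w i) * PowerSeries.X :=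
  hasSubst_of_constantCoeff_zero fun i ↦ by
    change PowerSeries.constantCoeff _ = 0
    simp

/-- The `k`-algebra homomorphism `k⟦X i⟧ → S⟦T⟧` sending `X i` to `w i * T`. The coefficient of
`T ^ n` is the value at `w` of the homogeneous component of degree `n`. -/
noncomputable def gradedEval : MvPowerSeries σ k →ₐ[k] PowerSeries S :=
  substAlgHom (hasSubst_C_mul_X w)

lemma gradedEval_X (i : σ) :
    gradedEval w (X i : MvPowerSeries σ k) = PowerSeries.C (w i) * PowerSeries.X :=
  substAlgHom_X (hasSubst_C_mul_X w) i

variable {w}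

lemma coeff_gradedEval_mem {V : Submodule k S} {n : ℕ}
    (h : ∀ d : σ →₀ ℕ, d.degree = n → (d.prod fun i e ↦ w i ^ e) ∈ V) (F : MvPowerSeries σ k) :
    PowerSeries.coeff n (gradedEval w F) ∈ V := by
  rw [gradedEval, substAlgHom_apply, PowerSeries.coeff, coeff_subst (hasSubst_C_mul_X w)]
  refine finsum_induction (fun a ↦ a ∈ V) V.zero_mem (fun _ _ ↦ V.add_mem) fun d ↦ ?_
  have h_prod : (d.prod fun i e ↦ (PowerSeries.C (w i) * PowerSeries.X) ^ e) =
      PowerSeries.C (d.prod fun i e ↦ w i ^ e) * PowerSeries.X ^ d.degree := by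
    simp only [mul_pow, Finsupp.prod, Finset.prod_mul_distrib, Finset.prod_pow_eq_pow_sum,
      map_prod, map_pow]
    rfl
  apply V.smul_mem
  rw [h_prod]
  change PowerSeries.coeff n _ ∈ V
  rw [PowerSeries.coeff_C_mul, PowerSeries.coeff_X_pow]
  split_ifs with hn
  · simpa using h d hn.symm
  · simp

lemma mul_pow_eq_coeff_gradedEval {i j : σ} {n : ℕ} {a b : MvPowerSeries σ k}
    (h : gradedEval w ((X i * X j : MvPowerSeries σ k) ^ (n + 1)) =
      gradedEval w (X i ^ (n + 2) * a + X j ^ (n + 2) * b)) :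
    (w i * w j) ^ (n + 1) = w i ^ (n + 2) * PowerSeries.coeff n (gradedEval w a) +
      w j ^ (n + 2) * PowerSeries.coeff n (gradedEval w b) := by
  have h_left : gradedEval w ((X i * X j : MvPowerSeries σ k) ^ (n + 1)) =
      PowerSeries.C ((w i * w j) ^ (n + 1)) * PowerSeries.X ^ (n + (n + 2)) := by
    simp only [map_pow, map_mul, gradedEval_X]
    ring
  have h_right (l : σ) (F : MvPowerSeries σ k) : PowerSeries.coeff (n + (n + 2))
      (gradedEval w (X l ^ (n + 2) * F)) =
        w l ^ (n + 2) * PowerSeries.coeff n (gradedEval w F) := by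
    rw [map_mul, map_pow, gradedEval_X, mul_pow, mul_assoc, ← map_pow, PowerSeries.coeff_C_mul,
      PowerSeries.coeff_X_pow_mul]
  have h_coeff := congrArg (PowerSeries.coeff (n + (n + 2))) h
  rwa [h_left, PowerSeries.coeff_C_mul, PowerSeries.coeff_X_pow_self, mul_one, map_add, map_add,
    h_right, h_right] at h_coeff

end GradedEvaluation

section CoefficientSubalgebra

open scoped Polynomial

variable {k A : Type*} [CommRing k] [CommRing A] [Algebra k A] {H : Subalgebra k A}

variable (H) in
/-- The subalgebra `H[X]` of `A[X]`. -/
noncomputable def polynomialSubalgebra : Subalgebra k A[X] :=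
  (Polynomial.mapAlgHom H.val).range

lemma coeff_mem_of_mem_polynomialSubalgebra {p : A[X]} (hp : p ∈ polynomialSubalgebra H) (n : ℕ) :
    p.coeff n ∈ H := by
  obtain ⟨q, rfl⟩ := hp
  simp

lemma C_mem_polynomialSubalgebra {a : A} (ha : a ∈ H) :
    Polynomial.C a ∈ polynomialSubalgebra H :=
  ⟨Polynomial.C ⟨a, ha⟩, by simp⟩

lemma X_mem_polynomialSubalgebra : (Polynomial.X : A[X]) ∈ polynomialSubalgebra H :=
  ⟨Polynomial.X, by simp⟩

end CoefficientSubalgebra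

section FermatRing

open scoped Polynomial LaurentPolynomial

variable (k : Type*) [CommRing k]

/-- The coordinate ring `k[x, x⁻¹, z] / (z ^ 3 + 1 + x ^ 3)` of an open subset of the Fermat
cubic. -/
abbrev FermatRing : Type _ :=
  AdjoinRoot (Polynomial.X ^ 3 + Polynomial.C (1 + LaurentPolynomial.T 3) : k[T;T⁻¹][X])

/-- The coordinate `x` of `FermatRing k`. -/
noncomputable def fermatUnit : (FermatRing k)ˣ :=
  Units.map (AdjoinRoot.of _).toMonoidHom
    ((AddMonoidAlgebra.of k ℤ).toHomUnits (Multiplicative.ofAdd 1))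

lemma fermatUnit_zpow (n : ℤ) : ((fermatUnit k ^ n : (FermatRing k)ˣ) : FermatRing k) =
    algebraMap k[T;T⁻¹] (FermatRing k) (LaurentPolynomial.T n) := by
  rw [fermatUnit, ← map_zpow, ← map_zpow, ← ofAdd_zsmul, smul_eq_mul, mul_one]
  rfl

/-- The coordinate `z` of `FermatRing k`. -/
noncomputable def fermatRoot : FermatRing k :=
  AdjoinRoot.root _

lemma fermatRoot_cube : fermatRoot k ^ 3 = -1 - (fermatUnit k : FermatRing k) ^ 3 := by
  have h_root := AdjoinRoot.eval₂_root
    (Polynomial.X ^ 3 + Polynomial.C (1 + LaurentPolynomial.T 3) : k[T;T⁻¹][X])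
  have h_unit := fermatUnit_zpow k 3
  simp only [Polynomial.eval₂_add, Polynomial.eval₂_pow, Polynomial.eval₂_X, Polynomial.eval₂_C,
    Polynomial.eval₂_one, map_add, map_one] at h_root
  rw [← AdjoinRoot.algebraMap_eq, ← h_unit] at h_root
  rw [fermatRoot]
  norm_cast at h_root ⊢
  push_cast at h_root ⊢
  linear_combination h_root

lemma linearIndependent_T : LinearIndependent k
    (LaurentPolynomial.T : ℤ → k[T;T⁻¹]) :=
  (Finsupp.linearIndependent_single_one k ℤ).map'
    (AddMonoidAlgebra.coeffLinearEquiv (R := k) (S := k) (M := ℤ)).symm.toLinearMap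
    (LinearEquiv.ker _)

lemma linearIndependent_fermatUnit_zpow_mul_fermatRoot_pow [Nontrivial k] :
    LinearIndependent k fun p : ℤ × Fin 3 ↦
      ((fermatUnit k ^ p.1 : (FermatRing k)ˣ) : FermatRing k) * fermatRoot k ^ (p.2 : ℕ) := by
  have h_root : LinearIndependent k[T;T⁻¹] fun i : Fin 3 ↦ fermatRoot k ^ (i : ℕ) := by
    have h_basis := (AdjoinRoot.powerBasis' (Polynomial.monic_X_pow_add_C
      (1 + LaurentPolynomial.T 3 : k[T;T⁻¹]) three_ne_zero)).basis.linearIndependent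
    rw [PowerBasis.coe_basis] at h_basis
    exact h_basis.comp (Fin.cast Polynomial.natDegree_X_pow_add_C.symm)
      (Fin.cast_injective _)
  simpa only [fermatUnit_zpow, Algebra.smul_def] using
    linearIndependent_smul (linearIndependent_T k) h_root

end FermatRing

section FermatMonomials

open scoped Polynomial

variable {k A : Type*} [CommRing k] [CommRing A] [Algebra k A] (x : Aˣ) (z : A)

/-- The monomial `x ^ p.1 * z ^ p.2`. -/
def fermatMonomial (p : ℤ × Fin 3) : A :=
  ((x ^ p.1 : Aˣ) : A) * z ^ (p.2 : ℕ)

/-- The exponents of the monomials that are regular on the chart with coordinates `x, z`. -/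
def affineExponents : Set (ℤ × Fin 3) :=
  {p | 0 ≤ p.1}

/-- The exponents of the monomials with a pole of order at most `d` at infinity. -/
def infinityExponents (d : ℤ) : Set (ℤ × Fin 3) :=
  {p | p.1 + (p.2 : ℕ) ≤ d}

variable (k)

/-- The `k`-span of the monomials with exponent in `T`. -/
def monomialSpan (T : Set (ℤ × Fin 3)) : Submodule k A :=
  Submodule.span k (fermatMonomial x z '' T)

/-- The functions on the chart `x, z` of the Fermat cubic. -/
def affineChart : Subalgebra k A :=
  Algebra.adjoin k {(x : A), z}

/-- The functions on the chart `x⁻¹, z * x⁻¹` of the Fermat cubic. -/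
def infinityChart : Subalgebra k A :=
  Algebra.adjoin k {(↑x⁻¹ : A), z * (↑x⁻¹ : A)}

variable {k x z} {T T' : Set (ℤ × Fin 3)} {a b : A}

lemma fermatMonomial_mem_monomialSpan {p : ℤ × Fin 3} (hp : p ∈ T) :
    fermatMonomial x z p ∈ monomialSpan k x z T :=
  Submodule.subset_span ⟨p, hp, rfl⟩

lemma one_mem_monomialSpan (h : (0, 0) ∈ T) : (1 : A) ∈ monomialSpan k x z T := by
  simpa [fermatMonomial] using fermatMonomial_mem_monomialSpan (k := k) (x := x) (z := z) h

lemma mul_mem_of_mem_monomialSpan {V : Submodule k A}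
    (h : ∀ p ∈ T, b * fermatMonomial x z p ∈ V) (ha : a ∈ monomialSpan k x z T) : b * a ∈ V :=
  (Submodule.span_le.2 (Set.forall_mem_image.2 h) :
    monomialSpan k x z T ≤ V.comap (LinearMap.mulLeft k b)) ha

lemma zpow_mul_mem_monomialSpan {l : ℤ} (h : ∀ p ∈ T, (l + p.1, p.2) ∈ T')
    (ha : a ∈ monomialSpan k x z T) : ((x ^ l : Aˣ) : A) * a ∈ monomialSpan k x z T' := by
  refine mul_mem_of_mem_monomialSpan (fun p hp ↦ ?_) ha
  have h_mul : ((x ^ l : Aˣ) : A) * fermatMonomial x z p =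
      fermatMonomial x z (l + p.1, p.2) := by
    simp [fermatMonomial, zpow_add, mul_assoc]
  exact h_mul ▸ fermatMonomial_mem_monomialSpan (h p hp)

lemma root_mul_mem_monomialSpan (hz : z ^ 3 = -1 - (x : A) ^ 3)
    (h₀ : ∀ m, (m, 0) ∈ T → (m, 1) ∈ T') (h₁ : ∀ m, (m, 1) ∈ T → (m, 2) ∈ T')
    (h₂ : ∀ m, (m, 2) ∈ T → (m, 0) ∈ T' ∧ (m + 3, 0) ∈ T')
    (ha : a ∈ monomialSpan k x z T) : z * a ∈ monomialSpan k x z T' := by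
  have h_zero (m : ℤ) : z * fermatMonomial x z (m, 0) = fermatMonomial x z (m, 1) := by
    simp [fermatMonomial, mul_comm]
  have h_one (m : ℤ) : z * fermatMonomial x z (m, 1) = fermatMonomial x z (m, 2) := by
    simp only [fermatMonomial, Fin.val_one, Fin.val_two]
    ring
  have h_two (m : ℤ) : z * fermatMonomial x z (m, 2) =
      -fermatMonomial x z (m, 0) - fermatMonomial x z (m + 3, 0) := by
    have h_shift : ((x ^ (m + 3) : Aˣ) : A) = ((x ^ m : Aˣ) : A) * (x : A) ^ 3 := by
      rw [zpow_add, Units.val_mul]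
      norm_cast
    simp only [fermatMonomial, Fin.val_two, Fin.val_zero, pow_zero, h_shift]
    linear_combination ((x ^ m : Aˣ) : A) * hz
  refine mul_mem_of_mem_monomialSpan (fun ⟨m, i⟩ hp ↦ ?_) ha
  fin_cases i
  · exact h_zero m ▸ fermatMonomial_mem_monomialSpan (h₀ m hp)
  · exact h_one m ▸ fermatMonomial_mem_monomialSpan (h₁ m hp)
  · exact h_two m ▸ sub_mem (neg_mem (fermatMonomial_mem_monomialSpan (h₂ m hp).1))
      (fermatMonomial_mem_monomialSpan (h₂ m hp).2)

lemma adjoin_le_of_mul_mem {s : Set A} {V : Submodule k A} (h_one : (1 : A) ∈ V)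
    (h_mul : ∀ a ∈ s, ∀ m ∈ V, a * m ∈ V) :
    Subalgebra.toSubmodule (Algebra.adjoin k s) ≤ V := by
  have h_stable : ∀ a ∈ Algebra.adjoin k s, ∀ m ∈ V, a * m ∈ V := by
    intro a ha
    induction ha using Algebra.adjoin_induction with
    | mem a ha => exact h_mul a ha
    | algebraMap r => exact fun m hm ↦ Algebra.smul_def r m ▸ V.smul_mem r hm
    | add a b _ _ iha ihb => exact fun m hm ↦ add_mul a b m ▸ add_mem (iha m hm) (ihb m hm)
    | mul a b _ _ iha ihb => exact fun m hm ↦ mul_assoc a b m ▸ iha _ (ihb m hm)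
  exact fun a ha ↦ mul_one a ▸ h_stable a ha 1 h_one

lemma affineChart_le_monomialSpan (hz : z ^ 3 = -1 - (x : A) ^ 3) :
    Subalgebra.toSubmodule (affineChart k x z) ≤ monomialSpan k x z affineExponents := by
  refine adjoin_le_of_mul_mem (one_mem_monomialSpan (by simp [affineExponents])) ?_
  rintro _ (rfl | rfl) m hm
  · have h_zpow : ((x ^ (1 : ℤ) : Aˣ) : A) * m ∈ monomialSpan k x z affineExponents := by
      refine zpow_mul_mem_monomialSpan (fun p hp ↦ ?_) hm
      simp only [affineExponents, Set.mem_ofPred_eq] at hp ⊢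
      lia
    rwa [zpow_one] at h_zpow
  · apply root_mul_mem_monomialSpan hz _ _ _ hm <;>
      simp only [affineExponents, Set.mem_ofPred_eq] <;> lia

lemma infinityChart_le_monomialSpan (hz : z ^ 3 = -1 - (x : A) ^ 3) :
    Subalgebra.toSubmodule (infinityChart k x z) ≤ monomialSpan k x z (infinityExponents 0) := by
  have h_inv {d : ℤ} {m : A} (hm : m ∈ monomialSpan k x z (infinityExponents d)) :
      (↑x⁻¹ : A) * m ∈ monomialSpan k x z (infinityExponents (d - 1)) := by
    rw [← zpow_neg_one]
    refine zpow_mul_mem_monomialSpan (fun p hp ↦ ?_) hm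
    simp only [infinityExponents, Set.mem_ofPred_eq] at hp ⊢
    lia
  refine adjoin_le_of_mul_mem (one_mem_monomialSpan (by simp [infinityExponents])) ?_
  rintro _ (rfl | rfl) m hm
  · refine Submodule.span_mono (Set.image_mono fun p hp ↦ ?_) (h_inv hm)
    simp only [infinityExponents, Set.mem_ofPred_eq] at hp ⊢
    lia
  · rw [mul_assoc]
    apply root_mul_mem_monomialSpan hz _ _ _ (h_inv hm) <;>
      simp only [infinityExponents, Set.mem_ofPred_eq, Fin.val_zero, Fin.val_one, Fin.val_two] <;>
      lia

lemma zpow_neg_two_mul_mem_monomialSpan (hz : z ^ 3 = -1 - (x : A) ^ 3)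
    (ha : a ∈ infinityChart k x z) :
    ((x ^ (-2 : ℤ) : Aˣ) : A) * a ∈ monomialSpan k x z (infinityExponents (-2)) := by
  refine zpow_mul_mem_monomialSpan (fun p hp ↦ ?_) (infinityChart_le_monomialSpan hz ha)
  simp only [infinityExponents, Set.mem_ofPred_eq] at hp ⊢
  lia

lemma disjoint_affineChart_monomialSpan (hz : z ^ 3 = -1 - (x : A) ^ 3)
    (hl : LinearIndependent k (fermatMonomial x z)) :
    Disjoint (Subalgebra.toSubmodule (affineChart k x z))
      (monomialSpan k x z (infinityExponents (-2))) := by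
  refine (hl.disjoint_span_image (Set.disjoint_left.2 fun p h_aff h_inf ↦ ?_)).mono_left
    (affineChart_le_monomialSpan hz)
  simp only [affineExponents, infinityExponents, Set.mem_ofPred_eq] at h_aff h_inf
  lia

-- With `y = 1`, this is the nonvanishing of the class of `1 / (xy)` in `H¹` of the Fermat cubic
-- with coefficients in `𝒪(-2)`.
lemma zpow_neg_one_notMem_sup [Nontrivial k] (hz : z ^ 3 = -1 - (x : A) ^ 3)
    (hl : LinearIndependent k (fermatMonomial x z)) :
    ((x ^ (-1 : ℤ) : Aˣ) : A) ∉ Subalgebra.toSubmodule (affineChart k x z) ⊔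
      monomialSpan k x z (infinityExponents (-2)) := by
  intro h
  have h_mem : fermatMonomial x z (-1, 0) ∈
      Submodule.span k (fermatMonomial x z '' (affineExponents ∪ infinityExponents (-2))) := by
    rw [Set.image_union, Submodule.span_union]
    simpa [fermatMonomial, monomialSpan] using sup_le_sup_right (affineChart_le_monomialSpan hz) _ h
  refine hl.notMem_span_image ?_ h_mem
  simp [affineExponents, infinityExponents]

lemma C_zpow_neg_one_ne [Nontrivial k] (hz : z ^ 3 = -1 - (x : A) ^ 3)
    (hl : LinearIndependent k (fermatMonomial x z)) {c : A} {p q : A[X]}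
    (hp : Polynomial.taylor c p ∈ polynomialSubalgebra (affineChart k x z))
    (hq : q ∈ polynomialSubalgebra (infinityChart k x z)) :
    Polynomial.C ((x ^ (-1 : ℤ) : Aˣ) : A) ≠
      p + Polynomial.C ((x ^ (-2 : ℤ) : Aˣ) : A) * q := by
  intro h
  have h_coeff (n : ℕ) := congrArg (fun r : A[X] ↦ r.coeff n) h
  simp only [Polynomial.coeff_add, Polynomial.coeff_C_mul] at h_coeff
  have h_inf (n : ℕ) := zpow_neg_two_mul_mem_monomialSpan hz
    (coeff_mem_of_mem_polynomialSubalgebra hq n)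
  -- The translation by `c` does not change the leading coefficient.
  have h_lead : p.coeff p.natDegree ∈ affineChart k x z := by
    rw [← Polynomial.leadingCoeff, ← Polynomial.coeff_taylor_natDegree (r := c)]
    exact coeff_mem_of_mem_polynomialSubalgebra hp _
  have h_degree : p.natDegree = 0 := by
    by_contra h_pos
    have h_zero := h_coeff p.natDegree
    rw [Polynomial.coeff_C_of_ne_zero h_pos] at h_zero
    have h_lead_zero := Submodule.disjoint_def.1 (disjoint_affineChart_monomialSpan hz hl) _
      h_lead (eq_neg_of_add_eq_zero_left h_zero.symm ▸ neg_mem (h_inf _))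
    rw [← Polynomial.leadingCoeff, Polynomial.leadingCoeff_eq_zero] at h_lead_zero
    simp [h_lead_zero] at h_pos
  have h_const := h_coeff 0
  rw [Polynomial.coeff_C_zero] at h_const
  exact zpow_neg_one_notMem_sup hz hl
    (h_const ▸ Submodule.add_mem_sup (h_degree ▸ h_lead) (h_inf 0))

end FermatMonomials

section Points

open scoped Polynomial

variable {k A : Type*} [CommRing k] [CommRing A] [Algebra k A] (x : Aˣ) (z : A)

/-- A generic point of the surface `x³ + y³ + z³ = z² - ux - vy = 0` in projective space, normalized
by `y = 1`. It is parametrized by a point of the Fermat cubic and by `X = v / x`, so that the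
regular parameter where `y ≠ 0` is `u = z ^ 2 * x⁻¹ - X`. -/
noncomputable def affinePoint : Fin 5 → A[X] :=
  ![Polynomial.C (x : A), 1, Polynomial.C z,
    Polynomial.C (z ^ 2 * (↑x⁻¹ : A)) - Polynomial.X, Polynomial.C (x : A) * Polynomial.X]

/-- The point `affinePoint x z` normalized by `x = 1`, so that `X = v`. -/
noncomputable def infinityPoint : Fin 5 → A[X] :=
  ![1, Polynomial.C (↑x⁻¹ : A), Polynomial.C (z * (↑x⁻¹ : A)),
    Polynomial.C (z * (↑x⁻¹ : A)) ^ 2 - Polynomial.C (↑x⁻¹ : A) * Polynomial.X,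
    Polynomial.X]

lemma C_inv_mul_C : Polynomial.C (↑x⁻¹ : A) * Polynomial.C (x : A) = 1 := by
  rw [← map_mul, Units.inv_mul, map_one]

lemma C_inv_mul_affinePoint (i : Fin 5) :
    Polynomial.C (↑x⁻¹ : A) * affinePoint x z i = infinityPoint x z i := by
  have h_inv := C_inv_mul_C x
  fin_cases i
  · exact h_inv
  · exact mul_one _
  · change Polynomial.C _ * Polynomial.C z = Polynomial.C (z * _)
    rw [mul_comm, map_mul]
  · change Polynomial.C _ * (Polynomial.C (z ^ 2 * _) - Polynomial.X) =
      Polynomial.C (z * _) ^ 2 - Polynomial.C _ * Polynomial.X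
    simp only [map_mul, map_pow]
    ring
  · change Polynomial.C _ * (Polynomial.C (x : A) * Polynomial.X) = Polynomial.X
    linear_combination Polynomial.X * h_inv

lemma affinePoint_quadric : affinePoint x z 2 ^ 2 - affinePoint x z 3 * affinePoint x z 0 -
    affinePoint x z 4 * affinePoint x z 1 = 0 := by
  change Polynomial.C z ^ 2 - (Polynomial.C (z ^ 2 * _) - Polynomial.X) * Polynomial.C (x : A) -
    Polynomial.C (x : A) * Polynomial.X * 1 = 0
  simp only [map_mul, map_pow]
  linear_combination -Polynomial.C z ^ 2 * C_inv_mul_C x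

variable {x z} {n : ℕ}

lemma affinePoint_cubic (hz : z ^ 3 = -1 - (x : A) ^ 3) :
    affinePoint x z 0 ^ 3 + affinePoint x z 1 ^ 3 + affinePoint x z 2 ^ 3 = 0 := by
  have h_cube : Polynomial.C z ^ 3 = -1 - Polynomial.C (x : A) ^ 3 := by
    rw [← map_pow, hz, map_sub, map_neg, map_one, map_pow]
  change Polynomial.C (x : A) ^ 3 + 1 ^ 3 + Polynomial.C z ^ 3 = 0
  linear_combination h_cube

lemma taylor_affinePoint_mem (i : Fin 5) :
    Polynomial.taylor (z ^ 2 * (↑x⁻¹ : A)) (affinePoint x z i) ∈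
      polynomialSubalgebra (affineChart k x z) := by
  have hx : Polynomial.C (x : A) ∈ polynomialSubalgebra (affineChart k x z) :=
    C_mem_polynomialSubalgebra (Algebra.subset_adjoin (by simp))
  have hz : Polynomial.C z ∈ polynomialSubalgebra (affineChart k x z) :=
    C_mem_polynomialSubalgebra (Algebra.subset_adjoin (by simp))
  fin_cases i
  · simpa [affinePoint] using hx
  · simp [affinePoint]
  · simpa [affinePoint] using hz
  · simpa [affinePoint] using X_mem_polynomialSubalgebra
  · convert! add_mem (mul_mem hx X_mem_polynomialSubalgebra) (pow_mem hz 2) using 1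
    change Polynomial.taylor _ (Polynomial.C (x : A) * Polynomial.X) = _
    simp only [Polynomial.taylor_mul, Polynomial.taylor_C, Polynomial.taylor_X, map_mul, map_pow]
    linear_combination Polynomial.C z ^ 2 * C_inv_mul_C x

lemma infinityPoint_mem (i : Fin 5) :
    infinityPoint x z i ∈ polynomialSubalgebra (infinityChart k x z) := by
  have hx : Polynomial.C (↑x⁻¹ : A) ∈ polynomialSubalgebra (infinityChart k x z) :=
    C_mem_polynomialSubalgebra (Algebra.subset_adjoin (by simp))
  have hz : Polynomial.C (z * (↑x⁻¹ : A)) ∈ polynomialSubalgebra (infinityChart k x z) :=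
    C_mem_polynomialSubalgebra (Algebra.subset_adjoin (by simp))
  fin_cases i
  · exact one_mem _
  · exact hx
  · exact hz
  · exact sub_mem (pow_mem hz 2) (mul_mem hx X_mem_polynomialSubalgebra)
  · exact X_mem_polynomialSubalgebra

lemma taylor_coeff_gradedEval_affinePoint_mem (F : MvPowerSeries (Fin 5) k) :
    Polynomial.taylor (z ^ 2 * (↑x⁻¹ : A))
        (PowerSeries.coeff n (gradedEval (affinePoint x z) F)) ∈
      polynomialSubalgebra (affineChart k x z) :=
  let H : Subalgebra k A[X] := (polynomialSubalgebra (affineChart k x z)).comap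
    ((Polynomial.taylorAlgHom (z ^ 2 * (↑x⁻¹ : A))).restrictScalars k)
  have h_mem (i : Fin 5) : affinePoint x z i ∈ H := taylor_affinePoint_mem i
  coeff_gradedEval_mem (V := Subalgebra.toSubmodule H) (fun _ _ ↦
    (Subalgebra.mem_toSubmodule H).2 (prod_mem fun i _ ↦ pow_mem (h_mem i) _)) F

lemma C_inv_pow_mul_coeff_gradedEval_affinePoint_mem (F : MvPowerSeries (Fin 5) k) :
    Polynomial.C (↑x⁻¹ : A) ^ n * PowerSeries.coeff n (gradedEval (affinePoint x z) F) ∈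
      polynomialSubalgebra (infinityChart k x z) := by
  refine coeff_gradedEval_mem
    (V := (Subalgebra.toSubmodule (polynomialSubalgebra (infinityChart k x z))).comap
      (LinearMap.mulLeft k (Polynomial.C (↑x⁻¹ : A) ^ n))) (fun d hd ↦ ?_) F
  have h_prod : Polynomial.C (↑x⁻¹ : A) ^ n * (d.prod fun i e ↦ affinePoint x z i ^ e) =
      d.prod fun i e ↦ infinityPoint x z i ^ e := by
    simp only [← C_inv_mul_affinePoint, mul_pow, Finsupp.prod, Finset.prod_mul_distrib,
      Finset.prod_pow_eq_pow_sum, ← hd]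
    rfl
  rw [Submodule.mem_comap, LinearMap.mulLeft_apply, h_prod]
  exact (Subalgebra.mem_toSubmodule _).2 <| prod_mem fun i _ ↦ pow_mem (infinityPoint_mem i) _

end Points

section NotMem

variable {k A : Type*} [CommRing k] [CommRing A] [Algebra k A] {x : Aˣ} {z : A}

lemma gradedEval_affinePoint_eq_zero (hz : z ^ 3 = -1 - (x : A) ^ 3)
    {F : MvPowerSeries (Fin 5) k} (hF : F ∈ lyubeznikIdeal k) :
    gradedEval (affinePoint x z) F = 0 := by
  refine (Ideal.span_le.2 (Set.pair_subset ?_ ?_) : lyubeznikIdeal k ≤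
    RingHom.ker (gradedEval (k := k) (affinePoint x z))) hF
  · have h_cubic := congrArg (PowerSeries.C (R := Polynomial A)) (affinePoint_cubic hz)
    simp only [map_add, map_pow, map_zero] at h_cubic
    simp only [SetLike.mem_coe, RingHom.mem_ker, map_add, map_pow, gradedEval_X]
    linear_combination h_cubic * PowerSeries.X ^ 3
  · have h_quadric := congrArg (PowerSeries.C (R := Polynomial A)) (affinePoint_quadric x z)
    simp only [map_sub, map_mul, map_pow, map_zero] at h_quadric
    simp only [SetLike.mem_coe, RingHom.mem_ker, map_sub, map_mul, map_pow, gradedEval_X]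
    linear_combination h_quadric * PowerSeries.X ^ 2

lemma mul_pow_succ_sub_notMem [Nontrivial k] (hz : z ^ 3 = -1 - (x : A) ^ 3)
    (hl : LinearIndependent k (fermatMonomial x z)) (n : ℕ) (a b : MvPowerSeries (Fin 5) k) :
    (X 0 * X 1) ^ (n + 1) - (X 0 ^ (n + 2) * a + X 1 ^ (n + 2) * b) ∉ lyubeznikIdeal k := by
  intro h
  have h_eval := gradedEval_affinePoint_eq_zero hz h
  rw [map_sub, sub_eq_zero] at h_eval
  have h_coeff := mul_pow_eq_coeff_gradedEval h_eval
  change (Polynomial.C (x : A) * 1) ^ (n + 1) = Polynomial.C (x : A) ^ (n + 2) * _ +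
    1 ^ (n + 2) * _ at h_coeff
  refine C_zpow_neg_one_ne hz hl (taylor_coeff_gradedEval_affinePoint_mem (n := n) a)
    (C_inv_pow_mul_coeff_gradedEval_affinePoint_mem (n := n) b) ?_
  have h_inv (m : ℕ) : Polynomial.C (↑x⁻¹ : A) ^ m * Polynomial.C (x : A) ^ m = 1 := by
    rw [← mul_pow, C_inv_mul_C, one_pow]
  have h_sq : ((x ^ (-2 : ℤ) : Aˣ) : A) = (↑x⁻¹ : A) ^ 2 := by
    rw [← Units.val_pow_eq_pow_val]
    congr 1
  rw [zpow_neg_one, h_sq, map_pow]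
  linear_combination Polynomial.C (↑x⁻¹ : A) ^ (n + 2) * h_coeff -
    Polynomial.C (↑x⁻¹ : A) * h_inv (n + 1) +
    PowerSeries.coeff n (gradedEval (affinePoint x z) a) * h_inv (n + 2)

lemma coord_mul_pow_notMem (k : Type*) [Field k] (n : ℕ) :
    (coord k 0 * coord k 1) ^ n ∉ Ideal.span {coord k 0 ^ (n + 1), coord k 1 ^ (n + 1)} := by
  intro h
  cases n with
  | zero =>
    refine (IsLocalRing.maximalIdeal.isMaximal (LyubeznikRing k)).ne_top <|
      (Ideal.eq_top_iff_one _).2 ((Ideal.span_le.2 (Set.pair_subset ?_ ?_) :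
        Ideal.span _ ≤ IsLocalRing.maximalIdeal (LyubeznikRing k)) (by simpa using h))
    · simpa using coord_mem_maximalIdeal k 0
    · simpa using coord_mem_maximalIdeal k 1
  | succ n =>
    obtain ⟨a, b, hab⟩ := Ideal.mem_span_pair.1 h
    obtain ⟨a, rfl⟩ := Ideal.Quotient.mk_surjective a
    obtain ⟨b, rfl⟩ := Ideal.Quotient.mk_surjective b
    refine mul_pow_succ_sub_notMem (fermatRoot_cube k)
      (linearIndependent_fermatUnit_zpow_mul_fermatRoot_pow k) n a b (Ideal.Quotient.eq.1 ?_)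
    simp only [map_add, map_mul, map_pow]
    rw [mul_comm _ (Ideal.Quotient.mk _ a), mul_comm _ (Ideal.Quotient.mk _ b)]
    exact hab.symm

end NotMem

theorem nontrivial_localCohomology_xyzIdeal_two (k : Type*) [Field k] :
    Nontrivial ((localCohomology (xyzIdeal k) 2).obj (ModuleCat.of (LyubeznikRing k)
      (LyubeznikRing k))) := by
  have h₀ : coord k 0 ∈ xyzIdeal k := Ideal.subset_span (by simp)
  have h₁ : coord k 1 ∈ xyzIdeal k := Ideal.subset_span (by simp)
  refine nontrivial_localCohomology_two h₀ h₁ ?_ ?_ (coord_mul_pow_notMem k)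
  · exact xyzIdeal_le_radical (Ideal.le_radical (Ideal.subset_span (by simp)))
      (Ideal.le_radical (Ideal.subset_span (by simp)))
  · exact ((RingTheory.Sequence.isRegular_cons_iff _ _ _).1 (isRegular_coord k)).1

end Lyubeznik

open Lyubeznik in
theorem lyubeznik_counterexample_general (k : Type*) [Field k] [CharZero k] :
    (∀ P : PrimeSpectrum (LyubeznikRing k), Order.height P = 1 →
      ¬ (xyzIdeal k ⊔ P.asIdeal).radical.IsMaximal) ∧
    Nontrivial ((localCohomology (xyzIdeal k) 2).obj
      (ModuleCat.of (LyubeznikRing k) (LyubeznikRing k))) := by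
  refine ⟨fun P hP h_max ↦ ?_, nontrivial_localCohomology_xyzIdeal_two k⟩
  exact not_maximalIdeal_le_radical_xyzIdeal_sup (P.height_eq_orderHeight.trans hP)
    (IsLocalRing.eq_maximalIdeal h_max).ge

/-- Let `R = ℂ[[x,y,z,u,v]]/(x³+y³+z³, z²−ux−vy)` and
`I = (x,y,z)R`. Then: (1) for every prime `P` of `R` of height `1`, the radical of
`I + P` is not the maximal ideal of the local ring `R` (equivalently, is not a maximal
ideal); and (2) `H²_I(R) ≠ 0`. This answers Lyubeznik's question negatively. -/
theorem lyubeznik_counterexample :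
    let x : MvPowerSeries (Fin 5) ℂ := X 0
    let y : MvPowerSeries (Fin 5) ℂ := X 1
    let z : MvPowerSeries (Fin 5) ℂ := X 2
    let u : MvPowerSeries (Fin 5) ℂ := X 3
    let v : MvPowerSeries (Fin 5) ℂ := X 4
    let J : Ideal (MvPowerSeries (Fin 5) ℂ) := Ideal.span
      {x ^ 3 + y ^ 3 + z ^ 3, z ^ 2 - u * x - v * y}
    let R := MvPowerSeries (Fin 5) ℂ ⧸ J
    let I : Ideal R := Ideal.span
      {Ideal.Quotient.mk J x, Ideal.Quotient.mk J y, Ideal.Quotient.mk J z}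
    (∀ P : PrimeSpectrum R, Order.height P = 1 →
      ¬ (I ⊔ P.asIdeal).radical.IsMaximal) ∧
    Nontrivial ((localCohomology I 2).obj (ModuleCat.of R R)) :=
  lyubeznik_counterexample_general ℂ
end

section
/- Assume that for every complete local Noetherian domain (R,m) of mixed characteristic p and Krull dimension d admitting a system of parameters of the form p, x_2, …, x_d, and for every n ≥ 1, the image in R̄ = R/pR of the ideal (x_2,…,x_d)R :_R p^n is contained in the tight closure ((x_2,…,x_d)R̄)^* computed in the characteristic-p ring R̄. Then the Monomial Conjecture holds: for every complete local Noetherian domain R of mixed characteristic, every system of parameters x_1,…,x_d of R, and every integer t ≥ 1, (x_1⋯x_d)^{t−1} ∉ (x_1^t,…,x_d^t)R. -/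
open scoped BigOperators

universe u

/-- `u` lies in the tight closure of the ideal `J` in the ring `T` of
prime characteristic `p`. -/
def MemTightClosure (T : Type u) [CommRing T] (p : ℕ) (J : Ideal T) (u : T) : Prop :=
  ∃ c : T, (∀ P ∈ minimalPrimes T, c ∉ P) ∧
    ∀ e : ℕ, c * u ^ p ^ e ∈ Ideal.span ((fun a => a ^ p ^ e) '' (J : Set T))

/-!
Adjoin `w i = x i / Z` to the complete local ring `R`, where `Z` is a new variable: concretely,
pass to a complete local domain `B`, a quotient of `R⟦W⟧⟦Z⟧` in which `x i = Z * w i`, `p` is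
nonzero, and which still maps onto `k⟦X⟧` by `Z ↦ 0`, `w i ↦ X i`. Such a quotient exists because
parameters are analytically independent modulo the maximal ideal. A relation
`(∏ x i) ^ (t - 1) ∈ (x i ^ t)` becomes `Z ^ K * (∏ w i) ^ (t - 1) ∈ (w i ^ t)`. Since `Z` divides
a power of `p`, after deforming `w i ^ t` to `w i ^ t + Z ^ E i` so as to get parameters together
with `p`, colon capturing applies and puts `(∏ X i) ^ (t - 1)` into the tight closure of
`(X i ^ t)` in `k⟦X⟧`. But ideals of the regular ring `k⟦X⟧` generated by powers of the variables
are tightly closed.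
-/

open IsLocalRing

section AdicCompleteness

theorem isPrecomplete_iff_exists_sub_mem {A : Type*} [CommRing A] (I : Ideal A) :
    IsPrecomplete I A ↔ ∀ f : ℕ → A, (∀ m n, m ≤ n → f m - f n ∈ I ^ m) →
      ∃ L, ∀ n, f n - L ∈ I ^ n := by
  simp only [isPrecomplete_iff, smul_eq_mul, Ideal.mul_top, SModEq.sub_mem]

theorem isPrecomplete_map_of_surjective {A B : Type*} [CommRing A] [CommRing B] {f : A →+* B}
    (hf : Function.Surjective f) (I : Ideal A) [IsPrecomplete I A] :
    IsPrecomplete (I.map f) B := by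
  algebraize [f]
  have hmap : Function.Surjective (AdicCompletion.map I (Algebra.linearMap A B)) :=
    AdicCompletion.map_surjective I hf
  refine IsPrecomplete.map_algebraMap_iff.2 (AdicCompletion.of_surjective_iff.1 fun y => ?_)
  obtain ⟨x, rfl⟩ := hmap y
  obtain ⟨a, rfl⟩ := AdicCompletion.of_surjective I A x
  exact ⟨Algebra.linearMap A B a, (AdicCompletion.map_of I _ a).symm⟩

variable {σ A : Type*} [CommRing A]

theorem coeff_mem_pow_of_mem_comap_constantCoeff_pow {I : Ideal A} {k : ℕ}
    {f : MvPowerSeries σ A} (hf : f ∈ I.comap MvPowerSeries.constantCoeff ^ k) (d : σ →₀ ℕ) :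
    MvPowerSeries.coeff d f ∈ I ^ (k - d.degree) := by
  classical
  induction k generalizing f d with
  | zero => simp only [Nat.zero_sub, pow_zero, Ideal.one_eq_top, Submodule.mem_top]
  | succ k ih =>
    rw [pow_succ] at hf
    induction hf using Submodule.mul_induction_on' with
    | add f _ g _ hf hg => rw [map_add]; exact Ideal.add_mem _ hf hg
    | mem_mul_mem f hf g hg =>
      rw [MvPowerSeries.coeff_mul]
      refine Ideal.sum_mem _ fun ⟨i, j⟩ hij => ?_
      have hdeg : i.degree + j.degree = d.degree := by
        rw [← Finsupp.degree.map_add, Finset.HasAntidiagonal.mem_antidiagonal.1 hij]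
      rcases eq_or_ne j 0 with rfl | hj
      · refine Ideal.pow_le_pow_right ?_
          (pow_succ I (k - i.degree) ▸ Ideal.mul_mem_mul (ih hf i) hg)
        rw [Finsupp.degree.map_zero] at hdeg
        lia
      · refine Ideal.mul_mem_right _ _ (Ideal.pow_le_pow_right ?_ (ih hf i))
        have := (Finsupp.degree_eq_zero_iff j).not.2 hj
        lia

theorem span_range_X_le_comap_constantCoeff (I : Ideal A) :
    Ideal.span (Set.range MvPowerSeries.X) ≤
      I.comap (MvPowerSeries.constantCoeff (σ := σ) (R := A)) := by
  rw [Ideal.span_le]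
  rintro _ ⟨i, rfl⟩
  simp only [SetLike.mem_coe, Ideal.mem_comap, MvPowerSeries.constantCoeff_X, zero_mem]

theorem coe_mem_span_range_X_pow {k : ℕ} {F : MvPolynomial σ A}
    (hF : F ∈ MvPolynomial.idealOfVars σ A ^ k) :
    (F : MvPowerSeries σ A) ∈ Ideal.span (Set.range MvPowerSeries.X) ^ k := by
  have := Ideal.mem_map_of_mem MvPolynomial.coeToMvPowerSeries.ringHom hF
  rwa [Ideal.map_pow, MvPolynomial.idealOfVars, Ideal.map_span, ← Set.range_comp,
    show MvPolynomial.coeToMvPowerSeries.ringHom ∘ MvPolynomial.X = MvPowerSeries.X from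
      funext (MvPolynomial.coe_X (R := A))] at this

theorem comap_constantCoeff_maximalIdeal [IsLocalRing A] :
    (maximalIdeal A).comap MvPowerSeries.constantCoeff = maximalIdeal (MvPowerSeries σ A) := by
  ext f
  simp only [Ideal.mem_comap, mem_maximalIdeal, mem_nonunits_iff,
    MvPowerSeries.isUnit_iff_constantCoeff]

variable [Finite σ]

theorem sub_truncTotal_mem_span_range_X_pow (k : ℕ) (f : MvPowerSeries σ A) :
    f - MvPowerSeries.truncTotal k f ∈ Ideal.span (Set.range MvPowerSeries.X) ^ k := by
  obtain ⟨L, hL⟩ := (isPrecomplete_iff_exists_sub_mem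
    (Ideal.span (Set.range (MvPowerSeries.X (σ := σ) (R := A))))).1 inferInstance
    (fun n => MvPowerSeries.truncTotal n f) fun m n hmn => by
      rw [← MvPolynomial.coeToMvPowerSeries.ringHom_apply,
        ← MvPolynomial.coeToMvPowerSeries.ringHom_apply, ← map_sub]
      exact coe_mem_span_range_X_pow
        (MvPowerSeries.truncTotal_sub_truncTotal_mem_pow_idealOfVars le_rfl hmn f)
  obtain rfl : f = L := by
    ext d
    have hd := coeff_mem_pow_of_mem_comap_constantCoeff_pow
      (Ideal.pow_right_mono (span_range_X_le_comap_constantCoeff ⊥) _ (hL (d.degree + 1))) d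
    rwa [Nat.add_sub_cancel_left, pow_one, Ideal.mem_bot, map_sub, MvPolynomial.coeff_coe,
      MvPowerSeries.coeff_truncTotal _ (Nat.lt_succ_self _), sub_eq_zero] at hd
  rw [← neg_sub]
  exact neg_mem (hL k)

theorem mem_comap_constantCoeff_pow_of_coeff_mem {I : Ideal A} {k : ℕ}
    {f : MvPowerSeries σ A} (hf : ∀ d, MvPowerSeries.coeff d f ∈ I ^ (k - d.degree)) :
    f ∈ I.comap MvPowerSeries.constantCoeff ^ k := by
  have hX := span_range_X_le_comap_constantCoeff (σ := σ) I
  have hC : I.map MvPowerSeries.C ≤ I.comap (MvPowerSeries.constantCoeff (σ := σ)) := by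
    rw [Ideal.map_le_iff_le_comap, Ideal.comap_comap, MvPowerSeries.constantCoeff_comp_C,
      Ideal.comap_id]
  rw [← sub_add_cancel f (MvPowerSeries.truncTotal k f)]
  refine add_mem (Ideal.pow_right_mono hX k (sub_truncTotal_mem_span_range_X_pow k f)) ?_
  rw [(MvPowerSeries.truncTotal k f).as_sum, ← MvPolynomial.coeToMvPowerSeries.ringHom_apply,
    map_sum]
  refine Ideal.sum_mem _ fun d hd => ?_
  have hdk : d.degree < k := by
    by_contra! hkd
    exact MvPolynomial.mem_support_iff.1 hd (MvPowerSeries.coeff_truncTotal_eq_zero _ hkd)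
  rw [MvPowerSeries.coeff_truncTotal _ hdk, ← mul_one (MvPowerSeries.coeff d f),
    ← MvPolynomial.C_mul_monomial, map_mul, MvPolynomial.coeToMvPowerSeries.ringHom_apply,
    MvPolynomial.coeToMvPowerSeries.ringHom_apply, MvPolynomial.coe_C, ← Nat.sub_add_cancel hdk.le,
    pow_add]
  have hCd := Ideal.mem_map_of_mem (MvPowerSeries.C (σ := σ)) (hf d)
  rw [Ideal.map_pow] at hCd
  exact Ideal.mul_mem_mul (Ideal.pow_right_mono hC _ hCd) (Ideal.pow_right_mono hX _
    (coe_mem_span_range_X_pow (MvPolynomial.pow_idealOfVars_eq_span (R := A) d.degree ▸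
      Ideal.subset_span ⟨d, rfl, rfl⟩)))

theorem mem_span_range_X_of_constantCoeff_eq_zero {f : MvPowerSeries σ A}
    (hf : MvPowerSeries.constantCoeff f = 0) : f ∈ Ideal.span (Set.range MvPowerSeries.X) := by
  have htrunc : MvPowerSeries.truncTotal 1 f = 0 := by
    ext d
    rw [MvPowerSeries.coeff_truncTotal_eq_ite, MvPolynomial.coeff_zero, ite_eq_right_iff,
      Nat.lt_one_iff, Finsupp.degree_eq_zero_iff]
    rintro rfl
    exact hf
  simpa only [htrunc, MvPolynomial.coe_zero, sub_zero, pow_one] using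
    sub_truncTotal_mem_span_range_X_pow 1 f

theorem isPrecomplete_comap_constantCoeff (I : Ideal A) [IsPrecomplete I A] :
    IsPrecomplete (I.comap (MvPowerSeries.constantCoeff (σ := σ))) (MvPowerSeries σ A) := by
  have hA := (isPrecomplete_iff_exists_sub_mem I).1 inferInstance
  refine (isPrecomplete_iff_exists_sub_mem _).2 fun f hf => ?_
  obtain ⟨L, hL⟩ : ∃ L : MvPowerSeries σ A, ∀ d n,
      (f (n + d.degree)).coeff d - L.coeff d ∈ I ^ n := by
    refine Classical.skolem.1 fun d => hA _ fun m n hmn => ?_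
    simpa only [map_sub, Nat.add_sub_cancel] using
      coeff_mem_pow_of_mem_comap_constantCoeff_pow (hf _ _ (Nat.add_le_add_right hmn d.degree)) d
  refine ⟨L, fun n => mem_comap_constantCoeff_pow_of_coeff_mem fun d => ?_⟩
  have hn := coeff_mem_pow_of_mem_comap_constantCoeff_pow
    (hf n (n - d.degree + d.degree) (by lia)) d
  simpa only [map_sub, sub_add_sub_cancel] using add_mem hn (hL d (n - d.degree))

instance [IsLocalRing A] [IsPrecomplete (maximalIdeal A) A] :
    IsPrecomplete (maximalIdeal (MvPowerSeries σ A)) (MvPowerSeries σ A) :=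
  comap_constantCoeff_maximalIdeal (σ := σ) (A := A) ▸ isPrecomplete_comap_constantCoeff _

instance [IsLocalRing A] [IsPrecomplete (maximalIdeal A) A] :
    IsPrecomplete (maximalIdeal (PowerSeries A)) (PowerSeries A) :=
  inferInstanceAs (IsPrecomplete (maximalIdeal (MvPowerSeries Unit A)) (MvPowerSeries Unit A))

end AdicCompleteness

section Dimension

theorem ringKrullDim_le_card_of_radical_span_eq {B : Type*} [CommRing B] [IsNoetherianRing B]
    [IsLocalRing B] {T : Finset B}
    (hT : (Ideal.span (T : Set B)).radical = maximalIdeal B) : ringKrullDim B ≤ T.card := by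
  have hmin : maximalIdeal B ∈ (Ideal.span (T : Set B)).minimalPrimes := by
    rw [← Ideal.radical_minimalPrimes, hT, Ideal.minimalPrimes_eq_subsingleton_self]
    exact Set.mem_singleton _
  rw [← maximalIdeal_height_eq_ringKrullDim]
  exact_mod_cast Ideal.height_le_card_of_mem_minimalPrimes_span_finset hmin

theorem ringKrullDim_quotient_le_card_of_radical_sup_span_eq {B : Type*} [CommRing B]
    [IsNoetherianRing B] [IsLocalRing B] {I : Ideal B} {T : Finset B}
    (hT : (I ⊔ Ideal.span (T : Set B)).radical = maximalIdeal B) :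
    ringKrullDim (B ⧸ I) ≤ T.card := by
  classical
  have hmk : Function.Surjective (Ideal.Quotient.mk I) := Ideal.Quotient.mk_surjective
  have hI : I ≤ maximalIdeal B := (le_sup_left.trans Ideal.le_radical).trans hT.le
  have := Ideal.Quotient.nontrivial_iff.2 (hI.trans_lt (maximalIdeal.isMaximal B).ne_top.lt_top).ne
  have := IsLocalRing.of_surjective' _ hmk
  refine (ringKrullDim_le_card_of_radical_span_eq (T := T.image (Ideal.Quotient.mk I))
    (Ideal.comap_injective_of_surjective _ hmk ?_)).trans (mod_cast Finset.card_image_le)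
  rw [Finset.coe_image, ← Ideal.map_span, Ideal.comap_radical, Ideal.comap_map_quotientMk, hT,
    eq_maximalIdeal (Ideal.comap_isMaximal_of_surjective _ hmk)]

theorem ringKrullDim_quotient_add_one_le {B : Type*} [CommRing B] {q r : Ideal B} [q.IsPrime]
    (hqr : q < r) : ringKrullDim (B ⧸ r) + 1 ≤ ringKrullDim (B ⧸ q) := by
  obtain ⟨y, hyr, hyq⟩ := Set.exists_of_ssubset hqr
  refine ringKrullDim_succ_le_of_surjective (Ideal.Quotient.factor hqr.le)
    (Ideal.Quotient.factor_surjective hqr.le) (r := Ideal.Quotient.mk q y) ?_ ?_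
  · rwa [mem_nonZeroDivisors_iff_ne_zero, Ne, Ideal.Quotient.eq_zero_iff_mem]
  · rwa [Ideal.Quotient.factor_mk, Ideal.Quotient.eq_zero_iff_mem]

theorem natCast_le_ringKrullDim_mvPowerSeries (n : ℕ) (A : Type*) [CommRing A] [Nontrivial A] :
    (n : WithBot ℕ∞) ≤ ringKrullDim (MvPowerSeries (Fin n) A) := by
  induction n with
  | zero => exact ringKrullDim_nonneg_of_nontrivial
  | succ n ih =>
    rw [ringKrullDim_eq_of_ringEquiv (MvPowerSeries.finSuccEquiv A n).toRingEquiv, Nat.cast_succ]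
    exact (add_le_add_left ih 1).trans ringKrullDim_succ_le_ringKrullDim_powerseries

theorem ker_mem_minimalPrimes_of_ringKrullDim_le {T C : Type*} [CommRing T] [CommRing C]
    [IsDomain C] {n : ℕ} (hT : ringKrullDim T ≤ n) (hC : n ≤ ringKrullDim C) {f : T →+* C}
    (hf : Function.Surjective f) : RingHom.ker f ∈ minimalPrimes T := by
  refine ⟨⟨RingHom.ker_isPrime f, bot_le⟩, fun q ⟨hq, _⟩ hqf => ?_⟩
  by_contra hfq
  have hdrop := ringKrullDim_quotient_add_one_le (lt_of_le_not_ge hqf hfq)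
  rw [ringKrullDim_eq_of_ringEquiv (RingHom.quotientKerEquivOfSurjective hf)] at hdrop
  have hle : (n : WithBot ℕ∞) + 1 ≤ n :=
    (add_le_add_left hC 1).trans (hdrop.trans ((ringKrullDim_quotient_le q).trans hT))
  exact absurd hle (by exact_mod_cast n.lt_irrefl)

end Dimension

section ParameterDeformation

theorem subsingleton_setOf_add_pow_mem {B : Type*} [CommRing B] [IsLocalRing B] {Z : B}
    (hZ : Z ∈ maximalIdeal B) (b : B) {q : Ideal B} [hq : q.IsPrime] (hZq : Z ∉ q) :
    {e : ℕ | b + Z ^ e ∈ q}.Subsingleton := by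
  intro e he e' he'
  by_contra hne
  wlog hlt : e < e' generalizing e e'
  · exact this he' he (Ne.symm hne) (by lia)
  have hdvd : Z ^ e * (1 - Z ^ (e' - e)) ∈ q := by
    rw [mul_sub, mul_one, ← pow_add, Nat.add_sub_cancel' hlt.le,
      ← add_sub_add_left_eq_sub _ _ b]
    exact Ideal.sub_mem q he he'
  have hunit : IsUnit (1 - Z ^ (e' - e)) :=
    isUnit_one_sub_self_of_mem_nonunits _ (Ideal.pow_mem_of_mem _ hZ _ (Nat.sub_pos_of_lt hlt))
  exact hZq (hq.mem_of_pow_mem _ ((Ideal.mul_unit_mem_iff_mem q hunit).1 hdvd))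

theorem exists_lt_forall_add_pow_notMem {B : Type*} [CommRing B] [IsLocalRing B] {Z : B}
    (hZ : Z ∈ maximalIdeal B) (b : B) (K : ℕ) {M : Set (Ideal B)} (hM : M.Finite)
    (hprime : ∀ q ∈ M, q.IsPrime) :
    ∃ e, K < e ∧ ∀ q ∈ M, Z ∉ q → b + Z ^ e ∉ q := by
  have hfinite : (⋃ q ∈ {q ∈ M | Z ∉ q}, {e : ℕ | b + Z ^ e ∈ q}).Finite := by
    refine (hM.sep _).biUnion fun q ⟨hqM, hZq⟩ => ?_
    have := hprime q hqM
    exact (subsingleton_setOf_add_pow_mem hZ b hZq).finite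
  obtain ⟨e, he, hKe⟩ := hfinite.infinite_compl.exists_gt K
  refine ⟨e, hKe, fun q hqM hZq hmem => he ?_⟩
  exact Set.mem_biUnion (show q ∈ {q ∈ M | Z ∉ q} from ⟨hqM, hZq⟩) hmem

variable {B ι : Type*} [CommRing B] [IsNoetherianRing B] [IsLocalRing B]
  {Z : B} {v : ι → B}

/-- If `Z ∈ r`, the elements `v i + Z ^ E i` of `r` are congruent to `v i`, so only the remaining
`v j` are needed to generate `r` up to radical. -/
theorem ringKrullDim_quotient_add_card_le_of_mem [Fintype ι]
    (hrad : (Ideal.span (insert Z (Set.range v))).radical = maximalIdeal B) {r : Ideal B}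
    [hr : r.IsPrime] (hZ : Z ∈ r) {E : ι → ℕ} (hE : ∀ i, 0 < E i) {s : Finset ι}
    (hs : ∀ i ∈ s, v i + Z ^ E i ∈ r) :
    ringKrullDim (B ⧸ r) + s.card ≤ Fintype.card ι := by
  classical
  have hv : ∀ i ∈ s, v i ∈ r := fun i hi =>
    (Ideal.add_mem_iff_left r (Ideal.pow_mem_of_mem r hZ _ (hE i))).1 (hs i hi)
  have hm : (r ⊔ Ideal.span ((sᶜ.image v : Finset B) : Set B)).radical = maximalIdeal B := by
    have hZv : Ideal.span (insert Z (Set.range v)) ≤ maximalIdeal B := hrad ▸ Ideal.le_radical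
    refine le_antisymm ((maximalIdeal.isMaximal B).isPrime.radical_le_iff.2 (sup_le
      (le_maximalIdeal hr.ne_top) ((Ideal.span_mono ?_).trans hZv)))
      (hrad ▸ Ideal.radical_mono (Ideal.span_le.2 ?_))
    · rw [Finset.coe_image]
      exact (Set.image_subset_range _ _).trans (Set.subset_insert _ _)
    · rintro _ (rfl | ⟨i, rfl⟩)
      · exact Ideal.mem_sup_left hZ
      · by_cases hi : i ∈ s
        · exact Ideal.mem_sup_left (hv i hi)
        · exact Ideal.mem_sup_right (Ideal.subset_span
            (Finset.mem_coe.2 (Finset.mem_image_of_mem v (Finset.mem_compl.2 hi))))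
  refine (add_le_add_left (ringKrullDim_quotient_le_card_of_radical_sup_span_eq hm) _).trans ?_
  rw [← Finset.card_compl_add_card s]
  exact_mod_cast Nat.add_le_add_right Finset.card_image_le _

theorem ringKrullDim_le_card_add_one_of_radical_span_insert_eq [Fintype ι]
    (hrad : (Ideal.span (insert Z (Set.range v))).radical = maximalIdeal B) :
    ringKrullDim B ≤ Fintype.card ι + 1 := by
  classical
  have hB : ringKrullDim B ≤ (insert Z (Finset.univ.image v)).card :=
    ringKrullDim_le_card_of_radical_span_eq (by
      rwa [Finset.coe_insert, Finset.coe_image, Finset.coe_univ, Set.image_univ])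
  have hcard : (insert Z (Finset.univ.image v)).card ≤ Fintype.card ι + 1 :=
    (Finset.card_insert_le _ _).trans (Nat.add_le_add_right Finset.card_image_le 1)
  exact hB.trans (mod_cast hcard)

theorem ringKrullDim_quotient_le_card_of_mem_nonZeroDivisors [Fintype ι]
    (hrad : (Ideal.span (insert Z (Set.range v))).radical = maximalIdeal B) {a : B}
    (ha : a ∈ nonZeroDivisors B) {q : Ideal B} (haq : a ∈ q) :
    ringKrullDim (B ⧸ q) ≤ Fintype.card ι :=
  ENat.WithBot.add_le_add_one_right_iff.1
    ((ringKrullDim_succ_le_of_surjective (Ideal.Quotient.mk q) Ideal.Quotient.mk_surjective ha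
      (Ideal.Quotient.eq_zero_iff_mem.2 haq)).trans
        (ringKrullDim_le_card_add_one_of_radical_span_insert_eq hrad))

theorem exists_exponents_forall_ringKrullDim_quotient_add_card_le [Fintype ι]
    (hrad : (Ideal.span (insert Z (Set.range v))).radical = maximalIdeal B) {a : B}
    (ha : a ∈ nonZeroDivisors B) (K : ℕ) (s : Finset ι) :
    ∃ E : ι → ℕ, (∀ i, K < E i) ∧ ∀ q : Ideal B, q.IsPrime → a ∈ q →
      (∀ i ∈ s, v i + Z ^ E i ∈ q) →
      ringKrullDim (B ⧸ q) + s.card ≤ Fintype.card ι := by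
  classical
  have hZ : Z ∈ maximalIdeal B :=
    hrad ▸ Ideal.le_radical (Ideal.subset_span (Set.mem_insert _ _))
  induction s using Finset.induction_on with
  | empty =>
    refine ⟨fun _ => K + 1, fun _ => K.lt_succ_self, fun q _ haq _ => ?_⟩
    rw [Finset.card_empty, Nat.cast_zero, add_zero]
    exact ringKrullDim_quotient_le_card_of_mem_nonZeroDivisors hrad ha haq
  | insert i s his ih =>
    obtain ⟨E, hKE, hdim⟩ := ih
    let Q : Ideal B := Ideal.span (insert a ((fun j => v j + Z ^ E j) '' s))
    have hQ : ∀ q, Q ≤ q ↔ a ∈ q ∧ ∀ j ∈ s, v j + Z ^ E j ∈ q := fun q => by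
      rw [Ideal.span_le, Set.insert_subset_iff, Set.image_subset_iff]
      rfl
    obtain ⟨e, hKe, he⟩ := exists_lt_forall_add_pow_notMem hZ (v i) K
      (Ideal.finite_minimalPrimes_of_isNoetherianRing B Q) fun q hq => hq.1.1
    have hKE' : ∀ j, K < Function.update E i e j :=
      Function.forall_update_iff E (fun _ x => K < x) |>.2 ⟨hKe, fun j _ => hKE j⟩
    refine ⟨Function.update E i e, hKE', fun r hr har hmem => ?_⟩
    by_cases hZr : Z ∈ r
    · exact ringKrullDim_quotient_add_card_le_of_mem hrad hZr
        (fun j => (Nat.zero_le K).trans_lt (hKE' j)) hmem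
    obtain ⟨hi, hs⟩ := Finset.forall_mem_insert .. |>.1 hmem
    rw [Function.update_self] at hi
    have hs : ∀ j ∈ s, v j + Z ^ E j ∈ r := fun j hj => by
      simpa only [Function.update_of_ne (ne_of_mem_of_not_mem hj his)] using hs j hj
    obtain ⟨q, hqQ, hqr⟩ := Ideal.exists_minimalPrimes_le ((hQ r).2 ⟨har, hs⟩)
    have := hqQ.1.1
    have hlt : q < r := lt_of_le_of_ne hqr fun h => he q hqQ (h ▸ hZr) (h ▸ hi)
    obtain ⟨haq, hsq⟩ := (hQ q).1 hqQ.1.2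
    calc ringKrullDim (B ⧸ r) + (insert i s).card = ringKrullDim (B ⧸ r) + 1 + s.card := by
          rw [Finset.card_insert_of_notMem his, Nat.cast_succ, add_assoc, add_comm 1]
      _ ≤ ringKrullDim (B ⧸ q) + s.card :=
          add_le_add_left (ringKrullDim_quotient_add_one_le hlt) _
      _ ≤ Fintype.card ι := hdim q hqQ.1.1 haq hsq

theorem exists_exponents_radical_span_add_pow_eq [Finite ι]
    (hrad : (Ideal.span (insert Z (Set.range v))).radical = maximalIdeal B) {a : B}
    (ha : a ∈ nonZeroDivisors B) (ham : a ∈ maximalIdeal B) (K : ℕ) :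
    ∃ E : ι → ℕ, (∀ i, K < E i) ∧
      (Ideal.span (insert a (Set.range fun i => v i + Z ^ E i))).radical = maximalIdeal B := by
  cases nonempty_fintype ι
  obtain ⟨E, hKE, hdim⟩ :=
    exists_exponents_forall_ringKrullDim_quotient_add_card_le hrad ha K Finset.univ
  have hZv : Ideal.span (insert Z (Set.range v)) ≤ maximalIdeal B := hrad ▸ Ideal.le_radical
  refine ⟨E, hKE, le_antisymm ((maximalIdeal.isMaximal B).isPrime.radical_le_iff.2
    (Ideal.span_le.2 ?_)) ?_⟩
  · rintro _ (rfl | ⟨i, rfl⟩)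
    · exact ham
    · exact add_mem (hZv (Ideal.subset_span (Set.mem_insert_of_mem _ ⟨i, rfl⟩)))
        (Ideal.pow_mem_of_mem _ (hZv (Ideal.subset_span (Set.mem_insert _ _))) _
          ((Nat.zero_le K).trans_lt (hKE i)))
  · rw [Ideal.radical_eq_sInf]
    refine le_sInf fun q ⟨hq, hqprime⟩ => ?_
    have hdim0 := hdim q hqprime (hq (Ideal.subset_span (Set.mem_insert _ _)))
      fun i _ => hq (Ideal.subset_span (Set.mem_insert_of_mem _ ⟨i, rfl⟩))
    have : Ring.KrullDimLE 0 (B ⧸ q) := Ring.krullDimLE_iff.2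
      (ENat.WithBot.add_le_add_natCast_right_iff.1 (hdim0.trans_eq (zero_add _).symm))
    exact (eq_maximalIdeal
      (Ideal.Quotient.maximal_of_isField q Ring.KrullDimLE.isField_of_isDomain)).ge

end ParameterDeformation

section AnalyticIndependence

theorem eval_const_mul_of_isHomogeneous {σ L : Type*} [CommRing L] {F : MvPolynomial σ L} {N : ℕ}
    (hF : F.IsHomogeneous N) (c : L) (w : σ → L) :
    MvPolynomial.eval (fun i => c * w i) F = c ^ N * MvPolynomial.eval w F := by
  rw [MvPolynomial.eval_eq, MvPolynomial.eval_eq, Finset.mul_sum]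
  refine Finset.sum_congr rfl fun d hd => ?_
  simp only [mul_pow, Finset.prod_mul_distrib]
  rw [Finset.prod_pow_eq_pow_sum, ← hF.degree_eq_sum_deg_support hd, mul_left_comm]

theorem eval_mem_span_range_pow_of_isHomogeneous {σ L : Type*} [CommRing L]
    {F : MvPolynomial σ L} {N : ℕ} (hF : F.IsHomogeneous N) (x : σ → L) :
    MvPolynomial.eval x F ∈ Ideal.span (Set.range x) ^ N :=
  (Ideal.mem_span_pow_iff_exists_isHomogeneous x _).2 ⟨F, hF, rfl⟩

theorem sup_pow_le_sup_pow {L : Type*} [CommRing L] (J A : Ideal L) (N : ℕ) :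
    (J ⊔ A) ^ N ≤ J ⊔ A ^ N := by
  rw [← Ideal.comap_map_quotientMk J (A ^ N), ← Ideal.map_le_iff_le_comap, Ideal.map_pow,
    Ideal.map_sup, Ideal.map_quotient_self, bot_sup_eq, Ideal.map_pow]

-- `v j` being a unit, `I = J + (X j)`. Modulo `J`, the value of `F` at `v j * X` and its value at
-- `X j * v` agree, so homogeneity puts `X j ^ N` in `J + m I ^ N` and Nakayama's lemma applies.
theorem span_range_pow_le_span_range_mul_sub_mul {ι L : Type*} [CommRing L] [IsNoetherianRing L]
    [IsLocalRing L] {N : ℕ} {X v : ι → L} {F : MvPolynomial ι L} (hF : F.IsHomogeneous N)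
    (hFX : MvPolynomial.eval X F ∈ maximalIdeal L * Ideal.span (Set.range X) ^ N)
    (hFv : IsUnit (MvPolynomial.eval v F)) {j : ι} (hj : IsUnit (v j)) :
    Ideal.span (Set.range X) ^ N ≤ Ideal.span (Set.range fun i => v j * X i - v i * X j) := by
  set I := Ideal.span (Set.range X)
  set J := Ideal.span (Set.range fun i => v j * X i - v i * X j)
  have hJ (i : ι) : v j * X i - v i * X j ∈ J := Ideal.subset_span ⟨i, rfl⟩
  have hIJ : I ≤ J ⊔ Ideal.span {X j} := by
    refine Ideal.span_le.2 ?_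
    rintro _ ⟨i, rfl⟩
    refine (Ideal.unit_mul_mem_iff_mem _ hj).1 ?_
    rw [← sub_add_cancel (v j * X i) (v i * X j)]
    exact Submodule.add_mem_sup (hJ i) (Ideal.mul_mem_left _ _ (Ideal.mem_span_singleton_self _))
  have hdiff : v j ^ N * MvPolynomial.eval X F - X j ^ N * MvPolynomial.eval v F ∈ J := by
    rw [← eval_const_mul_of_isHomogeneous hF, ← eval_const_mul_of_isHomogeneous hF,
      ← Ideal.Quotient.eq, ← MvPolynomial.eval₂_id, ← MvPolynomial.eval₂_id,
      MvPolynomial.hom_eval₂, MvPolynomial.hom_eval₂]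
    congr 1
    funext i
    rw [Ideal.Quotient.eq, mul_comm (X j)]
    exact hJ i
  have hXj : X j ^ N ∈ J ⊔ maximalIdeal L * I ^ N := by
    refine (Ideal.mul_unit_mem_iff_mem _ hFv).1 ?_
    rw [← sub_sub_cancel (v j ^ N * MvPolynomial.eval X F) (X j ^ N * _)]
    exact Ideal.sub_mem _ (Ideal.mem_sup_right (Ideal.mul_mem_left _ _ hFX))
      (Ideal.mem_sup_left hdiff)
  refine Submodule.le_of_le_smul_of_le_jacobson_bot (IsNoetherian.noetherian _)
    (maximalIdeal_le_jacobson _) (((Ideal.pow_right_mono hIJ N).trans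
      (sup_pow_le_sup_pow J _ N)).trans (sup_le le_sup_left ?_))
  rwa [Ideal.span_singleton_pow, Ideal.span_singleton_le_iff_mem]

theorem ringKrullDim_lt_card_of_isUnit_eval {ι L : Type*} [Fintype ι] [CommRing L]
    [IsNoetherianRing L] [IsLocalRing L] {N : ℕ} {X v : ι → L}
    (hX : (Ideal.span (Set.range X)).radical = maximalIdeal L) {F : MvPolynomial ι L}
    (hF : F.IsHomogeneous N)
    (hFX : MvPolynomial.eval X F ∈ maximalIdeal L * Ideal.span (Set.range X) ^ N)
    (hFv : IsUnit (MvPolynomial.eval v F)) {j : ι} (hj : IsUnit (v j)) :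
    ringKrullDim L < Fintype.card ι := by
  classical
  set s : Finset L := (Finset.univ.erase j).image fun i => v j * X i - v i * X j
  have hXm (i : ι) : X i ∈ maximalIdeal L := hX ▸ Ideal.le_radical (Ideal.subset_span ⟨i, rfl⟩)
  have hs : Ideal.span (Set.range fun i => v j * X i - v i * X j) ≤ Ideal.span (s : Set L) := by
    refine Ideal.span_le.2 ?_
    rintro _ ⟨i, rfl⟩
    obtain rfl | hij := eq_or_ne i j
    · simp
    · exact Ideal.subset_span (Finset.mem_coe.2 (Finset.mem_image_of_mem _ (by simp [hij])))
  have hrad : (Ideal.span (s : Set L)).radical = maximalIdeal L := by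
    refine le_antisymm ((Ideal.IsPrime.radical_le_iff inferInstance).2 (Ideal.span_le.2 ?_)) ?_
    · rw [Finset.coe_image]
      rintro _ ⟨i, -, rfl⟩
      exact Ideal.sub_mem _ (Ideal.mul_mem_left _ _ (hXm i)) (Ideal.mul_mem_left _ _ (hXm j))
    · rw [← hX, Ideal.radical_le_radical_iff]
      exact fun a ha => ⟨N, hs (span_range_pow_le_span_range_mul_sub_mul hF hFX hFv hj
        (Ideal.pow_mem_pow ha N))⟩
  refine (ringKrullDim_le_card_of_radical_span_eq hrad).trans_lt (mod_cast ?_)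
  refine Finset.card_image_le.trans_lt (Finset.card_lt_card (Finset.erase_ssubset ?_))
  exact Finset.mem_univ j

theorem exists_eval_map_C_notMem {σ S : Type*} [CommRing S] (P : Ideal S) [P.IsPrime]
    {F : MvPolynomial σ S} {α : σ →₀ ℕ} (hα : F.coeff α ∉ P) :
    ∃ v : σ → Polynomial S, MvPolynomial.eval v (F.map Polynomial.C) ∉ P.map Polynomial.C := by
  set r := Polynomial.mapRingHom (Ideal.Quotient.mk P)
  have hr : Function.Surjective r := Polynomial.map_surjective _ Ideal.Quotient.mk_surjective
  have hker : RingHom.ker r = P.map Polynomial.C := by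
    rw [Polynomial.ker_mapRingHom, Ideal.mk_ker]
  have hne : (F.map Polynomial.C).map r ≠ 0 := by
    intro h0
    have hcoeff := congrArg (MvPolynomial.coeff α) h0
    rw [MvPolynomial.coeff_map, MvPolynomial.coeff_map, MvPolynomial.coeff_zero] at hcoeff
    exact hα (Ideal.Quotient.eq_zero_iff_mem.1 (by simpa [r] using hcoeff))
  obtain ⟨w, hw⟩ : ∃ w, MvPolynomial.eval w ((F.map Polynomial.C).map r) ≠ 0 := by
    by_contra! hzero
    exact hne (MvPolynomial.funext fun w => by rw [hzero, map_zero])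
  choose v hv using fun i => hr (w i)
  refine ⟨v, fun hmem => hw ?_⟩
  rw [← hker, RingHom.mem_ker] at hmem
  rw [MvPolynomial.eval_map, ← hmem, ← MvPolynomial.eval₂_id, MvPolynomial.hom_eval₂,
    RingHom.comp_id, funext hv]

-- Over the residue field `F` need not take a unit value, but after passing to `S[T]` localized at
-- `m S[T]`, which has the same dimension and an infinite residue field, it does.
theorem ringKrullDim_lt_card_of_eval_map_C_notMem {ι S : Type*} [Fintype ι] [CommRing S]
    [IsNoetherianRing S] [IsLocalRing S] {x : ι → S}
    (hx : (Ideal.span (Set.range x)).radical = maximalIdeal S) {N : ℕ} {F : MvPolynomial ι S}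
    (hF : F.IsHomogeneous N)
    (hFx : MvPolynomial.eval x F ∈ maximalIdeal S * Ideal.span (Set.range x) ^ N)
    {v : ι → Polynomial S}
    (hv : MvPolynomial.eval v (F.map Polynomial.C) ∉ (maximalIdeal S).map Polynomial.C) {j : ι}
    (hj : v j ∉ (maximalIdeal S).map Polynomial.C) : ringKrullDim S < Fintype.card ι := by
  set 𝔭 : Ideal (Polynomial S) := (maximalIdeal S).map Polynomial.C
  have h𝔭 : 𝔭.IsPrime := Ideal.isPrime_map_C_of_isPrime
  let L := Localization.AtPrime 𝔭
  let φ : S →+* L := (algebraMap (Polynomial S) L).comp Polynomial.C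
  have hunit {f : Polynomial S} (hf : f ∉ 𝔭) : IsUnit (algebraMap (Polynomial S) L f) :=
    IsLocalization.map_units L (⟨f, hf⟩ : 𝔭.primeCompl)
  have hmax : (maximalIdeal S).map φ = maximalIdeal L := by
    rw [← Ideal.map_map, Localization.AtPrime.map_eq_maximalIdeal]
  have hspan : Ideal.span (Set.range fun i => φ (x i)) = (Ideal.span (Set.range x)).map φ := by
    rw [Ideal.map_span, ← Set.range_comp, Function.comp_def]
  have hdim : ringKrullDim L = ringKrullDim S := by
    rw [IsLocalization.AtPrime.ringKrullDim_eq_height 𝔭 L, Polynomial.height_map_C,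
      maximalIdeal_height_eq_ringKrullDim]
  rw [← hdim]
  refine ringKrullDim_lt_card_of_isUnit_eval (X := fun i => φ (x i))
    (v := fun i => algebraMap _ L (v i)) ?_ (hF.map φ) ?_ ?_ (hunit hj)
  · rw [hspan]
    refine le_antisymm ((Ideal.IsPrime.radical_le_iff inferInstance).2 ?_) ?_
    · exact hmax ▸ Ideal.map_mono (hx ▸ Ideal.le_radical)
    · exact hmax ▸ hx ▸ Ideal.map_radical_le _
  · rw [hspan, ← hmax, ← Ideal.map_pow, ← Ideal.map_mul, MvPolynomial.eval_map,
      ← Function.comp_def φ x, ← MvPolynomial.eval₂_comp]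
    exact Ideal.mem_map_of_mem _ hFx
  · have hFv := hunit hv
    rwa [MvPolynomial.eval_map, MvPolynomial.hom_eval₂, ← MvPolynomial.eval_map] at hFv

theorem coeff_mem_maximalIdeal_of_eval_mem {ι S : Type*} [Fintype ι] [CommRing S]
    [IsNoetherianRing S] [IsLocalRing S] (hdim : Fintype.card ι ≤ ringKrullDim S) {x : ι → S}
    (hx : (Ideal.span (Set.range x)).radical = maximalIdeal S) {N : ℕ} {F : MvPolynomial ι S}
    (hF : F.IsHomogeneous N)
    (hFx : MvPolynomial.eval x F ∈ maximalIdeal S * Ideal.span (Set.range x) ^ N) (α : ι →₀ ℕ) :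
    F.coeff α ∈ maximalIdeal S := by
  classical
  obtain rfl | hN := eq_or_ne N 0
  · rw [MvPolynomial.totalDegree_eq_zero_iff_eq_C.1 (Nat.le_zero.1 hF.totalDegree_le)] at hFx ⊢
    rw [MvPolynomial.eval_C, pow_zero, Ideal.one_eq_top, Ideal.mul_top] at hFx
    rw [MvPolynomial.coeff_C]
    split_ifs
    exacts [hFx, zero_mem _]
  by_contra hα
  obtain ⟨v, hv⟩ := exists_eval_map_C_notMem (maximalIdeal S) hα
  obtain ⟨j, hj⟩ : ∃ j, v j ∉ (maximalIdeal S).map Polynomial.C := by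
    by_contra! hmem
    exact hv (Ideal.span_le.2 (Set.range_subset_iff.2 hmem)
      (Ideal.pow_le_self hN (eval_mem_span_range_pow_of_isHomogeneous (hF.map _) v)))
  exact (ringKrullDim_lt_card_of_eval_map_C_notMem hx hF hFx hv hj).not_ge hdim

end AnalyticIndependence

section HomogeneousEvaluation

variable {σ S : Type*} [Finite σ] [CommRing S]

/-- The homogeneous part of degree `N` of a power series in finitely many variables, as a
polynomial rather than a power series, so that it can be evaluated anywhere. -/
noncomputable def homogeneousPart (N : ℕ) : MvPowerSeries σ S →ₗ[S] MvPolynomial σ S :=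
  MvPolynomial.homogeneousComponent N ∘ₗ MvPowerSeries.truncTotal (N + 1)

theorem isHomogeneous_homogeneousPart (N : ℕ) (f : MvPowerSeries σ S) :
    (homogeneousPart N f).IsHomogeneous N :=
  MvPolynomial.homogeneousComponent_isHomogeneous N _

theorem coeff_homogeneousPart (N : ℕ) (f : MvPowerSeries σ S) (β : σ →₀ ℕ) :
    (homogeneousPart N f).coeff β = if β.degree = N then MvPowerSeries.coeff β f else 0 := by
  rw [homogeneousPart, LinearMap.comp_apply, MvPolynomial.coeff_homogeneousComponent]
  split_ifs with hβ
  · exact MvPowerSeries.coeff_truncTotal _ (hβ.trans_lt N.lt_succ_self)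
  · rfl

theorem homogeneousPart_X_mul (N : ℕ) (i : σ) (f : MvPowerSeries σ S) :
    homogeneousPart (N + 1) (MvPowerSeries.X i * f) = MvPolynomial.X i * homogeneousPart N f := by
  classical
  ext β
  rw [coeff_homogeneousPart, MvPolynomial.coeff_X_mul', coeff_homogeneousPart, MvPowerSeries.X,
    MvPowerSeries.coeff_monomial_mul, one_mul]
  simp only [Finsupp.single_le_iff, Finsupp.mem_support_iff, ← Nat.one_le_iff_ne_zero]
  by_cases hβ : 1 ≤ β i
  · have hdeg : β.degree = (β - Finsupp.single i 1).degree + 1 := by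
      conv_lhs => rw [← tsub_add_cancel_of_le (Finsupp.single_le_iff.2 hβ), map_add,
        Finsupp.degree_single]
    simp only [if_pos hβ, hdeg, Nat.add_right_cancel_iff]
  · simp only [if_neg hβ, ite_self]

/-- The value at `x` of the homogeneous part of degree `N` of a power series. -/
noncomputable def homogeneousEval (x : σ → S) (N : ℕ) : MvPowerSeries σ S →ₗ[S] S :=
  (MvPolynomial.aeval x).toLinearMap ∘ₗ homogeneousPart N

theorem homogeneousEval_mem_span_range_pow (x : σ → S) (N : ℕ) (f : MvPowerSeries σ S) :
    homogeneousEval x N f ∈ Ideal.span (Set.range x) ^ N :=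
  eval_mem_span_range_pow_of_isHomogeneous (isHomogeneous_homogeneousPart N f) x

theorem homogeneousEval_X_mul (x : σ → S) (N : ℕ) (i : σ) (f : MvPowerSeries σ S) :
    homogeneousEval x (N + 1) (MvPowerSeries.X i * f) = x i * homogeneousEval x N f := by
  simp [homogeneousEval, homogeneousPart_X_mul]

theorem homogeneousEval_C_mul (x : σ → S) (N : ℕ) (a : S) (f : MvPowerSeries σ S) :
    homogeneousEval x N (MvPowerSeries.C a * f) = a * homogeneousEval x N f := by
  rw [← MvPowerSeries.smul_eq_C_mul, map_smul, smul_eq_mul]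

end HomogeneousEvaluation

/-- Power series over `S` in variables `W i` and `Z`: here `W i` is
`PowerSeries.C (MvPowerSeries.X i)` and `Z` is `PowerSeries.X`. Modulo the relations
`Z * W i = x i` they form a completed extended Rees ring, with `Z` in the role of `t⁻¹`. -/
abbrev ReesSeries (ι S : Type*) : Type _ :=
  PowerSeries (MvPowerSeries ι S)

namespace ReesSeries

variable {ι S : Type*} [CommRing S]

/-- The ideal of `ReesSeries ι S` generated by the relations `Z * W i = x i`. -/
noncomputable def relationIdeal (x : ι → S) : Ideal (ReesSeries ι S) :=
  Ideal.span (Set.range fun i =>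
    PowerSeries.X * PowerSeries.C (MvPowerSeries.X i) - PowerSeries.C (MvPowerSeries.C (x i)))

section PartialEval

variable [Finite ι]

/-- Substituting `W i = x i / Z` formally turns an element of `ReesSeries ι S` into a Laurent
series in `Z`; this is its coefficient at `Z ^ (-N)`, truncated to the contributions of
`Z ^ 0, …, Z ^ K`. -/
noncomputable def partialEval (x : ι → S) (N K : ℕ) : ReesSeries ι S →+ S :=
  ∑ j ∈ Finset.range (K + 1), (homogeneousEval x (N + j)).toAddMonoidHom.comp
    (PowerSeries.coeff j).toAddMonoidHom

theorem partialEval_apply (x : ι → S) (N K : ℕ) (g : ReesSeries ι S) :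
    partialEval x N K g =
      ∑ j ∈ Finset.range (K + 1), homogeneousEval x (N + j) (PowerSeries.coeff j g) := by
  simp [partialEval, AddMonoidHom.finsetSum_apply]

theorem partialEval_C_mul (x : ι → S) (N K : ℕ) (a : S) (g : ReesSeries ι S) :
    partialEval x N K (PowerSeries.C (MvPowerSeries.C a) * g) = a * partialEval x N K g := by
  simp only [partialEval_apply, PowerSeries.coeff_C_mul, homogeneousEval_C_mul, Finset.mul_sum]

theorem partialEval_mul_relation (x : ι → S) (N K : ℕ) (h : ReesSeries ι S) (i : ι) :
    partialEval x N K (h * (PowerSeries.X * PowerSeries.C (MvPowerSeries.X i) -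
      PowerSeries.C (MvPowerSeries.C (x i)))) =
      -(x i * homogeneousEval x (N + K) (PowerSeries.coeff K h)) := by
  have hexpand : h * (PowerSeries.X * PowerSeries.C (MvPowerSeries.X i) -
      PowerSeries.C (MvPowerSeries.C (x i))) =
      PowerSeries.X * (PowerSeries.C (MvPowerSeries.X i) * h) -
        PowerSeries.C (MvPowerSeries.C (x i)) * h := by ring
  have hshift : partialEval x N K (PowerSeries.X * (PowerSeries.C (MvPowerSeries.X i) * h)) =
      ∑ j ∈ Finset.range K, x i * homogeneousEval x (N + j) (PowerSeries.coeff j h) := by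
    simp only [partialEval_apply, Finset.sum_range_succ', PowerSeries.coeff_succ_X_mul,
      PowerSeries.coeff_zero_X_mul, PowerSeries.coeff_C_mul, ← add_assoc, homogeneousEval_X_mul,
      map_zero, add_zero]
  rw [hexpand, map_sub, hshift, partialEval_C_mul, partialEval_apply, Finset.sum_range_succ,
    mul_add, Finset.mul_sum, sub_add_cancel_left]

theorem partialEval_mem_of_mem_relationIdeal {x : ι → S} (N K : ℕ) {g : ReesSeries ι S}
    (hg : g ∈ relationIdeal x) : partialEval x N K g ∈ Ideal.span (Set.range x) ^ (N + K + 1) := by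
  cases nonempty_fintype ι
  obtain ⟨c, rfl⟩ := Ideal.mem_span_range_iff_exists_fun.1 hg
  rw [map_sum]
  refine Ideal.sum_mem _ fun i _ => ?_
  rw [partialEval_mul_relation, neg_mem_iff, pow_succ']
  exact Ideal.mul_mem_mul (Ideal.subset_span ⟨i, rfl⟩) (homogeneousEval_mem_span_range_pow _ _ _)

end PartialEval

end ReesSeries

theorem exists_forall_mem_pow_of_mul_mem_pow_add {S : Type*} [CommRing S] [IsNoetherianRing S]
    (I : Ideal S) {a : S} (ha : a ∈ nonZeroDivisors S) :
    ∃ c, ∀ n s, a * s ∈ I ^ (n + c) → s ∈ I ^ n := by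
  obtain ⟨c, hc⟩ := Ideal.exists_pow_inf_eq_pow_smul I (Ideal.span {a} : Submodule S S)
  refine ⟨c, fun n s hs => ?_⟩
  have hmem : a * s ∈ (I ^ (n + c) • ⊤ ⊓ Ideal.span {a} : Submodule S S) :=
    ⟨by simpa using hs, Ideal.mul_mem_right _ _ (Ideal.mem_span_singleton_self _)⟩
  rw [hc _ (Nat.le_add_left c n), Nat.add_sub_cancel] at hmem
  obtain ⟨z, hz, hza⟩ := Ideal.mem_mul_span_singleton.1 (Ideal.mul_mono_right inf_le_right hmem)
  rw [mul_comm, mul_cancel_left_mem_nonZeroDivisors ha] at hza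
  exact hza ▸ hz

theorem exists_isPrime_le_le_notMem {A : Type*} [CommRing A] {J P : Ideal A} [P.IsPrime] {a : A}
    (h : ∀ (k : ℕ) (g : A), a ^ k * g ∈ J → g ∈ P) :
    ∃ q : Ideal A, q.IsPrime ∧ J ≤ q ∧ q ≤ P ∧ a ∉ q := by
  have hdisj : Disjoint (J : Set A) (Submonoid.powers a ⊔ P.primeCompl : Submonoid A) := by
    rw [Set.disjoint_left]
    intro y hyJ hy
    obtain ⟨_, ⟨k, rfl⟩, g, hg, rfl⟩ := Submonoid.mem_sup.1 hy
    exact hg (h k g hyJ)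
  obtain ⟨q, hq, hJq, hqdisj⟩ := Ideal.exists_le_prime_disjoint _ _ hdisj
  rw [Set.disjoint_left] at hqdisj
  refine ⟨q, hq, hJq, fun g hg => ?_, fun ha => ?_⟩
  · by_contra hgP
    exact hqdisj hg (Submonoid.mem_sup_right (S := Submonoid.powers _) hgP)
  · exact hqdisj ha (Submonoid.mem_sup_left (Submonoid.mem_powers a))

namespace ReesSeries

variable {ι S : Type*} [CommRing S] [IsLocalRing S]

-- `partialEval` sends `a * g` into a high power of `(x)`. Artin-Rees cancels `a`, and analytic
-- independence of `x` bounds the coefficients of the only surviving term, that of `Z ^ 0`.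
theorem coeff_constantCoeff_mem_maximalIdeal [Fintype ι] [IsNoetherianRing S]
    (hdim : Fintype.card ι ≤ ringKrullDim S) {x : ι → S}
    (hx : (Ideal.span (Set.range x)).radical = maximalIdeal S) {a : S}
    (ha : a ∈ nonZeroDivisors S) {g : ReesSeries ι S}
    (hg : PowerSeries.C (MvPowerSeries.C a) * g ∈ relationIdeal x) (α : ι →₀ ℕ) :
    MvPowerSeries.coeff α (PowerSeries.constantCoeff g) ∈ maximalIdeal S := by
  set I := Ideal.span (Set.range x)
  set N := α.degree
  have hIm : I ≤ maximalIdeal S := hx ▸ Ideal.le_radical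
  obtain ⟨c, hc⟩ := exists_forall_mem_pow_of_mul_mem_pow_add I ha
  have hpartial : partialEval x N c g ∈ I ^ (N + 1) := by
    refine hc _ _ ?_
    rw [← partialEval_C_mul, add_right_comm]
    exact partialEval_mem_of_mem_relationIdeal N c hg
  have hconst : homogeneousEval x N (PowerSeries.constantCoeff g) ∈ I ^ (N + 1) := by
    rw [partialEval_apply, Finset.sum_range_succ', add_zero,
      PowerSeries.coeff_zero_eq_constantCoeff_apply] at hpartial
    refine (Ideal.add_mem_iff_right _ (Ideal.sum_mem _ fun j _ => ?_)).1 hpartial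
    exact Ideal.pow_le_pow_right (by omega) (homogeneousEval_mem_span_range_pow x (N + (j + 1)) _)
  rw [pow_succ'] at hconst
  have hcoeff := coeff_mem_maximalIdeal_of_eval_mem hdim hx (isHomogeneous_homogeneousPart N _)
    (Ideal.mul_mono_left hIm hconst) α
  rwa [coeff_homogeneousPart, if_pos rfl] at hcoeff

variable (ι S) in
/-- The reduction of `ReesSeries ι S` modulo `Z` and the maximal ideal of `S`. -/
noncomputable def reduction : ReesSeries ι S →+* MvPowerSeries ι (ResidueField S) :=
  (MvPowerSeries.map (residue S)).comp PowerSeries.constantCoeff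

theorem reduction_surjective : Function.Surjective (reduction ι S) := by
  intro f
  choose c hc using fun α => residue_surjective (R := S) (MvPowerSeries.coeff α f)
  let g : MvPowerSeries ι S := c
  refine ⟨PowerSeries.C g, MvPowerSeries.ext fun α => ?_⟩
  rw [reduction, RingHom.comp_apply, PowerSeries.constantCoeff_C, MvPowerSeries.coeff_map]
  exact hc α

theorem reduction_X : reduction ι S PowerSeries.X = 0 := by
  simp [reduction]

theorem reduction_C_X (i : ι) :
    reduction ι S (PowerSeries.C (MvPowerSeries.X i)) = MvPowerSeries.X i := by
  simp [reduction]

theorem exists_isPrime_relationIdeal_le_le_ker_reduction [Fintype ι] [IsNoetherianRing S]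
    (hdim : Fintype.card ι ≤ ringKrullDim S) {x : ι → S}
    (hx : (Ideal.span (Set.range x)).radical = maximalIdeal S) {a : S}
    (ha : a ∈ nonZeroDivisors S) :
    ∃ q : Ideal (ReesSeries ι S), q.IsPrime ∧ relationIdeal x ≤ q ∧
      q ≤ RingHom.ker (reduction ι S) ∧ PowerSeries.C (MvPowerSeries.C a) ∉ q := by
  have := NoZeroDivisors.to_isDomain (MvPowerSeries ι (ResidueField S))
  have := RingHom.ker_isPrime (reduction ι S)
  refine exists_isPrime_le_le_notMem fun k g hg => MvPowerSeries.ext fun α => ?_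
  rw [← map_pow, ← map_pow] at hg
  rw [reduction, RingHom.comp_apply, MvPowerSeries.coeff_map, map_zero, residue_eq_zero_iff]
  exact coeff_constantCoeff_mem_maximalIdeal hdim hx (pow_mem ha k) hg α

theorem maximalIdeal_le_radical_span_sup_relationIdeal [Finite ι] {x : ι → S}
    (hx : (Ideal.span (Set.range x)).radical = maximalIdeal S) :
    maximalIdeal (ReesSeries ι S) ≤
      (Ideal.span (insert PowerSeries.X (Set.range fun i => PowerSeries.C (MvPowerSeries.X i))) ⊔
        relationIdeal x).radical := by
  set I : Ideal (ReesSeries ι S) :=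
    Ideal.span (insert PowerSeries.X (Set.range fun i => PowerSeries.C (MvPowerSeries.X i)))
  have hZ : PowerSeries.X ∈ I := Ideal.subset_span (Set.mem_insert _ _)
  have hW : (Ideal.span (Set.range MvPowerSeries.X)).map PowerSeries.C ≤ I := by
    rw [Ideal.map_span, ← Set.range_comp]
    exact Ideal.span_mono (Set.subset_insert _ _)
  have hS : (maximalIdeal S).map (PowerSeries.C.comp MvPowerSeries.C) ≤
      (I ⊔ relationIdeal x).radical := by
    rw [← hx]
    refine (Ideal.map_radical_le _).trans (Ideal.radical_mono ?_)
    rw [Ideal.map_span, Ideal.span_le]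
    rintro _ ⟨_, ⟨i, rfl⟩, rfl⟩
    have hrel := Ideal.mem_sup_right (S := I)
      (Ideal.subset_span (Set.mem_range_self i) : _ ∈ relationIdeal x)
    have hZW : PowerSeries.X * PowerSeries.C (MvPowerSeries.X i) ∈ I ⊔ relationIdeal x :=
      Ideal.mem_sup_left (I.mul_mem_right _ hZ)
    simpa only [RingHom.comp_apply, SetLike.mem_coe, sub_sub_cancel] using Ideal.sub_mem _ hZW hrel
  intro f hf
  set f₀ := PowerSeries.constantCoeff f
  have hf₀ : MvPowerSeries.constantCoeff f₀ ∈ maximalIdeal S := by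
    rwa [mem_maximalIdeal, mem_nonunits_iff, PowerSeries.isUnit_iff_constantCoeff,
      MvPowerSeries.isUnit_iff_constantCoeff, ← mem_nonunits_iff, ← mem_maximalIdeal] at hf
  have hsplit : f = (f - PowerSeries.C f₀) +
      PowerSeries.C (f₀ - MvPowerSeries.C (MvPowerSeries.constantCoeff f₀)) +
      PowerSeries.C (MvPowerSeries.C (MvPowerSeries.constantCoeff f₀)) := by
    rw [map_sub]; ring
  rw [hsplit]
  refine Ideal.add_mem _ (Ideal.le_radical (Ideal.mem_sup_left (Ideal.add_mem _ ?_ ?_)))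
    (hS (Ideal.mem_map_of_mem (PowerSeries.C.comp MvPowerSeries.C) hf₀))
  · exact Ideal.mem_of_dvd _ (PowerSeries.X_dvd_iff.2 (by simp [f₀])) hZ
  · exact hW (Ideal.mem_map_of_mem _ (mem_span_range_X_of_constantCoeff_eq_zero (by simp)))

end ReesSeries

section TightClosure

theorem MemTightClosure.map {T : Type u} {T' : Type*} [CommRing T] [CommRing T'] [IsDomain T']
    {f : T →+* T'} (hf : RingHom.ker f ∈ minimalPrimes T) {p : ℕ} {J : Ideal T} {u : T}
    (hu : MemTightClosure T p J u) : MemTightClosure T' p (J.map f) (f u) := by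
  obtain ⟨c, hc, hcu⟩ := hu
  refine ⟨f c, ?_, fun e => ?_⟩
  · rw [IsDomain.minimalPrimes_eq_singleton_bot]
    rintro P rfl
    exact hc _ hf
  · have hmem := Ideal.mem_map_of_mem f (hcu e)
    rw [map_mul, map_pow, Ideal.map_span] at hmem
    refine Ideal.span_mono ?_ hmem
    rintro _ ⟨_, ⟨a, ha, rfl⟩, rfl⟩
    exact ⟨f a, Ideal.mem_map_of_mem f ha, (map_pow f a _).symm⟩

theorem pow_char_pow_mem_span_range_pow {A ι : Type*} [CommRing A] [Finite ι] (p : ℕ)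
    [ExpChar A p] {b : ι → A} {a : A} (ha : a ∈ Ideal.span (Set.range b)) (e : ℕ) :
    a ^ p ^ e ∈ Ideal.span (Set.range fun i => b i ^ p ^ e) := by
  cases nonempty_fintype ι
  obtain ⟨c, rfl⟩ := Ideal.mem_span_range_iff_exists_fun.1 ha
  rw [sum_pow_char_pow]
  refine Ideal.sum_mem _ fun i _ => ?_
  rw [mul_pow]
  exact Ideal.mul_mem_left _ _ (Ideal.subset_span ⟨i, rfl⟩)

theorem coeff_add_sum_single_mul_prod_X_pow {σ k : Type*} [CommRing k] (m : ℕ)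
    (c : MvPowerSeries σ k) (γ : σ →₀ ℕ) (s : Finset σ) :
    MvPowerSeries.coeff (γ + ∑ i ∈ s, Finsupp.single i m) (c * ∏ i ∈ s, MvPowerSeries.X i ^ m) =
      MvPowerSeries.coeff γ c := by
  classical
  induction s using Finset.induction_on with
  | empty => simp
  | insert i s hi ih =>
    rw [Finset.sum_insert hi, Finset.prod_insert hi, MvPowerSeries.X_pow_eq, mul_left_comm,
      add_left_comm, MvPowerSeries.coeff_add_monomial_mul, one_mul, ih]

theorem coeff_eq_zero_of_mem_span_X_pow {σ k : Type*} [CommRing k] [Finite σ] {m : ℕ}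
    {f : MvPowerSeries σ k}
    (hf : f ∈ Ideal.span (Set.range fun i => (MvPowerSeries.X i : MvPowerSeries σ k) ^ m))
    {γ : σ →₀ ℕ} (hγ : ∀ i, γ i < m) : MvPowerSeries.coeff γ f = 0 := by
  classical
  cases nonempty_fintype σ
  obtain ⟨b, rfl⟩ := Ideal.mem_span_range_iff_exists_fun.1 hf
  rw [map_sum]
  refine Finset.sum_eq_zero fun i _ => ?_
  rw [MvPowerSeries.X_pow_eq, MvPowerSeries.coeff_mul_monomial, if_neg]
  rw [Finsupp.single_le_iff, not_le]
  exact hγ i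

-- Multiplication by `(∏ X i) ^ ((t - 1) * q)` moves each coefficient of `c` of exponent `< q`
-- into the range of exponents `< t * q`, where elements of the ideal have no support.
theorem eq_zero_of_forall_mul_prod_X_pow_mem {σ k : Type*} [CommRing k] [Fintype σ] {p t : ℕ}
    (hp : 1 < p) (ht : 1 ≤ t) {c : MvPowerSeries σ k}
    (hc : ∀ e : ℕ, c * ((∏ i, MvPowerSeries.X i) ^ (t - 1)) ^ p ^ e ∈
      Ideal.span (Set.range fun i => (MvPowerSeries.X i : MvPowerSeries σ k) ^ (t * p ^ e))) :
    c = 0 := by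
  classical
  ext γ
  obtain ⟨e, he⟩ : ∃ e, ∀ i, γ i < p ^ e :=
    ⟨γ.degree, fun i => (Finsupp.le_degree i γ).trans_lt (Nat.lt_pow_self hp)⟩
  have hmem := hc e
  rw [← pow_mul, ← Finset.prod_pow] at hmem
  rw [map_zero, ← coeff_add_sum_single_mul_prod_X_pow ((t - 1) * p ^ e) c γ Finset.univ]
  refine coeff_eq_zero_of_mem_span_X_pow hmem fun i => ?_
  have hexp : (γ + ∑ j, Finsupp.single j ((t - 1) * p ^ e) : σ →₀ ℕ) i = γ i + (t - 1) * p ^ e := by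
    simp [Finsupp.single_apply]
  rw [hexp, ← Nat.sub_add_cancel ht, Nat.add_sub_cancel, Nat.succ_mul, add_comm]
  exact Nat.add_lt_add_left (he i) _

theorem prod_X_pow_not_memTightClosure_span_X_pow {ι k : Type*} [Fintype ι] [Field k]
    (p : ℕ) [CharP k p] (hp : p.Prime) {t : ℕ} (ht : 1 ≤ t) :
    ¬ MemTightClosure (MvPowerSeries ι k) p
      (Ideal.span (Set.range fun i => MvPowerSeries.X i ^ t))
      ((∏ i, MvPowerSeries.X i) ^ (t - 1)) := by
  rintro ⟨c, hc, hmem⟩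
  have := NoZeroDivisors.to_isDomain (MvPowerSeries ι k)
  have := charP_of_injective_ringHom (f := MvPowerSeries.C (σ := ι) (R := k))
    MvPowerSeries.C_injective p
  have := ExpChar.prime (R := MvPowerSeries ι k) hp
  rw [IsDomain.minimalPrimes_eq_singleton_bot] at hc
  refine hc ⊥ rfl (Ideal.mem_bot.2 (eq_zero_of_forall_mul_prod_X_pow_mem hp.one_lt ht fun e => ?_))
  refine Ideal.span_le.2 ?_ (hmem e)
  rintro _ ⟨a, ha, rfl⟩
  simpa only [pow_mul, SetLike.mem_coe] using pow_char_pow_mem_span_range_pow p ha e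

end TightClosure

theorem exists_pow_mul_mem_span_add_pow {B ι : Type*} [CommRing B] [Finite ι] {Z b : B}
    {v : ι → B} {K : ℕ} (hb : Z ^ K * b ∈ Ideal.span (Set.range v)) {E : ι → ℕ}
    (hE : ∀ i, K < E i) :
    ∃ u, Z ^ K * u ∈ Ideal.span (Set.range fun i => v i + Z ^ E i) ∧ u - b ∈ Ideal.span {Z} := by
  cases nonempty_fintype ι
  obtain ⟨r, hr⟩ := Ideal.mem_span_range_iff_exists_fun.1 hb
  refine ⟨b + ∑ i, r i * Z ^ (E i - K), ?_, ?_⟩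
  · refine Ideal.mem_span_range_iff_exists_fun.2 ⟨r, ?_⟩
    rw [mul_add, ← hr, Finset.mul_sum, ← Finset.sum_add_distrib]
    refine Finset.sum_congr rfl fun i _ => ?_
    rw [mul_left_comm, ← pow_add, Nat.add_sub_cancel' (hE i).le, mul_add]
  · rw [add_sub_cancel_left]
    refine Ideal.sum_mem _ fun i _ => Ideal.mul_mem_left _ _ ?_
    exact Ideal.pow_mem_of_mem _ (Ideal.mem_span_singleton_self Z) _ (Nat.sub_pos_of_lt (hE i))

section ColonCapturing

/-- The colon-capturing property of a local ring `B` relative to an integer `p`: for each system of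
parameters `p, x₂, …, x_d` of `B` and each `n ≥ 1`, the ideal `(x₂, …, x_d) : pⁿ` maps into the
tight closure of `(x₂, …, x_d)` in `B ⧸ (p)`. A system of parameters is encoded as `d = dim B`
elements whose span has radical `maximalIdeal B`, indexed from `0`. -/
def ColonCapturing (p : ℕ) (B : Type u) [CommRing B] [IsLocalRing B] : Prop :=
  ∀ (d : ℕ) (hd0 : 0 < d), ringKrullDim B = d →
    ∀ x : Fin d → B,
      (Ideal.span (Set.range x)).radical = maximalIdeal B →
      x ⟨0, hd0⟩ = (p : B) →
      ∀ n : ℕ, 0 < n → ∀ u : B,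
        (p : B) ^ n * u ∈ Ideal.span (x '' {i | i ≠ ⟨0, hd0⟩}) →
        MemTightClosure (B ⧸ Ideal.span {(p : B)}) p
          ((Ideal.span (x '' {i | i ≠ ⟨0, hd0⟩})).map (Ideal.Quotient.mk (Ideal.span {(p : B)})))
          (Ideal.Quotient.mk (Ideal.span {(p : B)}) u)

theorem cons_image_ne_zero {α : Type*} {n : ℕ} (a : α) (y : Fin n → α) :
    (Fin.cons a y : Fin (n + 1) → α) '' {i | i ≠ 0} = Set.range y := by
  rw [← Set.compl_singleton_eq, ← Fin.range_succ, ← Set.range_comp, Fin.cons_comp_succ]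

theorem radical_span_insert_range_pow {B ι : Type*} [CommRing B] (Z : B) (w : ι → B) {t : ℕ}
    (ht : t ≠ 0) :
    (Ideal.span (insert Z (Set.range fun i => w i ^ t))).radical =
      (Ideal.span (insert Z (Set.range w))).radical := by
  refine le_antisymm (Ideal.radical_mono ?_) (Ideal.radical_le_radical_iff.2 ?_) <;>
    rw [Ideal.span_le, Set.insert_subset_iff, Set.range_subset_iff]
  · exact ⟨Ideal.subset_span (Set.mem_insert _ _), fun i => Ideal.pow_mem_of_mem _
      (Ideal.subset_span (Set.mem_insert_of_mem _ (Set.mem_range_self i))) t ht.pos⟩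
  · exact ⟨Ideal.le_radical (Ideal.subset_span (Set.mem_insert _ _)), fun i =>
      ⟨t, Ideal.subset_span (Set.mem_insert_of_mem _ (Set.mem_range_self i))⟩⟩

variable {p : ℕ} {B : Type u} [CommRing B] [IsNoetherianRing B] [IsLocalRing B]

theorem ColonCapturing.memTightClosure_map (hB : ColonCapturing p B)
    (hp : (p : B) ∈ nonZeroDivisors B) {C : Type*} [CommRing C] [IsDomain C] {f : B →+* C}
    (hf : Function.Surjective f) (hfp : f p = 0) {n : ℕ} (hC : n ≤ ringKrullDim C) {y : Fin n → B}
    (hy : (Ideal.span (insert (p : B) (Set.range y))).radical = maximalIdeal B) {m : ℕ} {u : B}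
    (hu : (p : B) ^ m * u ∈ Ideal.span (Set.range y)) :
    MemTightClosure C p ((Ideal.span (Set.range y)).map f) (f u) := by
  have hdim : ringKrullDim B = (n + 1 : ℕ) := by
    rw [Nat.cast_succ]
    refine le_antisymm ?_ ((add_le_add_left hC 1).trans
      (ringKrullDim_succ_le_of_surjective f hf hp hfp))
    simpa only [Fintype.card_fin] using ringKrullDim_le_card_add_one_of_radical_span_insert_eq hy
  have hquot : ringKrullDim (B ⧸ Ideal.span {(p : B)}) ≤ n := by
    simpa only [Fintype.card_fin] using
      ringKrullDim_quotient_le_card_of_mem_nonZeroDivisors hy hp (Ideal.mem_span_singleton_self _)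
  have htc := hB (n + 1) n.succ_pos hdim (Fin.cons (p : B) y) (by rwa [Fin.range_cons]) rfl
    (m + 1) m.succ_pos u
  rw [Fin.zero_eta, cons_image_ne_zero, pow_succ', mul_assoc] at htc
  have hker : ∀ b ∈ Ideal.span {(p : B)}, f b = 0 :=
    (Ideal.span_singleton_le_iff_mem (RingHom.ker f)).2 hfp
  let g : B ⧸ Ideal.span {(p : B)} →+* C := Ideal.Quotient.lift _ f hker
  have hg : Function.Surjective g := Ideal.Quotient.lift_surjective_of_surjective _ hker hf
  have hmap := (htc (Ideal.mul_mem_left _ _ hu)).map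
    (ker_mem_minimalPrimes_of_ringKrullDim_le hquot hC hg)
  rwa [Ideal.map_map, Ideal.Quotient.lift_comp_mk, Ideal.Quotient.lift_mk] at hmap

/-- A monomial relation multiplied by `Z ^ K` lifts to a colon relation for the deformed parameters
`w i ^ t + Z ^ E i`, so colon capturing would put `(∏ X i) ^ (t - 1)` into the tight closure of
`(X i ^ t)` in `k⟦X⟧`. -/
theorem ColonCapturing.pow_mul_prod_pow_notMem (hB : ColonCapturing p B) (hp : p.Prime)
    (hpB : (p : B) ∈ nonZeroDivisors B) {n : ℕ} {k : Type*} [Field k] [CharP k p]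
    {f : B →+* MvPowerSeries (Fin n) k} (hf : Function.Surjective f) {Z : B} {w : Fin n → B}
    (hrad : (Ideal.span (insert Z (Set.range w))).radical = maximalIdeal B) (hfZ : f Z = 0)
    (hfw : ∀ i, f (w i) = MvPowerSeries.X i) {N : ℕ} (hZp : Z ∣ (p : B) ^ N) {t : ℕ} (ht : 1 ≤ t)
    (K : ℕ) :
    Z ^ K * (∏ i, w i) ^ (t - 1) ∉ Ideal.span (Set.range fun i => w i ^ t) := by
  intro hmem
  have := NoZeroDivisors.to_isDomain (MvPowerSeries (Fin n) k)
  have hfp : f p = 0 := by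
    have hdvd := map_dvd f hZp
    rw [hfZ, zero_dvd_iff, map_pow] at hdvd
    exact eq_zero_of_pow_eq_zero hdvd
  have hpm : (p : B) ∈ maximalIdeal B := fun hunit => not_isUnit_zero (hfp ▸ hunit.map f)
  obtain ⟨E, hKE, hy⟩ := exists_exponents_radical_span_add_pow_eq
    ((radical_span_insert_range_pow Z w (Nat.one_le_iff_ne_zero.1 ht)).trans hrad) hpB hpm K
  obtain ⟨u, hu, huw⟩ := exists_pow_mul_mem_span_add_pow hmem hKE
  have hpu : (p : B) ^ (N * K) * u ∈ Ideal.span (Set.range fun i => w i ^ t + Z ^ E i) := by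
    rw [pow_mul]
    exact Ideal.mem_of_dvd _ (mul_dvd_mul_right (pow_dvd_pow_of_dvd hZp K) u) hu
  have hfu : f u = (∏ i, MvPowerSeries.X i) ^ (t - 1) := by
    obtain ⟨b, hb⟩ := Ideal.mem_span_singleton'.1 huw
    have := congrArg f hb
    rw [map_mul, hfZ, mul_zero, map_sub, eq_comm, sub_eq_zero] at this
    rw [this, map_pow, map_prod, Finset.prod_congr rfl fun i _ => hfw i]
  have hfy : (Ideal.span (Set.range fun i => w i ^ t + Z ^ E i)).map f =
      Ideal.span (Set.range fun i => MvPowerSeries.X i ^ t) := by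
    rw [Ideal.map_span, ← Set.range_comp]
    congr 2 with i
    simp [hfw, hfZ, (Nat.zero_le K).trans_lt (hKE i) |>.ne']
  have htc := hB.memTightClosure_map hpB hf hfp (natCast_le_ringKrullDim_mvPowerSeries n k) hy hpu
  rw [hfu, hfy] at htc
  exact prod_X_pow_not_memTightClosure_span_X_pow p hp ht htc

end ColonCapturing

section MixedCharacteristic

theorem charZero_of_charP_residueField {B : Type*} [CommRing B] [IsLocalRing B] [IsDomain B] (p : ℕ)
    [CharP (ResidueField B) p] (hp : (p : B) ≠ 0) : CharZero B := by
  obtain ⟨c, hc⟩ := CharP.exists B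
  have hpc : p ∣ c := by
    rw [← CharP.cast_eq_zero_iff (ResidueField B) p, ← map_natCast (residue B),
      CharP.cast_eq_zero, map_zero]
  rcases CharP.char_is_prime_or_zero B c with hcp | rfl
  · rcases (Nat.dvd_prime hcp).1 hpc with rfl | rfl
    · exact absurd rfl (CharP.char_ne_one (ResidueField B) 1)
    · exact absurd (CharP.cast_eq_zero B p) hp
  · exact CharP.charP_to_charZero B

theorem charP_residueField_of_ringHom {B C : Type*} [CommRing B] [IsLocalRing B] [CommRing C]
    [Nontrivial C] (g : B →+* C) {p : ℕ} (hp : p.Prime) [CharP C p] :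
    CharP (ResidueField B) p := by
  have hgp : g p = 0 := by rw [map_natCast, CharP.cast_eq_zero]
  rw [CharP.charP_iff_prime_eq_zero hp, ← map_natCast (residue B), residue_eq_zero_iff]
  exact fun hunit => not_isUnit_zero (hgp ▸ hunit.map g)

end MixedCharacteristic

theorem isAdicComplete_maximalIdeal_of_surjective {A B : Type*} [CommRing A] [IsLocalRing A]
    [IsPrecomplete (maximalIdeal A) A] [CommRing B] [IsLocalRing B] [IsNoetherianRing B]
    {f : A →+* B} (hf : Function.Surjective f) : IsAdicComplete (maximalIdeal B) B where
  __ := map_maximalIdeal_of_surjective f hf ▸ isPrecomplete_map_of_surjective hf (maximalIdeal A)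

theorem ReesSeries.radical_span_eq_of_relationIdeal_le_ker {ι S B : Type*} [Finite ι] [CommRing S]
    [IsLocalRing S] [CommRing B] [IsLocalRing B] {x : ι → S}
    (hx : (Ideal.span (Set.range x)).radical = maximalIdeal S) {f : ReesSeries ι S →+* B}
    (hf : Function.Surjective f) (hrel : relationIdeal x ≤ RingHom.ker f) :
    (Ideal.span (insert (f PowerSeries.X)
      (Set.range fun i => f (PowerSeries.C (MvPowerSeries.X i))))).radical = maximalIdeal B := by
  have hspan : Ideal.span (insert (f PowerSeries.X)
      (Set.range fun i => f (PowerSeries.C (MvPowerSeries.X i)))) =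
      (Ideal.span (insert PowerSeries.X
        (Set.range fun i => PowerSeries.C (MvPowerSeries.X i))) ⊔ relationIdeal x).map f := by
    rw [Ideal.map_sup, (Ideal.map_eq_bot_iff_le_ker f).2 hrel, sup_bot_eq, Ideal.map_span,
      Set.image_insert_eq, ← Set.range_comp, Function.comp_def]
  rw [← map_maximalIdeal_of_surjective f hf]
  refine le_antisymm ?_ ?_
  · rw [map_maximalIdeal_of_surjective f hf, (maximalIdeal.isMaximal B).isPrime.radical_le_iff,
      ← map_maximalIdeal_of_surjective f hf, Ideal.span_le, Set.insert_subset_iff,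
      Set.range_subset_iff]
    refine ⟨Ideal.mem_map_of_mem f ?_, fun i => Ideal.mem_map_of_mem f ?_⟩ <;>
      rw [mem_maximalIdeal, mem_nonunits_iff, PowerSeries.isUnit_iff_constantCoeff,
        MvPowerSeries.isUnit_iff_constantCoeff] <;>
      simp
  · rw [hspan]
    exact (Ideal.map_mono (maximalIdeal_le_radical_span_sup_relationIdeal hx)).trans
      (Ideal.map_radical_le f)

section MonomialRelation

variable {R B ι : Type*} [CommRing R] [CommRing B] {f : R →+* B} {x : ι → R} {Z : B} {w : ι → B}

theorem exists_dvd_map_pow_of_mem_radical (hfx : ∀ i, f (x i) = Z * w i) {a : R}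
    (ha : a ∈ (Ideal.span (Set.range x)).radical) : ∃ N, Z ∣ f a ^ N := by
  obtain ⟨N, hN⟩ := ha
  have hle : (Ideal.span (Set.range x)).map f ≤ Ideal.span {Z} := by
    rw [Ideal.map_le_iff_le_comap, Ideal.span_le, Set.range_subset_iff]
    exact fun i => Ideal.mem_span_singleton.2 ⟨w i, hfx i⟩
  exact ⟨N, map_pow f a N ▸ Ideal.mem_span_singleton.1 (hle (Ideal.mem_map_of_mem f hN))⟩

theorem pow_mul_prod_pow_mem_of_prod_pow_mem [Fintype ι] (hfx : ∀ i, f (x i) = Z * w i) {s t : ℕ}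
    (hmem : (∏ i, x i) ^ s ∈ Ideal.span (Set.range fun i => x i ^ t)) :
    Z ^ (Fintype.card ι * s) * (∏ i, w i) ^ s ∈ Ideal.span (Set.range fun i => w i ^ t) := by
  have hprod : f ((∏ i, x i) ^ s) = Z ^ (Fintype.card ι * s) * (∏ i, w i) ^ s := by
    rw [map_pow, map_prod, Finset.prod_congr rfl fun i _ => hfx i, Finset.prod_mul_distrib,
      Finset.prod_const, Finset.card_univ, mul_pow, ← pow_mul]
  have hle : (Ideal.span (Set.range fun i => x i ^ t)).map f ≤
      Ideal.span (Set.range fun i => w i ^ t) := by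
    rw [Ideal.map_le_iff_le_comap, Ideal.span_le, Set.range_subset_iff]
    intro i
    rw [SetLike.mem_coe, Ideal.mem_comap, map_pow, hfx, mul_pow]
    exact Ideal.mul_mem_left _ _ (Ideal.subset_span ⟨i, rfl⟩)
  exact hprod ▸ hle (Ideal.mem_map_of_mem f hmem)

end MonomialRelation

theorem ColonCapturing.prod_pow_notMem {p : ℕ} {B : Type u} {R : Type*} [CommRing B]
    [IsNoetherianRing B] [IsLocalRing B] (hB : ColonCapturing p B) (hp : p.Prime)
    (hpB : (p : B) ∈ nonZeroDivisors B) [CommRing R] [IsLocalRing R] [CharP (ResidueField R) p]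
    {d : ℕ} {x : Fin d → R}
    (hx : (Ideal.span (Set.range x)).radical = maximalIdeal R) {f : ReesSeries (Fin d) R →+* B}
    (hf : Function.Surjective f) (hrel : ReesSeries.relationIdeal x ≤ RingHom.ker f)
    {g : B →+* MvPowerSeries (Fin d) (ResidueField R)} (hgf : g.comp f = ReesSeries.reduction _ R)
    {t : ℕ} (ht : 1 ≤ t) :
    (∏ i, x i) ^ (t - 1) ∉ Ideal.span (Set.range fun i => x i ^ t) := by
  intro hmem
  have hg : Function.Surjective g :=
    .of_comp (g := f) (by rw [← RingHom.coe_comp, hgf]; exact ReesSeries.reduction_surjective)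
  have hfx : ∀ i, f.comp (PowerSeries.C.comp MvPowerSeries.C) (x i) =
      f PowerSeries.X * f (PowerSeries.C (MvPowerSeries.X i)) := fun i => by
    have hxi := hrel (Ideal.subset_span (Set.mem_range_self i))
    rwa [RingHom.mem_ker, map_sub, sub_eq_zero, map_mul, eq_comm] at hxi
  have hpm : (p : R) ∈ maximalIdeal R := by
    rw [← residue_eq_zero_iff, map_natCast, CharP.cast_eq_zero]
  obtain ⟨N, hN⟩ := exists_dvd_map_pow_of_mem_radical hfx (hx ▸ hpm)
  rw [map_natCast] at hN
  refine hB.pow_mul_prod_pow_notMem hp hpB hg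
    (ReesSeries.radical_span_eq_of_relationIdeal_le_ker hx hf hrel) ?_ (fun i => ?_) hN ht _
    (pow_mul_prod_pow_mem_of_prod_pow_mem hfx hmem)
  · rw [← RingHom.comp_apply, hgf, ReesSeries.reduction_X]
  · rw [← RingHom.comp_apply, hgf, ReesSeries.reduction_C_X]

theorem monomialConjecture_of_colon_capturing_general {p : ℕ}
    (H : ∀ (R : Type u) [CommRing R] [IsNoetherianRing R] [IsLocalRing R] [IsDomain R]
      [IsAdicComplete (maximalIdeal R) R],
      CharZero R → CharP (ResidueField R) p → ColonCapturing p R)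
    (R : Type u) [CommRing R] [IsNoetherianRing R] [IsLocalRing R]
    [IsAdicComplete (maximalIdeal R) R] [CharP (ResidueField R) p]
    (hpR : (p : R) ∈ nonZeroDivisors R) {d : ℕ} (hdim : ringKrullDim R = d) {x : Fin d → R}
    (hx : (Ideal.span (Set.range x)).radical = maximalIdeal R) {t : ℕ} (ht : 1 ≤ t) :
    (∏ i, x i) ^ (t - 1) ∉ Ideal.span (Set.range fun i => x i ^ t) := by
  have hp : p.Prime := (CharP.char_is_prime_or_zero (ResidueField R) p).resolve_right fun h =>
    nonZeroDivisors.ne_zero hpR (by rw [h, Nat.cast_zero])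
  obtain ⟨q, hq, hrel, hqker, hpq⟩ :=
    ReesSeries.exists_isPrime_relationIdeal_le_le_ker_reduction
      ((Fintype.card_fin d).symm ▸ hdim.ge) hx hpR
  have hφ := Ideal.Quotient.mk_surjective (I := q)
  have := IsLocalRing.of_surjective' _ hφ
  have := isAdicComplete_maximalIdeal_of_surjective hφ
  let g := Ideal.Quotient.lift q (ReesSeries.reduction (Fin d) R) hqker
  have hpB : (p : ReesSeries (Fin d) R ⧸ q) ≠ 0 := fun h => hpq <| by
    rw [← Ideal.Quotient.eq_zero_iff_mem, map_natCast, map_natCast, map_natCast, h]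
  have hres : CharP (ResidueField (ReesSeries (Fin d) R ⧸ q)) p :=
    charP_residueField_of_ringHom (MvPowerSeries.constantCoeff.comp g) hp
  exact (H _ (charZero_of_charP_residueField p hpB) hres).prod_pow_notMem hp
    (mem_nonZeroDivisors_of_ne_zero hpB) hx hφ (hrel.trans_eq Ideal.mk_ker.symm)
    (Ideal.Quotient.lift_comp_mk q _ hqker) ht

/-- If, for every complete local Noetherian domain `R` of mixed
characteristic `p` with a system of parameters of the form `p, x₂, …, x_d`, and every
`n ≥ 1`, the image in `R̄ = R/pR` of `(x₂,…,x_d) :_R pⁿ` lies in the tight closure of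
`(x₂,…,x_d)R̄`, then the Monomial Conjecture holds: for every complete local Noetherian
domain `R` of mixed characteristic, every system of parameters `x₁,…,x_d` and every
`t ≥ 1`, `(x₁⋯x_d)^{t−1} ∉ (x₁^t,…,x_d^t)R`. -/
theorem monomialConjecture_of_colon_capturing
    (H : ∀ (p : ℕ), p.Prime →
      ∀ (R : Type u) [CommRing R] [IsNoetherianRing R] [IsLocalRing R] [IsDomain R]
        [IsAdicComplete (IsLocalRing.maximalIdeal R) R],
        CharZero R → CharP (IsLocalRing.ResidueField R) p →
        ∀ (d : ℕ) (hd0 : 0 < d), ringKrullDim R = d →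
        ∀ x : Fin d → R,
          (Ideal.span (Set.range x)).radical = IsLocalRing.maximalIdeal R →
          x ⟨0, hd0⟩ = (p : R) →
          ∀ n : ℕ, 0 < n → ∀ u : R,
            (p : R) ^ n * u ∈ Ideal.span (x '' {i | i ≠ ⟨0, hd0⟩}) →
            MemTightClosure (R ⧸ Ideal.span {(p : R)}) p
              ((Ideal.span (x '' {i | i ≠ ⟨0, hd0⟩})).map
                (Ideal.Quotient.mk (Ideal.span {(p : R)})))
              (Ideal.Quotient.mk (Ideal.span {(p : R)}) u)) :
    ∀ (p : ℕ), p.Prime →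
      ∀ (R : Type u) [CommRing R] [IsNoetherianRing R] [IsLocalRing R] [IsDomain R]
        [IsAdicComplete (IsLocalRing.maximalIdeal R) R],
        CharZero R → CharP (IsLocalRing.ResidueField R) p →
        ∀ (d : ℕ), ringKrullDim R = d →
        ∀ x : Fin d → R,
          (Ideal.span (Set.range x)).radical = IsLocalRing.maximalIdeal R →
          ∀ t : ℕ, 1 ≤ t →
            (∏ i, x i) ^ (t - 1) ∉ Ideal.span (Set.range fun i => x i ^ t) := by
  intro p hp R _ _ _ _ _ _ _ d hdim x hx t ht
  exact monomialConjecture_of_colon_capturing_general (H p hp) R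
    (mem_nonZeroDivisors_of_ne_zero (Nat.cast_ne_zero.2 hp.ne_zero)) hdim hx ht
end
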